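/- arXiv:2006.15200 — 2 statements merged into one kernel-verified Lean document; each statement's English description precedes it below -/
import Mathlib

section
/- Let a and b be nonzero integers that are multiplicatively independent. Then, as x → ∞, the number of primes p ≤ x for which max{ℓ_a(p), ℓ_b(p), ℓ_{ab}(p), ℓ_{a²b}(p), ℓ_{ab²}(p)} ≤ p^{8/15}/exp(2√(log p)) is o(x/log x). (Primes dividing ab may be placed in the exceptional set.) -/
open Filter Asymptotics

/-!
Suppose that modulo `p` every `a ^ m * b ^ n`, with `(m, n)` in a family of `k ≥ 2` pairwise
non-proportional exponent vectors, has order at most `z`, and let `D` be the least common multiple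
of the orders of `a` and `b`. Two members of the family whose exponent vectors have determinant `Δ`
generate `a ^ Δ` and `b ^ Δ`, so `D` divides `E` times the lcm of their orders for a constant `E`.
Hence the cofactors in `D` of the numbers `gcd(D, E * order)` are pairwise coprime and their product
divides `D`; this gives `D ^ k ∣ D * ∏ (E * order)`, so `D ≤ (E * z) ^ (k / (k - 1))`.

Both `a` and `b` are `D`-th roots of unity modulo `p`, so by the pigeonhole principle
`a ^ m * b ^ n = 1` modulo `p` for some `(m, n) ≠ 0` with `|m|, |n| ≤ √D`. Therefore `p` divides one
of `O(D)` nonzero integers, each with `O(√D)` prime factors, and there are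
`O(z ^ (3 * k / (2 * (k - 1))))` such primes. For
`z = x ^ (2 * (k - 1) / (3 * k)) / exp (ε √(log x))` this is `O(x / exp (c √(log x)))` with `c > 0`.
The theorem is the case `k = 5`.
-/

theorem two_pow_card_primeFactors_le {n : ℕ} (hn : n ≠ 0) : 2 ^ n.primeFactors.card ≤ n :=
  calc 2 ^ n.primeFactors.card ≤ ∏ p ∈ n.primeFactors, p :=
        Finset.pow_card_le_prod _ _ _ fun _ hp => (Nat.prime_of_mem_primeFactors hp).two_le
    _ ≤ n := Nat.le_of_dvd hn.bot_lt (Nat.prod_primeFactors_dvd n)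

theorem gcd_lcm_eq_lcm_gcd_gcd (a b c : ℕ) :
    a.gcd (b.lcm c) = (a.gcd b).lcm (a.gcd c) := by
  rcases eq_or_ne a 0 with rfl | ha
  · simp only [Nat.gcd_zero_left]
  rcases eq_or_ne b 0 with rfl | hb
  · simpa only [Nat.lcm_zero_left, Nat.gcd_zero_right] using
      (Nat.lcm_eq_left (Nat.gcd_dvd_left a c)).symm
  rcases eq_or_ne c 0 with rfl | hc
  · simpa only [Nat.lcm_zero_right, Nat.gcd_zero_right] using
      (Nat.lcm_eq_right (Nat.gcd_dvd_left a b)).symm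
  have hab : a.gcd b ≠ 0 := Nat.gcd_ne_zero_left ha
  have hac : a.gcd c ≠ 0 := Nat.gcd_ne_zero_left ha
  apply Nat.eq_of_factorization_eq' (Nat.gcd_ne_zero_left ha) (Nat.lcm_ne_zero hab hac)
  rw [Nat.factorization_gcd ha (Nat.lcm_ne_zero hb hc), Nat.factorization_lcm hb hc,
    Nat.factorization_lcm hab hac, Nat.factorization_gcd ha hb, Nat.factorization_gcd ha hc]
  ext q
  exact inf_sup_left _ _ _

theorem coprime_div_gcd_of_dvd_lcm {d m n : ℕ} (hd : d ≠ 0) (h : d ∣ m.lcm n) :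
    Nat.Coprime (d / d.gcd m) (d / d.gcd n) := by
  have hlcm : (d.gcd m).lcm (d.gcd n) = d := by
    rw [← gcd_lcm_eq_lcm_gcd_gcd, Nat.gcd_eq_left h]
  set t := (d / d.gcd m).gcd (d / d.gcd n)
  have hm : d.gcd m * t ∣ d :=
    Nat.mul_dvd_of_dvd_div (Nat.gcd_dvd_left d m) (Nat.gcd_dvd_left _ _)
  have hn : d.gcd n * t ∣ d :=
    Nat.mul_dvd_of_dvd_div (Nat.gcd_dvd_left d n) (Nat.gcd_dvd_right _ _)
  have hdt : d * t ∣ d * 1 := by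
    simpa only [Nat.lcm_mul_right, hlcm, mul_one] using Nat.lcm_dvd hm hn
  exact Nat.dvd_one.1 (Nat.dvd_of_mul_dvd_mul_left hd.bot_lt hdt)

theorem pow_card_dvd_mul_prod_of_pairwise_dvd_lcm {ι : Type*} {s : Finset ι} {d : ℕ} {o : ι → ℕ}
    (h : (s : Set ι).Pairwise fun i j => d ∣ (o i).lcm (o j)) :
    d ^ s.card ∣ d * ∏ i ∈ s, o i := by
  rcases eq_or_ne d 0 with rfl | hd
  · simp
  have hcofactors : ∏ i ∈ s, d / d.gcd (o i) ∣ d :=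
    Finset.prod_dvd_of_isRelPrime
      (fun i hi j hj hij =>
        Nat.coprime_iff_isRelPrime.1 (coprime_div_gcd_of_dvd_lcm hd (h hi hj hij)))
      fun i _ => Nat.div_dvd_of_dvd (Nat.gcd_dvd_left d (o i))
  calc d ^ s.card = (∏ i ∈ s, d / d.gcd (o i)) * ∏ i ∈ s, d.gcd (o i) := by
        simp only [← Finset.prod_mul_distrib, Nat.div_mul_cancel (Nat.gcd_dvd_left d _),
          Finset.prod_const]
    _ ∣ d * ∏ i ∈ s, o i :=
        mul_dvd_mul hcofactors <|
          Finset.prod_dvd_prod_of_dvd _ _ fun i _ => Nat.gcd_dvd_right d (o i)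

theorem zpow_det_eq_one {G : Type*} [CommGroup G] {x y : G} {v w : ℤ × ℤ}
    (hv : x ^ v.1 * y ^ v.2 = 1) (hw : x ^ w.1 * y ^ w.2 = 1) :
    x ^ (v.1 * w.2 - w.1 * v.2) = 1 := by
  have hx : x ^ v.1 = y ^ (-v.2) := by rw [zpow_neg, eq_inv_of_mul_eq_one_left hv]
  have hx' : x ^ w.1 = y ^ (-w.2) := by rw [zpow_neg, eq_inv_of_mul_eq_one_left hw]
  rw [zpow_sub, zpow_mul, zpow_mul, hx, hx', ← zpow_mul, ← zpow_mul, mul_inv_eq_one]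
  ring_nf

theorem orderOf_dvd_det_mul_lcm {G : Type*} [CommGroup G] (x y : G) (v w : ℤ × ℤ) :
    orderOf x ∣ (v.1 * w.2 - w.1 * v.2).natAbs *
      (orderOf (x ^ v.1 * y ^ v.2)).lcm (orderOf (x ^ w.1 * y ^ w.2)) := by
  set L := (orderOf (x ^ v.1 * y ^ v.2)).lcm (orderOf (x ^ w.1 * y ^ w.2))
  have pow_lcm (u : ℤ × ℤ) (hu : orderOf (x ^ u.1 * y ^ u.2) ∣ L) :
      (x ^ L) ^ u.1 * (y ^ L) ^ u.2 = 1 := by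
    rw [← zpow_natCast, ← zpow_natCast, zpow_comm x, zpow_comm y, ← mul_zpow, zpow_natCast]
    exact orderOf_dvd_iff_pow_eq_one.1 hu
  apply orderOf_dvd_of_pow_eq_one
  rw [mul_comm, pow_mul, pow_natAbs_eq_one]
  exact zpow_det_eq_one (pow_lcm v (Nat.dvd_lcm_left _ _)) (pow_lcm w (Nat.dvd_lcm_right _ _))

theorem lcm_orderOf_dvd_det_mul_lcm {G : Type*} [CommGroup G] (x y : G) (v w : ℤ × ℤ) :
    (orderOf x).lcm (orderOf y) ∣ (v.1 * w.2 - w.1 * v.2).natAbs *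
      (orderOf (x ^ v.1 * y ^ v.2)).lcm (orderOf (x ^ w.1 * y ^ w.2)) := by
  refine Nat.lcm_dvd (orderOf_dvd_det_mul_lcm x y v w) ?_
  have hswap := orderOf_dvd_det_mul_lcm y x w.swap v.swap
  simp only [Prod.fst_swap, Prod.snd_swap] at hswap
  rwa [mul_comm (y ^ w.2), mul_comm (y ^ v.2), Nat.lcm_comm, mul_comm w.2, mul_comm v.2] at hswap

/-- The product of the `2 × 2` determinants of all pairs of distinct members of a family of
exponent vectors: a common multiple of these determinants, nonzero when the vectors are pairwise
non-proportional. -/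
def detProd {ι : Type*} [Fintype ι] [DecidableEq ι] (v : ι → ℤ × ℤ) : ℕ :=
  ∏ ij ∈ Finset.univ.offDiag, ((v ij.1).1 * (v ij.2).2 - (v ij.2).1 * (v ij.1).2).natAbs

theorem detProd_ne_zero {ι : Type*} [Fintype ι] [DecidableEq ι] {v : ι → ℤ × ℤ}
    (hv : Pairwise fun i j => (v i).1 * (v j).2 ≠ (v j).1 * (v i).2) : detProd v ≠ 0 :=
  Finset.prod_ne_zero_iff.2 fun _ hij =>
    Int.natAbs_ne_zero.2 (sub_ne_zero.2 (hv (Finset.mem_offDiag.1 hij).2.2))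

theorem lcm_orderOf_pow_card_dvd {G ι : Type*} [CommGroup G] [Fintype ι] [DecidableEq ι]
    (x y : G) (v : ι → ℤ × ℤ) :
    (orderOf x).lcm (orderOf y) ^ Fintype.card ι ∣ (orderOf x).lcm (orderOf y) *
      ∏ i, (detProd v * orderOf (x ^ (v i).1 * y ^ (v i).2)) := by
  refine pow_card_dvd_mul_prod_of_pairwise_dvd_lcm fun i _ j _ hij => ?_
  beta_reduce
  rw [Nat.lcm_mul_left]
  refine (lcm_orderOf_dvd_det_mul_lcm x y (v i) (v j)).trans (mul_dvd_mul_right ?_ _)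
  exact Finset.dvd_prod_of_mem
    (fun ij : ι × ι => ((v ij.1).1 * (v ij.2).2 - (v ij.2).1 * (v ij.1).2).natAbs) (a := (i, j))
    (Finset.mem_offDiag.2 ⟨Finset.mem_univ i, Finset.mem_univ j, hij⟩)

theorem exists_zpow_mul_zpow_eq_one_of_card_lt {G : Type*} [Group G] [Finite G] (x y : G) {N : ℕ}
    (hN : Nat.card G < (N + 1) ^ 2) :
    ∃ u : ℤ × ℤ, u ≠ 0 ∧ |u.1| ≤ N ∧ |u.2| ≤ N ∧ x ^ u.1 * y ^ u.2 = 1 := by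
  have := Fintype.ofFinite G
  obtain ⟨⟨i, j⟩, ⟨i', j'⟩, hne, heq⟩ := Fintype.exists_ne_map_eq_of_card_lt
    (fun ij : Fin (N + 1) × Fin (N + 1) => x ^ (ij.1 : ℤ) * y ^ (ij.2 : ℤ))
    (by rwa [Fintype.card_prod, Fintype.card_fin, ← sq, ← Nat.card_eq_fintype_card])
  refine ⟨(i - i', j - j'), ?_, ?_, ?_, ?_⟩
  · simp only [ne_eq, Prod.mk_eq_zero, Prod.mk.injEq, Fin.ext_iff] at hne ⊢
    omega
  · exact abs_sub_le_iff.2 ⟨by omega, by omega⟩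
  · exact abs_sub_le_iff.2 ⟨by omega, by omega⟩
  · have hcancel : x ^ (-(i' : ℤ)) * (x ^ (i : ℤ) * y ^ (j : ℤ)) * y ^ (-(j' : ℤ)) = 1 := by
      simp only [heq, zpow_neg, inv_mul_cancel_left, mul_inv_cancel]
    rw [sub_eq_neg_add, sub_eq_add_neg, zpow_add, zpow_add, ← hcancel]
    simp only [mul_assoc]

/-- Multiplicative independence of two elements, the hypothesis on `a` and `b` that keeps
`relator a b u` nonzero for `u ≠ 0`. -/
def MulIndepPair {G : Type*} [DivInvMonoid G] (x y : G) : Prop :=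
  ∀ m n : ℤ, x ^ m * y ^ n = 1 → m = 0 ∧ n = 0

/-- The integer `a ^ m * b ^ n - 1` with denominators cleared, for `u = (m, n)`. Its prime factors
not dividing `a * b` are the primes modulo which `a ^ m * b ^ n = 1`. -/
def relator (a b : ℤ) (u : ℤ × ℤ) : ℤ :=
  a ^ u.1.toNat * b ^ u.2.toNat - a ^ (-u.1).toNat * b ^ (-u.2).toNat

theorem zpow_eq_pow_toNat_div {K : Type*} [DivisionRing K] {x : K} (hx : x ≠ 0) (m : ℤ) :
    x ^ m = x ^ m.toNat / x ^ (-m).toNat := by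
  rw [← zpow_natCast, ← zpow_natCast, ← zpow_sub₀ hx, Int.toNat_sub_toNat_neg]

theorem cast_relator_eq_zero_iff {K : Type*} [Field K] {a b : ℤ} (ha : (a : K) ≠ 0)
    (hb : (b : K) ≠ 0) (u : ℤ × ℤ) :
    (relator a b u : K) = 0 ↔ (a : K) ^ u.1 * (b : K) ^ u.2 = 1 := by
  rw [zpow_eq_pow_toNat_div ha, zpow_eq_pow_toNat_div hb, div_mul_div_comm,
    div_eq_one_iff_eq (mul_ne_zero (pow_ne_zero _ ha) (pow_ne_zero _ hb))]
  simp only [relator, Int.cast_sub, Int.cast_mul, Int.cast_pow, sub_eq_zero]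

theorem relator_ne_zero {a b : ℤ} (ha : a ≠ 0) (hb : b ≠ 0) (hab : MulIndepPair (a : ℚ) b)
    {u : ℤ × ℤ} (hu : u ≠ 0) : relator a b u ≠ 0 := by
  intro h
  have hrel : (a : ℚ) ^ u.1 * (b : ℚ) ^ u.2 = 1 :=
    (cast_relator_eq_zero_iff (Int.cast_ne_zero.2 ha) (Int.cast_ne_zero.2 hb) u).1
      (by rw [h, Int.cast_zero])
  exact hu (Prod.ext_iff.2 (hab u.1 u.2 hrel))

theorem natAbs_relator_le {a b : ℤ} (hab : a * b ≠ 0) {u : ℤ × ℤ} {N : ℕ} (h₁ : |u.1| ≤ N)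
    (h₂ : |u.2| ≤ N) : (relator a b u).natAbs ≤ 2 * (a * b).natAbs ^ N := by
  have hmonomial {i j : ℕ} (hi : i ≤ N) (hj : j ≤ N) :
      (a ^ i * b ^ j).natAbs ≤ (a * b).natAbs ^ N := by
    rw [Int.natAbs_mul, Int.natAbs_mul, Int.natAbs_pow, Int.natAbs_pow, mul_pow]
    exact Nat.mul_le_mul (Nat.pow_le_pow_right (Int.natAbs_pos.2 (left_ne_zero_of_mul hab)) hi)
      (Nat.pow_le_pow_right (Int.natAbs_pos.2 (right_ne_zero_of_mul hab)) hj)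
  rw [two_mul]
  rw [abs_le] at h₁ h₂
  exact (Int.natAbs_sub_le _ _).trans
    (add_le_add (hmonomial (by omega) (by omega)) (hmonomial (by omega) (by omega)))

theorem card_primeFactors_relator_le {a b : ℤ} (hab : a * b ≠ 0) {u : ℤ × ℤ} {N : ℕ}
    (hu : relator a b u ≠ 0) (h₁ : |u.1| ≤ N) (h₂ : |u.2| ≤ N) :
    (relator a b u).natAbs.primeFactors.card ≤ (a * b).natAbs * N + 1 := by
  refine (Nat.pow_le_pow_iff_right one_lt_two).1 ?_
  calc 2 ^ (relator a b u).natAbs.primeFactors.card ≤ (relator a b u).natAbs :=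
        two_pow_card_primeFactors_le (Int.natAbs_ne_zero.2 hu)
    _ ≤ 2 * (a * b).natAbs ^ N := natAbs_relator_le hab h₁ h₂
    _ ≤ 2 * (2 ^ (a * b).natAbs) ^ N := by gcongr; exact Nat.lt_two_pow_self.le
    _ = 2 ^ ((a * b).natAbs * N + 1) := by rw [← pow_mul, pow_succ']

/-- The primes dividing some `relator a b u` with `u ≠ 0` in the box `[-N, N]²`, which
catch every prime modulo which `a` and `b` generate a group with fewer than `(N + 1)²` elements. -/
noncomputable def relatorPrimes (a b : ℤ) (N : ℕ) : Finset ℕ :=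
  ((Finset.Icc (-N : ℤ) N ×ˢ Finset.Icc (-N : ℤ) N).erase 0).biUnion
    fun u => (relator a b u).natAbs.primeFactors

theorem mem_relatorPrimes {a b : ℤ} {N p : ℕ} :
    p ∈ relatorPrimes a b N ↔
      ∃ u : ℤ × ℤ, u ≠ 0 ∧ |u.1| ≤ N ∧ |u.2| ≤ N ∧ p ∈ (relator a b u).natAbs.primeFactors := by
  simp only [relatorPrimes, Finset.mem_biUnion, Finset.mem_erase, Finset.mem_product,
    Finset.mem_Icc, ← abs_le, and_assoc]

theorem card_relatorPrimes_le {a b : ℤ} (ha : a ≠ 0) (hb : b ≠ 0) (hab : MulIndepPair (a : ℚ) b)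
    (N : ℕ) : (relatorPrimes a b N).card ≤ 8 * ((a * b).natAbs + 1) * N ^ 3 := by
  have hbox : ((Finset.Icc (-N : ℤ) N ×ˢ Finset.Icc (-N : ℤ) N).erase 0).card
      = 4 * N * (N + 1) := by
    rw [Finset.card_erase_of_mem (by simp), Finset.card_product, Int.card_Icc,
      show ((N : ℤ) + 1 - -N).toNat = 2 * N + 1 by omega, ← sq,
      show (2 * N + 1) ^ 2 = 4 * N * (N + 1) + 1 by ring, Nat.add_sub_cancel]
  have hcard : (relatorPrimes a b N).card ≤ 4 * N * (N + 1) * ((a * b).natAbs * N + 1) := by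
    rw [← hbox]
    refine Finset.card_biUnion_le_card_mul _ _ _ fun u hu => ?_
    simp only [Finset.mem_erase, Finset.mem_product, Finset.mem_Icc, ← abs_le] at hu
    exact card_primeFactors_relator_le (mul_ne_zero ha hb) (relator_ne_zero ha hb hab hu.1)
      hu.2.1 hu.2.2
  rcases N.eq_zero_or_pos with rfl | hN
  · simpa using hcard
  calc (relatorPrimes a b N).card ≤ 4 * N * (N + 1) * ((a * b).natAbs * N + 1) := hcard
    _ ≤ 4 * N * (N + N) * ((a * b).natAbs * N + N) := by gcongr <;> exact hN
    _ = 8 * ((a * b).natAbs + 1) * N ^ 3 := by ring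

theorem mem_relatorPrimes_of_lcm_orderOf_lt {a b : ℤ} (ha : a ≠ 0) (hb : b ≠ 0)
    (hab : MulIndepPair (a : ℚ) b) {p N : ℕ} [Fact p.Prime] {x y : (ZMod p)ˣ}
    (hx : (x : ZMod p) = a) (hy : (y : ZMod p) = b)
    (hN : (orderOf x).lcm (orderOf y) < (N + 1) ^ 2) : p ∈ relatorPrimes a b N := by
  set D := (orderOf x).lcm (orderOf y)
  have : NeZero D := ⟨Nat.lcm_ne_zero (orderOf_pos x).ne' (orderOf_pos y).ne'⟩
  obtain ⟨u, hu, h₁, h₂, hrel⟩ := exists_zpow_mul_zpow_eq_one_of_card_lt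
    (⟨x, orderOf_dvd_iff_pow_eq_one.1 (Nat.dvd_lcm_left _ _)⟩ : rootsOfUnity D (ZMod p))
    ⟨y, orderOf_dvd_iff_pow_eq_one.1 (Nat.dvd_lcm_right _ _)⟩
    ((card_rootsOfUnity (ZMod p) D).trans_lt hN)
  have hrel' : (a : ZMod p) ^ u.1 * (b : ZMod p) ^ u.2 = 1 := by
    rw [← hx, ← hy, ← Units.val_zpow_eq_zpow_val, ← Units.val_zpow_eq_zpow_val, ← Units.val_mul,
      Units.val_eq_one]
    exact congrArg Subtype.val hrel
  have hdvd : (p : ℤ) ∣ relator a b u := by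
    rw [← ZMod.intCast_zmod_eq_zero_iff_dvd]
    exact (cast_relator_eq_zero_iff (hx ▸ x.ne_zero) (hy ▸ y.ne_zero) u).2 hrel'
  exact mem_relatorPrimes.2 ⟨u, hu, h₁, h₂, Nat.mem_primeFactors.2
    ⟨Fact.out, Int.natCast_dvd.1 hdvd, Int.natAbs_ne_zero.2 (relator_ne_zero ha hb hab hu)⟩⟩

theorem lcm_orderOf_pow_card_sub_one_le {G ι : Type*} [CommGroup G] [Finite G] [Fintype ι]
    [DecidableEq ι] [Nonempty ι] (x y : G) {v : ι → ℤ × ℤ} (hv : detProd v ≠ 0) :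
    (orderOf x).lcm (orderOf y) ^ (Fintype.card ι - 1) ≤
      ∏ i, (detProd v * orderOf (x ^ (v i).1 * y ^ (v i).2)) := by
  have hD : 0 < (orderOf x).lcm (orderOf y) := Nat.lcm_pos (orderOf_pos x) (orderOf_pos y)
  refine Nat.le_of_dvd (Finset.prod_pos fun i _ => mul_pos hv.bot_lt (orderOf_pos _))
    (Nat.dvd_of_mul_dvd_mul_left hD ?_)
  rw [mul_pow_sub_one Fintype.card_ne_zero]
  exact lcm_orderOf_pow_card_dvd x y v

theorem lcm_orderOf_le_rpow {G ι : Type*} [CommGroup G] [Finite G] [Fintype ι] [DecidableEq ι]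
    [Nontrivial ι] (x y : G) {v : ι → ℤ × ℤ} (hv : detProd v ≠ 0) {z : ℝ}
    (h : ∀ i, (orderOf (x ^ (v i).1 * y ^ (v i).2) : ℝ) ≤ z) :
    ((orderOf x).lcm (orderOf y) : ℝ) ≤
      (detProd v * z) ^ ((Fintype.card ι : ℝ) / (Fintype.card ι - 1)) := by
  set D := (orderOf x).lcm (orderOf y)
  set E := detProd v
  have hk : 1 < Fintype.card ι := Fintype.one_lt_card
  have hk₀ : ((Fintype.card ι - 1 : ℕ) : ℝ) ≠ 0 := Nat.cast_ne_zero.2 (Nat.sub_ne_zero_of_lt hk)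
  obtain ⟨i₀⟩ : Nonempty ι := inferInstance
  have hEz : 0 ≤ (E : ℝ) * z := mul_nonneg E.cast_nonneg ((Nat.cast_nonneg _).trans (h i₀))
  refine le_of_pow_le_pow_left₀ (Nat.sub_ne_zero_of_lt hk) (Real.rpow_nonneg hEz _) ?_
  calc (D : ℝ) ^ (Fintype.card ι - 1)
      ≤ ∏ i, ((E : ℝ) * orderOf (x ^ (v i).1 * y ^ (v i).2)) := by
        exact_mod_cast lcm_orderOf_pow_card_sub_one_le x y hv
    _ ≤ ∏ _i : ι, ((E : ℝ) * z) :=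
        Finset.prod_le_prod (fun i _ => by positivity) fun i _ => by gcongr; exact h i
    _ = (E * z) ^ (Fintype.card ι : ℝ) := by
        rw [Finset.prod_const, Finset.card_univ, Real.rpow_natCast]
    _ = ((E * z) ^ ((Fintype.card ι : ℝ) / (Fintype.card ι - 1))) ^ (Fintype.card ι - 1) := by
        rw [← Real.rpow_mul_natCast hEz, ← Nat.cast_pred hk.le, div_mul_cancel₀ _ hk₀]

/-- The primes `p ∤ a * b` modulo which all the products `a ^ m * b ^ n`, for `(m, n)` in the family
`v`, have order at most `z`. -/
def smallOrderPrimes {ι : Type*} (a b : ℤ) (v : ι → ℕ × ℕ) (z : ℝ) : Set ℕ :=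
  {p | p.Prime ∧ ¬ (p : ℤ) ∣ a * b ∧
    ∀ i, (orderOf ((a ^ (v i).1 * b ^ (v i).2 : ℤ) : ZMod p) : ℝ) ≤ z}

theorem smallOrderPrimes_subset_relatorPrimes {ι : Type*} [Fintype ι] [DecidableEq ι]
    [Nontrivial ι] {a b : ℤ} (ha : a ≠ 0) (hb : b ≠ 0) (hab : MulIndepPair (a : ℚ) b)
    {v : ι → ℕ × ℕ} (hv : detProd (fun i => ((v i).1, (v i).2)) ≠ 0) {z : ℝ} {N : ℕ}
    (hN : (detProd (fun i => ((v i).1, (v i).2)) * z) ^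
      ((Fintype.card ι : ℝ) / (Fintype.card ι - 1)) < (N + 1) ^ 2) :
    smallOrderPrimes a b v z ⊆ relatorPrimes a b N := by
  rintro p ⟨hp, hpab, hord⟩
  have : Fact p.Prime := ⟨hp⟩
  rw [← ZMod.intCast_zmod_eq_zero_iff_dvd, Int.cast_mul] at hpab
  lift (a : ZMod p) to (ZMod p)ˣ using (left_ne_zero_of_mul hpab).isUnit with x hx
  lift (b : ZMod p) to (ZMod p)ˣ using (right_ne_zero_of_mul hpab).isUnit with y hy
  refine mem_relatorPrimes_of_lcm_orderOf_lt ha hb hab hx hy ?_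
  have hlcm := lcm_orderOf_le_rpow x y hv (z := z) fun i => by
    simpa only [zpow_natCast, ← orderOf_units, Units.val_mul, Units.val_pow_eq_pow_val, hx, hy,
      Int.cast_mul, Int.cast_pow] using hord i
  exact_mod_cast hlcm.trans_lt hN

theorem exists_ncard_smallOrderPrimes_le {ι : Type*} [Fintype ι] [Nontrivial ι] {a b : ℤ}
    (ha : a ≠ 0) (hb : b ≠ 0) (hab : MulIndepPair (a : ℚ) b) {v : ι → ℕ × ℕ}
    (hv : Pairwise fun i j => (v i).1 * (v j).2 ≠ (v j).1 * (v i).2) :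
    ∃ C : ℝ, ∀ z : ℝ, 0 ≤ z → (smallOrderPrimes a b v z).Finite ∧
      ((smallOrderPrimes a b v z).ncard : ℝ) ≤
        C * z ^ (3 * (Fintype.card ι : ℝ) / (2 * (Fintype.card ι - 1))) := by
  classical
  set k : ℝ := (Fintype.card ι : ℝ)
  have hE := detProd_ne_zero (v := fun i => ((v i).1, (v i).2)) fun i j hij => by
    simpa only [ne_eq, ← Nat.cast_mul, Nat.cast_inj] using hv hij
  set E := detProd (fun i => ((v i).1, (v i).2))
  refine ⟨8 * ((a * b).natAbs + 1) * E ^ (3 * k / (2 * (k - 1))), fun z hz => ?_⟩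
  have hEz : 0 ≤ (E : ℝ) * z := by positivity
  set w := (E * z) ^ (k / (2 * (k - 1)))
  have hw (n : ℕ) : w ^ n = (E * z) ^ (n * k / (2 * (k - 1))) := by
    rw [← Real.rpow_mul_natCast hEz, div_mul_eq_mul_div, mul_comm k]
  have hsub : smallOrderPrimes a b v z ⊆ relatorPrimes a b ⌊w⌋₊ := by
    refine smallOrderPrimes_subset_relatorPrimes ha hb hab hE ?_
    calc (E * z) ^ (k / (k - 1)) = w ^ 2 := by
          rw [hw, Nat.cast_two, mul_div_mul_left _ _ two_ne_zero]
      _ < (⌊w⌋₊ + 1) ^ 2 := by gcongr; exact Nat.lt_floor_add_one w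
  refine ⟨(Finset.finite_toSet _).subset hsub, ?_⟩
  calc ((smallOrderPrimes a b v z).ncard : ℝ) ≤ (relatorPrimes a b ⌊w⌋₊).card := by
        exact_mod_cast Set.ncard_coe_finset (relatorPrimes a b ⌊w⌋₊) ▸
          Set.ncard_le_ncard hsub (Finset.finite_toSet _)
    _ ≤ 8 * ((a * b).natAbs + 1) * (⌊w⌋₊ : ℝ) ^ 3 := by
        exact_mod_cast card_relatorPrimes_le ha hb hab ⌊w⌋₊
    _ ≤ 8 * ((a * b).natAbs + 1) * w ^ 3 := by gcongr; exact Nat.floor_le (by positivity)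
    _ = _ := by rw [hw, Nat.cast_ofNat, Real.mul_rpow E.cast_nonneg hz, mul_assoc _ (_ ^ _)]

theorem isLittleO_div_exp_sqrt_log {c : ℝ} (hc : 0 < c) :
    (fun x : ℝ => x / Real.exp (c * √(Real.log x))) =o[atTop] fun x => x / Real.log x := by
  have hsqrt : Tendsto (fun x => √(Real.log x)) atTop atTop :=
    Real.tendsto_sqrt_atTop.comp Real.tendsto_log_atTop
  have hlog : Real.log =o[atTop] fun x => Real.exp (c * √(Real.log x)) := by
    refine ((isLittleO_pow_exp_pos_mul_atTop 2 hc).comp_tendsto hsqrt).congr' ?_ .rfl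
    filter_upwards [eventually_ge_atTop 1] with x hx using Real.sq_sqrt (Real.log_nonneg hx)
  simp only [div_eq_mul_inv]
  refine (isBigO_refl _ _).mul_isLittleO (hlog.inv_rev ?_)
  filter_upwards [eventually_gt_atTop 1] with x hx h using absurd h (Real.log_pos hx).ne'

theorem eventually_rpow_div_exp_sqrt_log_le {θ : ℝ} (hθ : 0 < θ) (ε : ℝ) :
    ∀ᶠ x : ℝ in atTop, ∀ t ∈ Set.Icc 1 x,
      t ^ θ / Real.exp (ε * √(Real.log t)) ≤ x ^ θ / Real.exp (ε * √(Real.log x)) := by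
  have hsqrt : Tendsto (fun x => √(Real.log x)) atTop atTop :=
    Real.tendsto_sqrt_atTop.comp Real.tendsto_log_atTop
  filter_upwards [hsqrt.eventually_ge_atTop (ε / θ)] with x hx t ht
  have hform {u : ℝ} (hu : 1 ≤ u) : u ^ θ / Real.exp (ε * √(Real.log u)) =
      Real.exp (θ * √(Real.log u) ^ 2 - ε * √(Real.log u)) := by
    rw [Real.rpow_def_of_pos (by linarith), ← Real.exp_sub, Real.sq_sqrt (Real.log_nonneg hu),
      mul_comm θ]
  rw [hform ht.1, hform (ht.1.trans ht.2), Real.exp_le_exp, ← sub_nonneg]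
  have hmono : √(Real.log t) ≤ √(Real.log x) :=
    Real.sqrt_le_sqrt (Real.log_le_log (by linarith [ht.1]) ht.2)
  have hslope : ε ≤ θ * (√(Real.log x) + √(Real.log t)) := by
    rw [div_le_iff₀' hθ] at hx
    nlinarith [Real.sqrt_nonneg (Real.log t)]
  calc 0 ≤ (√(Real.log x) - √(Real.log t)) * (θ * (√(Real.log x) + √(Real.log t)) - ε) :=
        mul_nonneg (sub_nonneg.2 hmono) (sub_nonneg.2 hslope)
    _ = _ := by ring

theorem stmt_0_general {ι : Type*} [Fintype ι] [Nontrivial ι] {a b : ℤ} (ha : a ≠ 0) (hb : b ≠ 0)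
    (hab : MulIndepPair (a : ℚ) b) {v : ι → ℕ × ℕ}
    (hv : Pairwise fun i j => (v i).1 * (v j).2 ≠ (v j).1 * (v i).2) {ε : ℝ} (hε : 0 < ε) :
    (fun x : ℝ => (Nat.card {p : ℕ | p.Prime ∧ (p : ℝ) ≤ x ∧ ¬ (p : ℤ) ∣ a * b ∧
        ∀ i, (orderOf ((a ^ (v i).1 * b ^ (v i).2 : ℤ) : ZMod p) : ℝ) ≤
          (p : ℝ) ^ (2 * ((Fintype.card ι : ℝ) - 1) / (3 * Fintype.card ι)) /
            Real.exp (ε * √(Real.log p))} : ℝ))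
      =o[atTop] fun x : ℝ => x / Real.log x := by
  obtain ⟨C, hC⟩ := exists_ncard_smallOrderPrimes_le ha hb hab hv
  have hk : (1 : ℝ) < Fintype.card ι := by exact_mod_cast Fintype.one_lt_card
  set k : ℝ := (Fintype.card ι : ℝ)
  set θ := 2 * (k - 1) / (3 * k)
  set κ := 3 * k / (2 * (k - 1))
  have : 0 < k - 1 := sub_pos.2 hk
  have hθ : 0 < θ := by positivity
  have hκ : 0 < κ := by positivity
  have hθκ : θ * κ = 1 := by rw [show θ = κ⁻¹ from (inv_div _ _).symm, inv_mul_cancel₀ hκ.ne']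
  refine IsBigO.trans_isLittleO (.of_bound C ?_) (isLittleO_div_exp_sqrt_log (mul_pos hε hκ))
  filter_upwards [eventually_rpow_div_exp_sqrt_log_le hθ ε, eventually_ge_atTop 0] with x hmono hx
  obtain ⟨hfin, hcard⟩ := hC (x ^ θ / Real.exp (ε * √(Real.log x))) (by positivity)
  have hpow : (x ^ θ / Real.exp (ε * √(Real.log x))) ^ κ =
      x / Real.exp (ε * κ * √(Real.log x)) := by
    rw [Real.div_rpow (by positivity) (by positivity), ← Real.rpow_mul hx, hθκ, Real.rpow_one,
      ← Real.exp_mul, mul_right_comm]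
  rw [Real.norm_of_nonneg (Nat.cast_nonneg _), Real.norm_of_nonneg (by positivity), ← hpow]
  refine le_trans ?_ hcard
  rw [Nat.card_coe_set_eq]
  gcongr
  rintro p ⟨hp, hpx, hpab, hord⟩
  exact ⟨hp, hpab, fun i => (hord i).trans (hmono p ⟨mod_cast hp.one_le, hpx⟩)⟩

/-- **Theorem 1.** Let `a` and `b` be nonzero, multiplicatively independent integers.
For almost all primes `p` (all but `o(x/log x)` of the primes `p ≤ x`, where primes
dividing `ab` may be placed in the exceptional set), at least one of
`a, b, ab, a²b, ab²` has multiplicative order mod `p` exceeding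
`p^(8/15) / exp(2√(log p))`. -/
theorem stmt_0 (a b : ℤ) (ha : a ≠ 0) (hb : b ≠ 0)
    (hind : ∀ m n : ℤ, (a : ℚ) ^ m * (b : ℚ) ^ n = 1 → m = 0 ∧ n = 0) :
    (fun x : ℝ => (Nat.card {p : ℕ |
        Nat.Prime p ∧ (p : ℝ) ≤ x ∧ ¬ (p : ℤ) ∣ a * b ∧
        (max (max (max (max (orderOf ((a : ZMod p)))
            (orderOf ((b : ZMod p))))
            (orderOf (((a * b : ℤ) : ZMod p))))
            (orderOf (((a ^ 2 * b : ℤ) : ZMod p))))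
            (orderOf (((a * b ^ 2 : ℤ) : ZMod p))) : ℝ)
          ≤ (p : ℝ) ^ ((8 : ℝ) / 15) / Real.exp (2 * Real.sqrt (Real.log p))} : ℝ))
      =o[atTop] (fun x : ℝ => x / Real.log x) := by
  have h := stmt_0_general ha hb hind (v := ![(1, 0), (0, 1), (1, 1), (2, 1), (1, 2)])
    (by unfold Pairwise; decide) zero_lt_two
  have hexp : 2 * ((Fintype.card (Fin 5) : ℝ) - 1) / (3 * Fintype.card (Fin 5)) = 8 / 15 := by
    norm_num
  rw [hexp] at h
  simpa only [sup_le_iff, and_assoc, Nat.succ_eq_add_one, Nat.reduceAdd, Fin.forall_fin_succ,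
    Fin.isValue, Matrix.cons_val_zero, pow_one, pow_zero, mul_one, Matrix.cons_val_succ, one_mul,
    Matrix.cons_val_fin_one, forall_const] using h
end

section
/- Let ε(x) be a positive-valued function of x ≥ 2 that tends to 0 as x → ∞, and let a and b be nonzero integers that are multiplicatively independent. Then, as x → ∞, the number of primes p ≤ x for which max{ℓ_a(p), ℓ_b(p), ℓ_{ab}(p), ℓ_{a²b}(p), ℓ_{ab²}(p)} ≤ p^{8/15 + ε(p)} is o(x/log x). -/
open Filter Asymptotics

/-!
Let `h = lcm (ℓ_a(p), ℓ_b(p))`. By pigeonhole, a small `h` forces `p` to divide the numerator of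
some `a ^ m * b ^ n - 1` with small exponents, so `h ≥ x ^ (2 / 3 - δ)` for almost all `p ≤ x`.
Any two of the exponent vectors of `a`, `b`, `ab`, `a²b`, `ab²` have determinant `±1`, `±2` or
`±3`, hence no prime `q > 3` divides two of the five indices `h / ℓ`. If all five orders are at
most `x ^ (8 / 15 + δ)`, then the primes `q > x ^ δ` dividing these indices form five disjoint
blocks of prime factors of `p - 1`. Each block has product at least `h / x ^ (8 / 15 + O(δ))`,
which is at least `x ^ (2 / 15 - O(δ))`. All five together have product at most `h`, so each one
is at most `x ^ (32 / 15 + O(δ)) / h ^ 3 ≤ x ^ (2 / 15 + O(δ))`.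

Almost all `p - 1` have at most `2 log (1 / δ) + O(1)` prime factors exceeding `x ^ δ`. Weighting
these factors by `1 / 4` and counting by Brun–Titchmarsh, the primes with five such blocks have
relative density `O(δ ^ (5 - (13 / 4) log 4))`, which tends to `0` with `δ`.
-/

section SelbergSieve

open BoundingSieve ArithmeticFunction Finset
open scoped ArithmeticFunction.Moebius

variable (s : BoundingSieve) (z : ℕ)

/-- The sifting moduli of Selberg's sieve of level `z ^ 2`: the divisors of `s.prodPrimes` that
are at most `z`. -/
def selbergModuli : Finset ℕ := {l ∈ s.prodPrimes.divisors | l ≤ z}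

/-- The denominator `S` in the main term `X / S` of Selberg's sieve. -/
noncomputable def selbergSum : ℝ := ∑ l ∈ selbergModuli s z, s.selbergTerms l

/-- Selberg's optimal weights: they minimise the quadratic form `mainSum (lambdaSquared w)` among
the `w` supported on `selbergModuli s z` with `w 1 = 1`. -/
noncomputable def selbergWeight (d : ℕ) : ℝ :=
  μ d * (s.nu d)⁻¹ * ((∑ m ∈ selbergModuli s z with d ∣ m, s.selbergTerms m) / selbergSum s z)

variable {s z}

lemma mem_selbergModuli {l : ℕ} : l ∈ selbergModuli s z ↔ l ∣ s.prodPrimes ∧ l ≤ z := by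
  simp [selbergModuli, s.prodPrimes_ne_zero]

lemma selbergTerms_pos_of_mem {l : ℕ} (hl : l ∈ selbergModuli s z) : 0 < s.selbergTerms l :=
  selbergTerms_pos (mem_selbergModuli.1 hl).1

lemma selbergSum_pos (hz : 1 ≤ z) : 0 < selbergSum s z :=
  sum_pos (fun _ => selbergTerms_pos_of_mem) ⟨1, mem_selbergModuli.2 ⟨one_dvd _, hz⟩⟩

lemma selbergWeight_one (hz : 1 ≤ z) : selbergWeight s z 1 = 1 := by
  have hS : selbergSum s z ≠ 0 := (selbergSum_pos hz).ne'
  simp only [selbergWeight, moebius_apply_one, Int.cast_one, s.nu_mult.map_one, inv_one, mul_one,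
    one_dvd, filter_true, one_mul]
  exact div_self hS

lemma selbergWeight_eq_zero {d : ℕ} (hd : d ∉ selbergModuli s z) (hdP : d ∣ s.prodPrimes) :
    selbergWeight s z d = 0 := by
  have hempty : {m ∈ selbergModuli s z | d ∣ m} = ∅ := filter_eq_empty_iff.2 fun m hm hdm => by
    obtain ⟨hmP, hmz⟩ := mem_selbergModuli.1 hm
    have hm0 : 0 < m := Nat.pos_of_dvd_of_pos hmP (Nat.pos_of_ne_zero s.prodPrimes_ne_zero)
    exact hd (mem_selbergModuli.2 ⟨hdP, (Nat.le_of_dvd hm0 hdm).trans hmz⟩)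
  simp [selbergWeight, hempty]

lemma abs_selbergWeight_le (hz : 1 ≤ z) {d : ℕ} (hd : d ∣ s.prodPrimes) :
    |selbergWeight s z d| ≤ (s.nu d)⁻¹ := by
  have hν : 0 < s.nu d := nu_pos_of_dvd_prodPrimes hd
  have hpartial : 0 ≤ ∑ m ∈ selbergModuli s z with d ∣ m, s.selbergTerms m :=
    sum_nonneg fun m hm => (selbergTerms_pos_of_mem (mem_filter.1 hm).1).le
  have hle : ∑ m ∈ selbergModuli s z with d ∣ m, s.selbergTerms m ≤ selbergSum s z :=
    sum_le_sum_of_subset_of_nonneg (filter_subset _ _)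
      fun m hm _ => (selbergTerms_pos_of_mem hm).le
  have hμ : |(μ d : ℝ)| ≤ 1 := by exact_mod_cast abs_moebius_le_one (n := d)
  rw [selbergWeight, abs_mul, abs_mul, abs_of_pos (inv_pos.2 hν),
    abs_of_nonneg (div_nonneg hpartial (selbergSum_pos hz).le)]
  calc |(μ d : ℝ)| * (s.nu d)⁻¹ * (_ / selbergSum s z) ≤ 1 * (s.nu d)⁻¹ * 1 := by
        gcongr
        · exact div_nonneg hpartial (selbergSum_pos hz).le
        · exact div_le_one_of_le₀ hle (selbergSum_pos hz).le
    _ = (s.nu d)⁻¹ := by ring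

lemma sum_moebius_divisors_filter_dvd {k m : ℕ} (hm : Squarefree m) :
    ∑ d ∈ m.divisors with k ∣ d, μ d = if k = m then μ m else 0 := by
  by_cases hkm : k ∣ m
  · obtain ⟨n, rfl⟩ := hkm
    have hk : k ≠ 0 := left_ne_zero_of_mul hm.ne_zero
    have hn : n ≠ 0 := right_ne_zero_of_mul hm.ne_zero
    have himage : {d ∈ (k * n).divisors | k ∣ d} = n.divisors.image (k * ·) := by
      ext d
      simp only [mem_filter, Nat.mem_divisors, mem_image]
      constructor
      · rintro ⟨⟨hd, -⟩, e, rfl⟩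
        exact ⟨e, ⟨Nat.dvd_of_mul_dvd_mul_left (Nat.pos_of_ne_zero hk) hd, hn⟩, rfl⟩
      · rintro ⟨e, ⟨he, -⟩, rfl⟩
        exact ⟨⟨mul_dvd_mul_left k he, hm.ne_zero⟩, dvd_mul_right k e⟩
    have hmul : ∀ e ∈ n.divisors, μ (k * e) = μ k * μ e := fun e he =>
      isMultiplicative_moebius.map_mul_of_coprime
        (Nat.coprime_of_squarefree_mul (hm.squarefree_of_dvd
          (mul_dvd_mul_left k (Nat.dvd_of_mem_divisors he))))
    rw [himage, sum_image (fun _ _ _ _ h => Nat.eq_of_mul_eq_mul_left (Nat.pos_of_ne_zero hk) h),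
      sum_congr rfl hmul, ← mul_sum, ← coe_mul_zeta_apply, moebius_mul_coe_zeta, one_apply]
    rcases eq_or_ne n 1 with rfl | hn1
    · simp
    · simp [hn1, hk]
  · rw [filter_eq_empty_iff.2 fun d hd hkd => hkm (hkd.trans (Nat.dvd_of_mem_divisors hd)),
      sum_empty, if_neg (by rintro rfl; exact hkm dvd_rfl)]

lemma sum_nu_mul_selbergWeight (k : ℕ) :
    ∑ d ∈ s.prodPrimes.divisors, (if k ∣ d then s.nu d * selbergWeight s z d else 0) =
      if k ∈ selbergModuli s z then μ k * s.selbergTerms k / selbergSum s z else 0 := by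
  have hterm : ∀ d ∈ s.prodPrimes.divisors,
      (if k ∣ d then s.nu d * selbergWeight s z d else 0) =
        ∑ m ∈ selbergModuli s z, if d ∣ m ∧ k ∣ d then
          (μ d : ℝ) * (s.selbergTerms m / selbergSum s z) else 0 := fun d hd => by
    have hν : s.nu d ≠ 0 := nu_ne_zero (Nat.dvd_of_mem_divisors hd)
    split_ifs with hkd
    · simp only [selbergWeight, hkd, and_true]
      rw [← sum_filter, ← mul_sum, ← sum_div]
      field_simp
    · simp [hkd]
  have hinner : ∀ m ∈ selbergModuli s z,
      ∑ d ∈ s.prodPrimes.divisors, (if d ∣ m ∧ k ∣ d then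
        (μ d : ℝ) * (s.selbergTerms m / selbergSum s z) else 0) =
      if k = m then μ m * s.selbergTerms m / selbergSum s z else 0 := fun m hm => by
    have hmP := (mem_selbergModuli.1 hm).1
    rw [← sum_filter, ← filter_filter, Nat.divisors_filter_dvd_of_dvd s.prodPrimes_ne_zero hmP,
      ← sum_mul]
    have hμ := sum_moebius_divisors_filter_dvd (k := k) (squarefree_of_dvd_prodPrimes hmP)
    rw [← Int.cast_sum, hμ]
    split_ifs <;> simp [mul_div_assoc]
  rw [sum_congr rfl hterm, sum_comm, sum_congr rfl hinner, sum_ite_eq]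

lemma mainSum_lambdaSquared_selbergWeight (hz : 1 ≤ z) :
    s.mainSum (lambdaSquared (selbergWeight s z)) = (selbergSum s z)⁻¹ := by
  have hS : selbergSum s z ≠ 0 := (selbergSum_pos hz).ne'
  have hterm : ∀ l ∈ selbergModuli s z,
      (s.selbergTerms l)⁻¹ * (μ l * s.selbergTerms l / selbergSum s z) ^ 2 =
        s.selbergTerms l / selbergSum s z ^ 2 := fun l hl => by
    have hg : s.selbergTerms l ≠ 0 := (selbergTerms_pos_of_mem hl).ne'
    have hμ : (μ l : ℝ) ^ 2 = 1 := by
      exact_mod_cast moebius_sq_eq_one_of_squarefree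
        (squarefree_of_dvd_prodPrimes (mem_selbergModuli.1 hl).1)
    rw [div_pow, mul_pow, hμ]
    field_simp
  rw [mainSum_lambdaSquared_eq_sum_mul_sum_sq]
  simp only [sum_nu_mul_selbergWeight, ite_pow, mul_ite, ne_eq, OfNat.ofNat_ne_zero,
    not_false_eq_true, zero_pow, mul_zero]
  rw [← sum_filter, show {l ∈ s.prodPrimes.divisors | l ∈ selbergModuli s z} = selbergModuli s z
    from filter_mem_eq_inter.trans (inter_eq_right.2 (filter_subset _ _)),
    sum_congr rfl hterm, ← sum_div, ← selbergSum]
  field_simp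

lemma sum_abs_lambdaSquared_le (w : ℕ → ℝ) (n : ℕ) :
    ∑ d ∈ n.divisors, |lambdaSquared w d| ≤ (∑ d ∈ n.divisors, |w d|) ^ 2 := by
  have habs : ∀ d ∈ n.divisors, |lambdaSquared w d| ≤
      ∑ d₁ ∈ n.divisors, ∑ d₂ ∈ n.divisors, if d = d₁.lcm d₂ then |w d₁| * |w d₂| else 0 :=
    fun d hd => by
      have hsub : d.divisors ⊆ n.divisors := Nat.divisors_subset_of_dvd
        (Nat.ne_zero_of_mem_divisors hd) (Nat.dvd_of_mem_divisors hd)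
      have hnonneg : ∀ d₁ d₂, 0 ≤ if d = d₁.lcm d₂ then |w d₁| * |w d₂| else 0 :=
        fun d₁ d₂ => by split_ifs <;> positivity
      calc |lambdaSquared w d|
          ≤ ∑ d₁ ∈ d.divisors, ∑ d₂ ∈ d.divisors,
              |if d = d₁.lcm d₂ then w d₁ * w d₂ else 0| :=
            (abs_sum_le_sum_abs _ _).trans (sum_le_sum fun _ _ => abs_sum_le_sum_abs _ _)
        _ = ∑ d₁ ∈ d.divisors, ∑ d₂ ∈ d.divisors,
              if d = d₁.lcm d₂ then |w d₁| * |w d₂| else 0 := by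
            simp only [apply_ite abs, abs_mul, abs_zero]
        _ ≤ _ := (sum_le_sum fun d₁ _ => sum_le_sum_of_subset_of_nonneg hsub
              fun d₂ _ _ => hnonneg d₁ d₂).trans
            (sum_le_sum_of_subset_of_nonneg hsub fun d₁ _ _ => sum_nonneg fun d₂ _ => hnonneg d₁ d₂)
  refine (sum_le_sum habs).trans ?_
  rw [sq, sum_mul_sum, sum_comm]
  refine sum_le_sum fun d₁ _ => ?_
  rw [sum_comm]
  refine sum_le_sum fun d₂ _ => ?_
  rw [sum_ite_eq']
  split_ifs
  · rfl
  · positivity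

lemma errSum_lambdaSquared_selbergWeight_le (hz : 1 ≤ z)
    (hrem : ∀ d, d ∣ s.prodPrimes → |s.rem d| ≤ 1) :
    s.errSum (lambdaSquared (selbergWeight s z)) ≤ (∑ d ∈ selbergModuli s z, (s.nu d)⁻¹) ^ 2 := by
  have hsupport : ∑ d ∈ s.prodPrimes.divisors, |selbergWeight s z d| =
      ∑ d ∈ selbergModuli s z, |selbergWeight s z d| :=
    (sum_subset (filter_subset _ _) fun d hd hd' => by
      rw [selbergWeight_eq_zero hd' (Nat.dvd_of_mem_divisors hd), abs_zero]).symm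
  calc s.errSum (lambdaSquared (selbergWeight s z))
      ≤ ∑ d ∈ s.prodPrimes.divisors, |lambdaSquared (selbergWeight s z) d| :=
        sum_le_sum fun d hd => mul_le_of_le_one_right (abs_nonneg _)
          (hrem d (Nat.dvd_of_mem_divisors hd))
    _ ≤ (∑ d ∈ s.prodPrimes.divisors, |selbergWeight s z d|) ^ 2 := sum_abs_lambdaSquared_le _ _
    _ ≤ (∑ d ∈ selbergModuli s z, (s.nu d)⁻¹) ^ 2 := by
        rw [hsupport]
        gcongr with d hd
        exact abs_selbergWeight_le hz (mem_selbergModuli.1 hd).1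

theorem siftedSum_le_div_selbergSum_add (hz : 1 ≤ z)
    (hrem : ∀ d, d ∣ s.prodPrimes → |s.rem d| ≤ 1) :
    s.siftedSum ≤ s.totalMass / selbergSum s z + (∑ d ∈ selbergModuli s z, (s.nu d)⁻¹) ^ 2 := by
  have hsieve := s.siftedSum_le_mainSum_errSum_of_upperMoebius _
    (upperMoebius_lambdaSquared (selbergWeight s z) (selbergWeight_one hz))
  rw [mainSum_lambdaSquared_selbergWeight hz, ← div_eq_mul_inv] at hsieve
  exact hsieve.trans (by gcongr; exact errSum_lambdaSquared_selbergWeight_le hz hrem)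

end SelbergSieve

section SieveArithmetic

open Finset Nat

lemma prod_one_sub_inv_inv_eq_div_totient {m : ℕ} (hm : m ≠ 0) :
    ∏ p ∈ m.primeFactors, (1 - (p : ℝ)⁻¹)⁻¹ = m / (φ m : ℝ) := by
  have htotient : (φ m : ℝ) = m * ∏ p ∈ m.primeFactors, (1 - (p : ℝ)⁻¹) := by
    have hrat := congrArg (Rat.cast (K := ℝ)) (totient_eq_mul_prod_factors m)
    push_cast at hrat
    exact hrat
  have hm' : (m : ℝ) ≠ 0 := by exact_mod_cast hm
  rw [htotient, prod_inv_distrib]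
  field_simp

lemma sum_inv_le_div_totient {m : ℕ} (hm : m ≠ 0) {T : Finset ℕ}
    (hT : ∀ n ∈ T, n ≠ 0 ∧ n.primeFactors ⊆ m.primeFactors) :
    ∑ n ∈ T, (n : ℝ)⁻¹ ≤ m / (φ m : ℝ) := by
  let f : ℕ →* ℝ := ⟨⟨fun n => (n : ℝ)⁻¹, by simp⟩, fun n k => by push_cast; exact mul_inv _ _⟩
  have hf : ∀ {p : ℕ}, p.Prime → ‖f p‖ < 1 := fun {p} hp => by
    have hp1 : (1 : ℝ) < p := by exact_mod_cast hp.one_lt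
    exact (Real.norm_of_nonneg (inv_nonneg.2 p.cast_nonneg)).trans_lt <|
      inv_lt_one_of_one_lt₀ hp1
  obtain ⟨-, hsum⟩ :=
    EulerProduct.summable_and_hasSum_factoredNumbers_prod_filter_prime_geometric hf m.primeFactors
  rw [filter_true_of_mem fun p => prime_of_mem_primeFactors] at hsum
  have hmem : ∀ n ∈ T, n ∈ factoredNumbers m.primeFactors := fun n hn =>
    mem_factoredNumbers_of_primeFactors_subset (hT n hn).1 (hT n hn).2
  calc ∑ n ∈ T, (n : ℝ)⁻¹ = ∑ n ∈ T.subtype (· ∈ factoredNumbers m.primeFactors), f n :=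
        (sum_subtype_of_mem f hmem).symm
    _ ≤ ∏ p ∈ m.primeFactors, (1 - f p)⁻¹ :=
        sum_le_hasSum _ (fun n _ => inv_nonneg.2 (Nat.cast_nonneg _)) hsum
    _ = m / (φ m : ℝ) := prod_one_sub_inv_inv_eq_div_totient hm

/-- The product of the prime factors of `n` that do not divide `d`: the radical of the largest
divisor of `n` coprime to `d`. -/
def coprimeRadical (d n : ℕ) : ℕ := ∏ p ∈ n.primeFactors with ¬ p ∣ d, p

lemma coprimeRadical_dvd (d n : ℕ) : coprimeRadical d n ∣ n :=
  (prod_dvd_prod_of_subset _ _ _ (filter_subset _ _)).trans (prod_primeFactors_dvd n)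

lemma squarefree_prod_of_prime {s : Finset ℕ} (hs : ∀ p ∈ s, p.Prime) :
    Squarefree (∏ p ∈ s, p) :=
  squarefree_prod_of_pairwise_isCoprime
    (fun p hp q hq hpq => coprime_iff_isRelPrime.1 ((coprime_primes (hs p hp) (hs q hq)).2 hpq))
    fun p hp => (hs p hp).squarefree

lemma squarefree_coprimeRadical (d n : ℕ) : Squarefree (coprimeRadical d n) :=
  squarefree_prod_of_prime fun _ hp => prime_of_mem_primeFactors (mem_filter.1 hp).1

lemma coprime_coprimeRadical (d n : ℕ) : Coprime (coprimeRadical d n) d :=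
  Coprime.prod_left fun p hp => by
    rw [mem_filter] at hp
    exact (prime_of_mem_primeFactors hp.1).coprime_iff_not_dvd.2 hp.2

lemma primeFactors_subset_primeFactors_coprimeRadical_mul {d n : ℕ} (hd : d ≠ 0) :
    n.primeFactors ⊆ (coprimeRadical d n * d).primeFactors := fun p hp => by
  have hp' := prime_of_mem_primeFactors hp
  refine mem_primeFactors.2
    ⟨hp', ?_, mul_ne_zero (squarefree_coprimeRadical d n).ne_zero hd⟩
  by_cases hpd : p ∣ d
  · exact hpd.mul_left _
  · exact (dvd_prod_of_mem _ (mem_filter.2 ⟨hp, hpd⟩)).mul_right _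

lemma sum_inv_le_of_coprimeRadical_eq {d k : ℕ} (hd : d ≠ 0) {T : Finset ℕ}
    (hT : ∀ n ∈ T, n ≠ 0 ∧ coprimeRadical d n = k) :
    ∑ n ∈ T, (n : ℝ)⁻¹ ≤ d / (φ d : ℝ) * (φ k : ℝ)⁻¹ := by
  rcases T.eq_empty_or_nonempty with rfl | ⟨n₀, hn₀⟩
  · rw [sum_empty]; positivity
  have hk0 : k ≠ 0 := (hT n₀ hn₀).2 ▸ (squarefree_coprimeRadical d n₀).ne_zero
  have hkd : Coprime k d := (hT n₀ hn₀).2 ▸ coprime_coprimeRadical d n₀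
  have hdvd : ∀ n ∈ T, k ∣ n := fun n hn => (hT n hn).2 ▸ coprimeRadical_dvd d n
  have hinj : Set.InjOn (· / k) (T : Set ℕ) := fun n hn m hm h =>
    (Nat.div_left_inj (hdvd n hn) (hdvd m hm)).1 h
  have hquot : ∑ n ∈ T.image (· / k), (n : ℝ)⁻¹ ≤ (k * d : ℕ) / (φ (k * d) : ℝ) := by
    refine sum_inv_le_div_totient (mul_ne_zero hk0 hd) fun m hm => ?_
    obtain ⟨n, hn, rfl⟩ := mem_image.1 hm
    have hnk := Nat.div_dvd_of_dvd (hdvd n hn)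
    refine ⟨ne_zero_of_dvd_ne_zero (hT n hn).1 hnk, (primeFactors_mono hnk (hT n hn).1).trans ?_⟩
    exact (hT n hn).2 ▸ primeFactors_subset_primeFactors_coprimeRadical_mul hd
  have hk : (0 : ℝ) < k := by exact_mod_cast pos_of_ne_zero hk0
  calc ∑ n ∈ T, (n : ℝ)⁻¹ = (k : ℝ)⁻¹ * ∑ n ∈ T.image (· / k), (n : ℝ)⁻¹ := by
        rw [sum_image hinj, mul_sum]
        refine sum_congr rfl fun n hn => ?_
        rw [Nat.cast_div (hdvd n hn) hk.ne', inv_div]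
        field_simp
    _ ≤ (k : ℝ)⁻¹ * ((k * d : ℕ) / (φ (k * d) : ℝ)) := by gcongr
    _ = d / (φ d : ℝ) * (φ k : ℝ)⁻¹ := by
        rw [totient_mul hkd]
        push_cast
        field_simp

lemma harmonic_le_mul_sum_inv_totient {d : ℕ} (hd : d ≠ 0) (z : ℕ) :
    ∑ n ∈ Icc 1 z, (n : ℝ)⁻¹ ≤
      d / (φ d : ℝ) * ∑ k ∈ Icc 1 z with Squarefree k ∧ Coprime k d, (φ k : ℝ)⁻¹ := by
  have hmaps : ∀ n ∈ Icc 1 z, coprimeRadical d n ∈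
      {k ∈ Icc 1 z | Squarefree k ∧ Coprime k d} := fun n hn => by
    rw [mem_Icc] at hn
    have hdvd := coprimeRadical_dvd d n
    have hpos := Nat.pos_of_dvd_of_pos hdvd hn.1
    exact mem_filter.2 ⟨mem_Icc.2 ⟨hpos, (le_of_dvd hn.1 hdvd).trans hn.2⟩,
      squarefree_coprimeRadical d n, coprime_coprimeRadical d n⟩
  rw [← sum_fiberwise_of_maps_to hmaps, mul_sum]
  refine sum_le_sum fun k _ => sum_inv_le_of_coprimeRadical_eq hd fun n hn => ?_
  rw [mem_filter, mem_Icc] at hn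
  exact ⟨by lia, hn.2⟩

lemma abs_card_Ioc_modEq_sub_div_le {r : ℕ} (hr : 0 < r) (N v : ℕ) :
    |(#{n ∈ Ioc 0 N | n ≡ v [MOD r]} : ℝ) - N / r| ≤ 1 := by
  have hcard := Nat.Ioc_filter_modEq_card 0 N hr v
  have hmono : ⌊((0 : ℕ) - (v : ℚ)) / r⌋ ≤ ⌊((N : ℚ) - v) / r⌋ := by
    apply Int.floor_le_floor
    gcongr
    simp
  rw [max_eq_left (by linarith)] at hcard
  have hcard' : (#{n ∈ Ioc 0 N | n ≡ v [MOD r]} : ℚ) =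
      ⌊((N : ℚ) - v) / r⌋ - ⌊((0 : ℕ) - (v : ℚ)) / r⌋ := by exact_mod_cast hcard
  have hrat : |(#{n ∈ Ioc 0 N | n ≡ v [MOD r]} : ℚ) - N / r| ≤ 1 := by
    have hN : ((N : ℚ) - v) / r - ((0 : ℕ) - (v : ℚ)) / r = N / r := by push_cast; ring
    rw [hcard', abs_le]
    constructor <;> linarith [Int.floor_le (((N : ℚ) - v) / r),
      Int.lt_floor_add_one (((N : ℚ) - v) / r), Int.floor_le (((0 : ℕ) - (v : ℚ)) / r),
      Int.lt_floor_add_one (((0 : ℕ) - (v : ℚ)) / r)]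
  have hreal : ((|(#{n ∈ Ioc 0 N | n ≡ v [MOD r]} : ℚ) - N / r| : ℚ) : ℝ) ≤ (1 : ℚ) :=
    Rat.cast_le.2 hrat
  push_cast at hreal
  exact hreal

lemma abs_card_modEq_and_dvd_sub_div_le {d l : ℕ} (hd : 0 < d) (hl : 0 < l) (hdl : Coprime d l)
    (N a : ℕ) :
    |(#{n ∈ Ioc 0 N | n ≡ a [MOD d] ∧ l ∣ n} : ℝ) - N / (d * l)| ≤ 1 := by
  obtain ⟨v, hvd, hvl⟩ := chineseRemainder hdl a 0
  have hfilter : {n ∈ Ioc 0 N | n ≡ a [MOD d] ∧ l ∣ n} = {n ∈ Ioc 0 N | n ≡ v [MOD d * l]} := by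
    refine filter_congr fun n _ => ?_
    rw [← modEq_and_modEq_iff_modEq_mul hdl, ← modEq_zero_iff_dvd]
    exact and_congr ⟨fun h => h.trans hvd.symm, fun h => h.trans hvd⟩
      ⟨fun h => h.trans hvl.symm, fun h => h.trans hvl⟩
  rw [hfilter]
  exact_mod_cast abs_card_Ioc_modEq_sub_div_le (Nat.mul_pos hd hl) N v

end SieveArithmetic

section BrunTitchmarsh

open BoundingSieve Finset Nat

/-- The sifting of the `n ≤ N` in a residue class `a` modulo `d` by the primes up to `z` that do
not divide `d`. -/
noncomputable def progressionSieve (d a z N : ℕ) : BoundingSieve where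
  support := {n ∈ Ioc 0 N | n ≡ a [MOD d]}
  prodPrimes := ∏ p ∈ primesLE z with ¬ p ∣ d, p
  prodPrimes_squarefree :=
    squarefree_prod_of_prime fun _ hp => prime_of_mem_primesLE (mem_filter.1 hp).1
  weights _ := 1
  weights_nonneg _ := zero_le_one
  totalMass := N / d
  nu := ⟨fun n => (n : ℝ)⁻¹, by simp⟩
  nu_mult := ⟨by simp, fun _ => by simp [mul_comm]⟩
  nu_pos_of_prime p hp _ := by
    have := hp.pos
    simp only [ArithmeticFunction.coe_mk]
    positivity
  nu_lt_one_of_prime p hp _ := by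
    simp only [ArithmeticFunction.coe_mk]
    exact inv_lt_one_of_one_lt₀ (by exact_mod_cast hp.one_lt)

variable {d a z N : ℕ}

lemma coprime_of_dvd_prodPrimes_progressionSieve {l : ℕ}
    (hl : l ∣ (progressionSieve d a z N).prodPrimes) : Coprime l d :=
  Coprime.coprime_dvd_left hl <| Coprime.prod_left (s := id)
    (t := {p ∈ primesLE z | ¬ p ∣ d}) fun p hp => by
      rw [mem_filter] at hp
      exact (prime_of_mem_primesLE hp.1).coprime_iff_not_dvd.2 hp.2

lemma selbergModuli_progressionSieve :
    selbergModuli (progressionSieve d a z N) z = {k ∈ Icc 1 z | Squarefree k ∧ Coprime k d} := by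
  ext l
  rw [mem_selbergModuli, mem_filter, mem_Icc]
  constructor
  · rintro ⟨hl, hlz⟩
    have hsq := squarefree_of_dvd_prodPrimes hl
    exact ⟨⟨hsq.ne_zero.bot_lt, hlz⟩, hsq, coprime_of_dvd_prodPrimes_progressionSieve hl⟩
  · rintro ⟨⟨hl1, hlz⟩, hsq, hld⟩
    refine ⟨?_, hlz⟩
    rw [← prod_primeFactors_of_squarefree hsq]
    refine prod_dvd_prod_of_subset l.primeFactors {p ∈ primesLE z | ¬ p ∣ d} (fun p => p)
      fun p hp => ?_
    have hp' := prime_of_mem_primeFactors hp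
    have hpl := dvd_of_mem_primeFactors hp
    exact mem_filter.2 ⟨mem_primesLE.2 ⟨(le_of_dvd hl1 hpl).trans hlz, hp'⟩,
      hp'.coprime_iff_not_dvd.1 (hld.coprime_dvd_left hpl)⟩

lemma selbergTerms_progressionSieve {l : ℕ} (hl : l ≠ 0) :
    (progressionSieve d a z N).selbergTerms l = (φ l : ℝ)⁻¹ := by
  have hl' : (l : ℝ) ≠ 0 := by exact_mod_cast hl
  rw [selbergTerms_apply]
  change (l : ℝ)⁻¹ * ∏ p ∈ l.primeFactors, (1 - (p : ℝ)⁻¹)⁻¹ = _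
  rw [prod_one_sub_inv_inv_eq_div_totient hl]
  field_simp

lemma selbergSum_progressionSieve :
    selbergSum (progressionSieve d a z N) z =
      ∑ k ∈ Icc 1 z with Squarefree k ∧ Coprime k d, (φ k : ℝ)⁻¹ := by
  rw [selbergSum, selbergModuli_progressionSieve]
  exact sum_congr rfl fun k hk => selbergTerms_progressionSieve (mem_filter.1 hk).2.1.ne_zero

lemma abs_rem_progressionSieve_le (hd : 0 < d) {l : ℕ}
    (hl : l ∣ (progressionSieve d a z N).prodPrimes) :
    |(progressionSieve d a z N).rem l| ≤ 1 := by
  have hl0 : 0 < l := (squarefree_of_dvd_prodPrimes hl).ne_zero.bot_lt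
  have hrem : (progressionSieve d a z N).rem l =
      #{n ∈ Ioc 0 N | n ≡ a [MOD d] ∧ l ∣ n} - N / (d * l) := by
    rw [rem, multSum, ← filter_filter, card_filter]
    push_cast
    change _ - (l : ℝ)⁻¹ * (N / d) = _
    congr 1
    rw [mul_comm, ← div_eq_mul_inv, div_div]
  rw [hrem]
  exact abs_card_modEq_and_dvd_sub_div_le hd hl0
    (coprime_of_dvd_prodPrimes_progressionSieve hl).symm N a

lemma card_primesLE_modEq_le_siftedSum_add :
    (#{p ∈ primesLE N | p ≡ a [MOD d]} : ℝ) ≤ (progressionSieve d a z N).siftedSum + z := by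
  set s := progressionSieve d a z N
  have hsub : {p ∈ primesLE N | p ≡ a [MOD d]} ⊆
      {n ∈ s.support | Coprime s.prodPrimes n} ∪ Icc 1 z := fun p hp => by
    obtain ⟨⟨hpN, hp'⟩, hpa⟩ := by simpa only [mem_filter, mem_primesLE] using hp
    rw [mem_union, mem_Icc]
    refine (le_or_gt p z).symm.imp (fun hzp => ?_) fun hpz => ⟨hp'.one_le, hpz⟩
    refine mem_filter.2 ⟨mem_filter.2 ⟨mem_Ioc.2 ⟨hp'.pos, hpN⟩, hpa⟩, ?_⟩
    refine Coprime.prod_left (s := id) (t := {q ∈ primesLE z | ¬ q ∣ d}) fun q hq => ?_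
    obtain ⟨hqz, hq'⟩ := mem_primesLE.1 (mem_filter.1 hq).1
    exact (coprime_primes hq' hp').2 (hqz.trans_lt hzp).ne
  have hsifted : s.siftedSum = #{n ∈ s.support | Coprime s.prodPrimes n} := by
    rw [siftedSum, ← sum_filter, card_eq_sum_ones]
    push_cast
    rfl
  have hcard := (card_le_card hsub).trans (card_union_le _ _)
  rw [Nat.card_Icc, Nat.add_sub_cancel] at hcard
  rw [hsifted]
  exact_mod_cast hcard

lemma card_primesLE_modEq_le_selberg (hd : 0 < d) (hz : 1 ≤ z) :
    (#{p ∈ primesLE N | p ≡ a [MOD d]} : ℝ) ≤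
      N / d / (∑ k ∈ Icc 1 z with Squarefree k ∧ Coprime k d, (φ k : ℝ)⁻¹) + z ^ 4 + z := by
  set s := progressionSieve d a z N
  have hsifted := siftedSum_le_div_selbergSum_add (s := s) hz
    fun _ => abs_rem_progressionSieve_le hd
  have hmoduli : ∑ l ∈ selbergModuli s z, (s.nu l)⁻¹ ≤ (z : ℝ) ^ 2 := by
    calc ∑ l ∈ selbergModuli s z, (s.nu l)⁻¹ ≤ ∑ _ ∈ selbergModuli s z, (z : ℝ) :=
          sum_le_sum fun l hl => by
            change ((l : ℝ)⁻¹)⁻¹ ≤ z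
            rw [inv_inv]
            exact_mod_cast (mem_selbergModuli.1 hl).2
      _ = #(selbergModuli s z) * (z : ℝ) := by rw [sum_const, nsmul_eq_mul]
      _ ≤ z * z := by
          gcongr
          rw [selbergModuli_progressionSieve]
          exact (card_filter_le _ _).trans (by simp)
      _ = (z : ℝ) ^ 2 := (sq _).symm
  have herr : (∑ l ∈ selbergModuli s z, (s.nu l)⁻¹) ^ 2 ≤ (z : ℝ) ^ 4 := by
    rw [show (z : ℝ) ^ 4 = (z ^ 2) ^ 2 by ring]
    have hnonneg : 0 ≤ ∑ l ∈ selbergModuli s z, (s.nu l)⁻¹ := sum_nonneg fun _ hl =>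
      (inv_pos.2 (nu_pos_of_dvd_prodPrimes (mem_selbergModuli.1 hl).1)).le
    gcongr
  rw [selbergSum_progressionSieve] at hsifted
  change _ ≤ (N / d : ℝ) / _ + _ at hsifted
  linarith [card_primesLE_modEq_le_siftedSum_add (d := d) (a := a) (z := z) (N := N)]

lemma card_primesLE_modEq_le_div_log (hd : 0 < d) (hz : 1 ≤ z) :
    (#{p ∈ primesLE N | p ≡ a [MOD d]} : ℝ) ≤
      N / (φ d * Real.log (z + 1)) + z ^ 4 + z := by
  set S := ∑ k ∈ Icc 1 z with Squarefree k ∧ Coprime k d, (φ k : ℝ)⁻¹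
  have hz' : (1 : ℝ) ≤ z := by exact_mod_cast hz
  have hlog : 0 < Real.log (z + 1) := Real.log_pos (by linarith)
  have hφ : (0 : ℝ) < φ d := by exact_mod_cast totient_pos.2 hd
  have hharmonic : Real.log (z + 1) ≤ d / (φ d : ℝ) * S := by
    have h := log_add_one_le_harmonic z
    rw [harmonic_eq_sum_Icc] at h
    push_cast at h
    exact h.trans (harmonic_le_mul_sum_inv_totient hd.ne' z)
  have hmain : N / d / S ≤ N / (φ d * Real.log (z + 1)) := by
    rw [div_div]
    refine div_le_div_of_nonneg_left N.cast_nonneg (by positivity) ?_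
    rw [div_mul_eq_mul_div, le_div_iff₀ hφ] at hharmonic
    linarith
  linarith [card_primesLE_modEq_le_selberg (N := N) (a := a) hd hz]

lemma eventually_mul_rpow_le_mul_div_log {θ : ℝ} (hθ : θ < 1) (c : ℝ) {e : ℝ} (he : 0 < e) :
    ∀ᶠ x : ℝ in atTop, c * x ^ θ ≤ e * (x / Real.log x) := by
  have hlog : (fun x => c * Real.log x) =o[atTop] fun x : ℝ => x ^ (1 - θ) :=
    (isLittleO_log_rpow_atTop (by linarith)).const_mul_left c
  filter_upwards [hlog.bound he, eventually_gt_atTop 1] with x hx hx1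
  have hx0 : 0 < x := by linarith
  rw [Real.norm_of_nonneg (Real.rpow_nonneg hx0.le _)] at hx
  rw [← mul_div_assoc, le_div_iff₀ (Real.log_pos hx1)]
  calc c * x ^ θ * Real.log x = c * Real.log x * x ^ θ := by ring
    _ ≤ e * x ^ (1 - θ) * x ^ θ := by
        gcongr ?_ * _
        exact (le_abs_self _).trans hx
    _ = e * x := by
        rw [mul_assoc, ← Real.rpow_add hx0, sub_add_cancel, Real.rpow_one]

/-- The Brun–Titchmarsh theorem, without its explicit constant. -/
theorem exists_card_primes_modEq_le {θ : ℝ} (hθ : θ < 1) :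
    ∃ C : ℝ, 0 < C ∧ ∀ᶠ x : ℝ in atTop, ∀ d a : ℕ, 0 < d → (d : ℝ) ≤ x ^ θ →
      (#{p ∈ primesLE ⌊x⌋₊ | p ≡ a [MOD d]} : ℝ) ≤ C * (x / Real.log x) / φ d := by
  set κ := (1 - θ) / 8 with hκ
  have hκ0 : 0 < κ := by rw [hκ]; linarith
  refine ⟨κ⁻¹ + 1, by positivity, ?_⟩
  filter_upwards [eventually_mul_rpow_le_mul_div_log (θ := 4 * κ + θ) (by linarith) 2 one_pos,
    eventually_ge_atTop 2] with x hpow hx d a hd hdx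
  have hx0 : 0 < x := by linarith
  have hlog : 0 < Real.log x := Real.log_pos (by linarith)
  have hφ : (0 : ℝ) < φ d := by exact_mod_cast totient_pos.2 hd
  have hφx : (φ d : ℝ) ≤ x ^ θ := le_trans (by exact_mod_cast totient_le d) hdx
  set z := ⌊x ^ κ⌋₊
  have hxκ : 1 ≤ x ^ κ := Real.one_le_rpow (by linarith) hκ0.le
  have hzx : (z : ℝ) ≤ x ^ κ := Nat.floor_le (by linarith)
  have hlogz : κ * Real.log x ≤ Real.log (z + 1) := by
    rw [← Real.log_rpow hx0]
    exact Real.log_le_log (by linarith) (Nat.lt_floor_add_one _).le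
  have hmain : ⌊x⌋₊ / (φ d * Real.log (z + 1)) ≤ κ⁻¹ * (x / Real.log x) / φ d := by
    calc (⌊x⌋₊ / (φ d * Real.log (z + 1)) : ℝ) ≤ x / (φ d * (κ * Real.log x)) := by
          gcongr
          exact Nat.floor_le hx0.le
      _ = κ⁻¹ * (x / Real.log x) / φ d := by field_simp
  have herr : (z : ℝ) ^ 4 + z ≤ x / Real.log x / φ d := by
    have hz4 : (z : ℝ) ^ 4 ≤ (x ^ κ) ^ 4 := by gcongr
    rw [le_div_iff₀ hφ]
    calc ((z : ℝ) ^ 4 + z) * φ d ≤ (2 * (x ^ κ) ^ 4) * x ^ θ := by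
          gcongr
          linarith [le_self_pow₀ hxκ (n := 4) (by norm_num)]
      _ = 2 * x ^ (4 * κ + θ) := by
          rw [Real.rpow_add hx0, mul_comm 4 κ, Real.rpow_mul hx0.le]
          norm_cast
          ring
      _ ≤ x / Real.log x := by linarith
  calc _ ≤ _ := card_primesLE_modEq_le_div_log hd (Nat.le_floor (by simpa using hxκ))
    _ ≤ κ⁻¹ * (x / Real.log x) / φ d + x / Real.log x / φ d := by linarith
    _ = (κ⁻¹ + 1) * (x / Real.log x) / φ d := by ring

end BrunTitchmarsh

section Mertens

open Finset Nat

lemma sum_Ioc_mul_le_of_sum_le {u v : ℕ} (huv : u ≤ v) {c : ℝ} {w f : ℕ → ℝ}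
    (hw0 : 0 ≤ ∑ n ∈ Ioc 0 u, w n) (hw : ∀ n, ∑ k ∈ Ioc 0 n, w k ≤ c * n)
    (hf : AntitoneOn f (Set.Ioi u)) (hf0 : ∀ n, u < n → 0 ≤ f n) :
    ∑ n ∈ Ioc u v, w n * f n ≤ c * (∑ n ∈ Ioc u v, f n + u * f (u + 1)) := by
  suffices habel : ∑ n ∈ Ioc u v, w n * f n + (c * v - ∑ n ∈ Ioc 0 v, w n) * f (v + 1) ≤
      c * (∑ n ∈ Ioc u v, f n + u * f (u + 1)) by
    have := mul_nonneg (sub_nonneg.2 (hw v)) (hf0 (v + 1) (by lia))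
    linarith
  induction v, huv using Nat.le_induction with
  | base =>
    have := mul_nonneg hw0 (hf0 (u + 1) (by lia))
    simp only [Ioc_self, sum_empty]
    linarith
  | succ v huv ih =>
    have hstep := mul_le_mul_of_nonneg_left
      (hf (show u < v + 1 by lia) (show u < v + 1 + 1 by lia) (v + 1).le_succ)
      (sub_nonneg.2 (hw (v + 1)))
    rw [sum_Ioc_succ_top v.zero_le] at hstep ⊢
    rw [sum_Ioc_succ_top huv, sum_Ioc_succ_top huv]
    push_cast at hstep ⊢
    linarith

lemma sum_Ioc_filter_prime_log_mul_le {u v : ℕ} (huv : u ≤ v) {f : ℕ → ℝ}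
    (hf : AntitoneOn f (Set.Ioi u)) (hf0 : ∀ n, u < n → 0 ≤ f n) :
    ∑ q ∈ Ioc u v with q.Prime, Real.log q * f q ≤
      Real.log 4 * (∑ n ∈ Ioc u v, f n + u * f (u + 1)) := by
  have htheta : ∀ n : ℕ, ∑ k ∈ Ioc 0 n, (if k.Prime then Real.log k else 0) =
      Chebyshev.theta n := fun n => by
    rw [Chebyshev.theta, Nat.floor_natCast, sum_filter]
  have h := sum_Ioc_mul_le_of_sum_le (c := Real.log 4)
    (w := fun k => if k.Prime then Real.log k else 0) huv
    (by rw [htheta]; exact Chebyshev.theta_nonneg u)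
    (fun n => by rw [htheta]; exact Chebyshev.theta_le_log4_mul_x n.cast_nonneg) hf hf0
  simpa only [sum_filter, ite_mul, zero_mul] using h

lemma sum_Ioc_inv_le_log_sub_log {u v : ℕ} (hu : 1 ≤ u) (huv : u ≤ v) :
    ∑ n ∈ Ioc u v, (n : ℝ)⁻¹ ≤ Real.log v - Real.log u := by
  induction v, huv using Nat.le_induction with
  | base => simp
  | succ v huv ih =>
    have hv : (0 : ℝ) < v := by exact_mod_cast (by lia : 0 < v)
    have hlog := Real.one_sub_inv_le_log_of_pos (x := ((v + 1 : ℕ) : ℝ) / v) (by positivity)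
    have hdiff : 1 - (((v + 1 : ℕ) : ℝ) / v)⁻¹ = ((v + 1 : ℕ) : ℝ)⁻¹ := by
      push_cast
      field_simp
      ring
    rw [Real.log_div (by positivity) hv.ne', hdiff] at hlog
    rw [sum_Ioc_succ_top huv]
    linarith

lemma sum_Ioc_filter_prime_log_div_le {u v : ℕ} (hu : 1 ≤ u) (huv : u ≤ v) :
    ∑ q ∈ Ioc u v with q.Prime, Real.log q / q ≤
      Real.log 4 * (Real.log v - Real.log u + 1) := by
  have habel := sum_Ioc_filter_prime_log_mul_le (f := fun n => (n : ℝ)⁻¹) huv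
    (fun m hm n _ hmn => by
      have : (0 : ℝ) < m := by exact_mod_cast (Nat.zero_le u).trans_lt hm
      simp only
      gcongr)
    (fun _ _ => by positivity)
  have hboundary : (u : ℝ) * ((u + 1 : ℕ) : ℝ)⁻¹ ≤ 1 := by
    rw [← div_eq_mul_inv]
    exact div_le_one_of_le₀ (by push_cast; linarith) (by positivity)
  simp only [← div_eq_mul_inv] at habel hboundary
  exact habel.trans <| mul_le_mul_of_nonneg_left
    (add_le_add (sum_Ioc_inv_le_log_sub_log hu huv) hboundary) (Real.log_nonneg (by norm_num))

lemma exists_nat_ge_half_lt_primes (a : ℝ) :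
    ∃ u : ℕ, 1 ≤ u ∧ a / 2 ≤ u ∧ ∀ q : ℕ, q.Prime → a ≤ q → u < q := by
  refine ⟨max 1 (⌈a⌉₊ - 1), le_max_left _ _, ?_, fun q hq haq => ?_⟩
  · rcases le_or_gt a 2 with ha | ha
    · exact le_trans (by linarith) (Nat.one_le_cast.2 (le_max_left _ _))
    · have hceil : 2 < ⌈a⌉₊ := Nat.lt_ceil.2 (by exact_mod_cast ha)
      refine le_trans ?_ (Nat.cast_le.2 (le_max_right _ _))
      rw [Nat.cast_sub (by lia)]
      push_cast
      linarith [Nat.le_ceil a]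
  · have := Nat.ceil_le.2 haq
    have := hq.two_le
    lia

lemma sum_log_div_le_of_mem_Icc {a b : ℝ} (ha : 0 < a) (hab : a ≤ b) {s : Finset ℕ}
    (hs : ∀ q ∈ s, q.Prime ∧ a ≤ q ∧ (q : ℝ) ≤ b) :
    ∑ q ∈ s, Real.log q / q ≤ Real.log 4 * (Real.log (b / a) + 2) := by
  have hlog4 : 0 ≤ Real.log 4 := Real.log_nonneg (by norm_num)
  rcases s.eq_empty_or_nonempty with rfl | ⟨q₀, hq₀⟩
  · have : 0 ≤ Real.log (b / a) := Real.log_nonneg ((one_le_div ha).2 hab)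
    rw [sum_empty]
    positivity
  obtain ⟨u, hu1, hau, hu⟩ := exists_nat_ge_half_lt_primes a
  have hsub : s ⊆ {q ∈ Ioc u ⌊b⌋₊ | q.Prime} := fun q hq => by
    obtain ⟨hq', haq, hqb⟩ := hs q hq
    exact mem_filter.2 ⟨mem_Ioc.2 ⟨hu q hq' haq, Nat.le_floor hqb⟩, hq'⟩
  have hub : u ≤ ⌊b⌋₊ := by
    have := mem_Ioc.1 (mem_filter.1 (hsub hq₀)).1
    lia
  have hb : 0 < b := ha.trans_le hab
  have hlogb : Real.log ⌊b⌋₊ ≤ Real.log b :=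
    Real.log_le_log (by exact_mod_cast (by lia : 0 < ⌊b⌋₊)) (Nat.floor_le hb.le)
  have hlogu : Real.log a - Real.log 2 ≤ Real.log u := by
    rw [← Real.log_div ha.ne' two_ne_zero]
    exact Real.log_le_log (by positivity) hau
  calc ∑ q ∈ s, Real.log q / q ≤ ∑ q ∈ Ioc u ⌊b⌋₊ with q.Prime, Real.log q / q :=
        sum_le_sum_of_subset_of_nonneg hsub fun q _ _ =>
          div_nonneg (Real.log_natCast_nonneg q) q.cast_nonneg
    _ ≤ Real.log 4 * (Real.log ⌊b⌋₊ - Real.log u + 1) := sum_Ioc_filter_prime_log_div_le hu1 hub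
    _ ≤ Real.log 4 * (Real.log (b / a) + 2) := by
        rw [Real.log_div hb.ne' ha.ne']
        exact mul_le_mul_of_nonneg_left (by linarith [Real.log_two_lt_d9]) hlog4

lemma inv_mul_log_le_log_log_sub {t : ℝ} (ht : 2 < t) :
    (t * Real.log (t + 1))⁻¹ ≤ Real.log (Real.log t) - Real.log (Real.log (t - 1)) := by
  have hlogpred : 0 < Real.log (t - 1) := Real.log_pos (by linarith)
  have hlog : 0 < Real.log t := Real.log_pos (by linarith)
  have hinv : t⁻¹ ≤ Real.log t - Real.log (t - 1) := by
    have h := Real.one_sub_inv_le_log_of_pos (x := t / (t - 1))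
      (div_pos (by linarith) (by linarith))
    rw [Real.log_div (by linarith) (by linarith), inv_div] at h
    refine le_trans (le_of_eq ?_) h
    field_simp
    ring
  calc (t * Real.log (t + 1))⁻¹ ≤ (t * Real.log t)⁻¹ := by gcongr; linarith
    _ = t⁻¹ / Real.log t := by rw [mul_inv, div_eq_mul_inv]
    _ ≤ (Real.log t - Real.log (t - 1)) / Real.log t := by gcongr
    _ = 1 - (Real.log t / Real.log (t - 1))⁻¹ := by field_simp
    _ ≤ Real.log (Real.log t / Real.log (t - 1)) :=
        Real.one_sub_inv_le_log_of_pos (div_pos hlog hlogpred)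
    _ = Real.log (Real.log t) - Real.log (Real.log (t - 1)) :=
        Real.log_div hlog.ne' hlogpred.ne'

lemma sum_Ioc_inv_mul_log_le {u v : ℕ} (hu : 3 ≤ u) (huv : u ≤ v) :
    ∑ n ∈ Ioc u v, (((n : ℝ) - 1) * Real.log n)⁻¹ ≤
      Real.log (Real.log (v - 1)) - Real.log (Real.log (u - 1)) := by
  induction v, huv using Nat.le_induction with
  | base => simp
  | succ v huv ih =>
    have hv : (2 : ℝ) < v := by exact_mod_cast (by lia : 2 < v)
    rw [sum_Ioc_succ_top huv]
    push_cast
    rw [add_sub_cancel_right]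
    linarith [inv_mul_log_le_log_log_sub hv]

lemma sum_Ioc_filter_prime_inv_pred_le {u v : ℕ} (hu : 3 ≤ u) (huv : u ≤ v) :
    ∑ q ∈ Ioc u v with q.Prime, ((q : ℝ) - 1)⁻¹ ≤
      Real.log 4 * (Real.log (Real.log (v - 1)) - Real.log (Real.log (u - 1)) + 1) := by
  have hcast : ∀ n : ℕ, u < n → (3 : ℝ) < n := fun n hn => by exact_mod_cast hu.trans_lt hn
  have habel := sum_Ioc_filter_prime_log_mul_le (f := fun n => (((n : ℝ) - 1) * Real.log n)⁻¹) huv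
    (fun m hm n hn hmn => by
      have hm3 := hcast m hm
      have : 0 < Real.log m := Real.log_pos (by linarith)
      have : 0 < (m : ℝ) - 1 := by linarith
      have : 0 < (n : ℝ) - 1 := by linarith [hcast n hn]
      simp only
      gcongr)
    (fun n hn => by
      have hn3 := hcast n hn
      exact inv_nonneg.2 (mul_nonneg (by linarith) (Real.log_nonneg (by linarith))))
  have hterm : ∀ q ∈ {q ∈ Ioc u v | q.Prime},
      Real.log q * (((q : ℝ) - 1) * Real.log q)⁻¹ = ((q : ℝ) - 1)⁻¹ := fun q hq => by
    have hlog : 0 < Real.log q :=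
      Real.log_pos (by exact_mod_cast (mem_filter.1 hq).2.one_lt)
    field_simp
  have hboundary : (u : ℝ) * ((((u + 1 : ℕ) : ℝ) - 1) * Real.log ((u + 1 : ℕ) : ℝ))⁻¹ ≤ 1 := by
    have hu3 : (3 : ℝ) ≤ u := by exact_mod_cast hu
    have hlog : 1 ≤ Real.log ((u + 1 : ℕ) : ℝ) := by
      rw [Real.le_log_iff_exp_le (by positivity)]
      push_cast
      linarith [Real.exp_one_lt_d9]
    rw [Nat.cast_succ, add_sub_cancel_right, mul_inv, mul_inv_cancel_left₀ (by positivity)]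
    exact inv_le_one_of_one_le₀ (by exact_mod_cast hlog)
  rw [sum_congr rfl hterm] at habel
  exact habel.trans <| mul_le_mul_of_nonneg_left
    (add_le_add (sum_Ioc_inv_mul_log_le hu huv) hboundary) (Real.log_nonneg (by norm_num))

lemma sum_inv_pred_le_of_mem_Ioc {z w : ℝ} (hz : 4 ≤ z) (hzw : z ≤ w) {s : Finset ℕ}
    (hs : ∀ q ∈ s, q.Prime ∧ z < q ∧ (q : ℝ) ≤ w) :
    ∑ q ∈ s, ((q : ℝ) - 1)⁻¹ ≤ Real.log 4 * (Real.log (Real.log w / Real.log z) + 2) := by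
  have hlogz : 0 < Real.log z := Real.log_pos (by linarith)
  have hlogw : 0 < Real.log w := Real.log_pos (by linarith)
  have hu : 4 ≤ ⌊z⌋₊ := Nat.le_floor (by exact_mod_cast hz)
  have hu4 : (4 : ℝ) ≤ ⌊z⌋₊ := by exact_mod_cast hu
  have hv4 : (4 : ℝ) ≤ ⌊w⌋₊ := hu4.trans (by exact_mod_cast Nat.floor_le_floor hzw)
  have hsub : s ⊆ {q ∈ Ioc ⌊z⌋₊ ⌊w⌋₊ | q.Prime} := fun q hq => by
    obtain ⟨hq', hzq, hqw⟩ := hs q hq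
    exact mem_filter.2
      ⟨mem_Ioc.2 ⟨(Nat.floor_lt (by linarith)).2 hzq, Nat.le_floor hqw⟩, hq'⟩
  have hupper : Real.log (Real.log (⌊w⌋₊ - 1)) ≤ Real.log (Real.log w) :=
    Real.log_le_log (Real.log_pos (by linarith)) <|
      Real.log_le_log (by linarith) (by linarith [Nat.floor_le (show 0 ≤ w by linarith)])
  have hlower : Real.log (Real.log z) - Real.log 2 ≤ Real.log (Real.log (⌊z⌋₊ - 1)) := by
    rw [← Real.log_div hlogz.ne' two_ne_zero]
    refine Real.log_le_log (by positivity) ?_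
    rw [div_le_iff₀ two_pos, mul_comm, ← Nat.cast_two, ← Real.log_pow]
    refine Real.log_le_log (by linarith) ?_
    nlinarith [Nat.lt_floor_add_one z]
  calc ∑ q ∈ s, ((q : ℝ) - 1)⁻¹ ≤ ∑ q ∈ Ioc ⌊z⌋₊ ⌊w⌋₊ with q.Prime, ((q : ℝ) - 1)⁻¹ :=
        sum_le_sum_of_subset_of_nonneg hsub fun q hq _ => inv_nonneg.2 <| sub_nonneg.2 <|
          by exact_mod_cast (mem_filter.1 hq).2.one_le
    _ ≤ _ := sum_Ioc_filter_prime_inv_pred_le (by lia) (Nat.floor_le_floor hzw)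
    _ ≤ Real.log 4 * (Real.log (Real.log w / Real.log z) + 2) := by
        rw [Real.log_div hlogw.ne' hlogz.ne']
        exact mul_le_mul_of_nonneg_left (by linarith [Real.log_two_lt_d9])
          (Real.log_nonneg (by norm_num))

end Mertens

section PrimeWeight

open Finset Nat

lemma sum_sum_erase_le {α : Type*} [DecidableEq α] {s : Finset α} {A : Finset (Finset α)}
    {B : α → Finset (Finset α)} {F : α → Finset α → ℝ} (hs : ∀ S ∈ A, S ⊆ s)
    (hB : ∀ S ∈ A, ∀ q ∈ S, S.erase q ∈ B q) (hF : ∀ q ∈ s, ∀ T ∈ B q, 0 ≤ F q T) :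
    ∑ S ∈ A, ∑ q ∈ S, F q (S.erase q) ≤ ∑ q ∈ s, ∑ T ∈ B q, F q T := by
  have hswap : ∑ S ∈ A, ∑ q ∈ S, F q (S.erase q) =
      ∑ q ∈ s, ∑ S ∈ A with q ∈ S, F q (S.erase q) :=
    sum_comm' fun S q => by
      simp only [mem_filter]
      exact ⟨fun h => ⟨h, hs S h.1 h.2⟩, fun h => h.1⟩
  rw [hswap]
  refine sum_le_sum fun q hq => ?_
  have hinj : Set.InjOn (fun S : Finset α => S.erase q) ({S ∈ A | q ∈ S} : Finset _) :=
    fun S hS T hT h => by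
      rw [← insert_erase (mem_filter.1 hS).2, ← insert_erase (mem_filter.1 hT).2]
      exact congrArg (insert q) h
  rw [← sum_image (f := F q) hinj]
  exact sum_le_sum_of_subset_of_nonneg
    (image_subset_iff.2 fun S hS => hB S (mem_filter.1 hS).1 q (mem_filter.1 hS).2)
    fun T hT _ => hF q hq T hT

lemma factorial_mul_sum_powersetCard_prod_le {α : Type*} {s : Finset α} {f : α → ℝ}
    (hf : ∀ i ∈ s, 0 ≤ f i) (k : ℕ) :
    (k ! : ℝ) * ∑ S ∈ s.powersetCard k, ∏ i ∈ S, f i ≤ (∑ i ∈ s, f i) ^ k := by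
  classical
  induction k with
  | zero => simp
  | succ k ih =>
    have hstep : ((k : ℝ) + 1) * ∑ S ∈ s.powersetCard (k + 1), ∏ i ∈ S, f i ≤
        (∑ i ∈ s, f i) * ∑ S ∈ s.powersetCard k, ∏ i ∈ S, f i := by
      calc ((k : ℝ) + 1) * ∑ S ∈ s.powersetCard (k + 1), ∏ i ∈ S, f i
          = ∑ S ∈ s.powersetCard (k + 1), ∑ q ∈ S, f q * ∏ i ∈ S.erase q, f i := by
            rw [mul_sum]
            refine sum_congr rfl fun S hS => ?_
            rw [sum_congr rfl fun q hq => mul_prod_erase S f hq, sum_const,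
              (mem_powersetCard.1 hS).2, nsmul_eq_mul, Nat.cast_succ]
        _ ≤ ∑ q ∈ s, ∑ T ∈ s.powersetCard k, f q * ∏ i ∈ T, f i := by
            refine sum_sum_erase_le (fun S hS => (mem_powersetCard.1 hS).1) (fun S hS q hq => ?_)
              fun q hq T hT => mul_nonneg (hf q hq) <|
                prod_nonneg fun i hi => hf i ((mem_powersetCard.1 hT).1 hi)
            obtain ⟨hSs, hcard⟩ := mem_powersetCard.1 hS
            exact mem_powersetCard.2
              ⟨(erase_subset q S).trans hSs, by rw [card_erase_of_mem hq, hcard, succ_sub_one]⟩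
        _ = (∑ i ∈ s, f i) * ∑ S ∈ s.powersetCard k, ∏ i ∈ S, f i := by rw [sum_mul_sum]
    rw [factorial_succ, _root_.pow_succ']
    push_cast
    calc ((k : ℝ) + 1) * k ! * ∑ S ∈ s.powersetCard (k + 1), ∏ i ∈ S, f i
        = k ! * (((k : ℝ) + 1) * ∑ S ∈ s.powersetCard (k + 1), ∏ i ∈ S, f i) := by ring
      _ ≤ k ! * ((∑ i ∈ s, f i) * ∑ S ∈ s.powersetCard k, ∏ i ∈ S, f i) := by gcongr
      _ = (∑ i ∈ s, f i) * (k ! * ∑ S ∈ s.powersetCard k, ∏ i ∈ S, f i) := by ring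
      _ ≤ (∑ i ∈ s, f i) * (∑ i ∈ s, f i) ^ k := mul_le_mul_of_nonneg_left ih (sum_nonneg hf)

/-- The multiplicative weight `∏ c / (q - 1)` of a finite set of primes, so that `c = 1` weighs
the squarefree number `∏ q` by the reciprocal of its totient. -/
noncomputable def primeWeight (c : ℝ) (S : Finset ℕ) : ℝ := ∏ q ∈ S, c * ((q : ℝ) - 1)⁻¹

lemma inv_pred_nonneg {S : Finset ℕ} (hS : ∀ q ∈ S, q.Prime) : ∀ q ∈ S, 0 ≤ ((q : ℝ) - 1)⁻¹ :=
  fun q hq => inv_nonneg.2 (sub_nonneg.2 (by exact_mod_cast (hS q hq).one_le))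

lemma primeWeight_nonneg {c : ℝ} (hc : 0 ≤ c) {S : Finset ℕ} (hS : ∀ q ∈ S, q.Prime) :
    0 ≤ primeWeight c S :=
  prod_nonneg fun q hq => mul_nonneg hc (inv_pred_nonneg hS q hq)

lemma primeWeight_eq_pow_div_totient (c : ℝ) {S : Finset ℕ} (hS : ∀ q ∈ S, q.Prime) :
    primeWeight c S = c ^ #S / φ (∏ q ∈ S, q) := by
  have htotient : φ (∏ q ∈ S, q) = ∏ q ∈ S, (q - 1) := by
    have h := totient_mul_prod_primeFactors (∏ q ∈ S, q)
    rw [primeFactors_prod hS, mul_comm] at h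
    exact Nat.eq_of_mul_eq_mul_left (prod_pos fun q hq => (hS q hq).pos) h
  rw [primeWeight, prod_mul_distrib, prod_const, prod_inv_distrib, div_eq_mul_inv, htotient,
    Nat.cast_prod]
  congr 2
  exact prod_congr rfl fun q hq => (Nat.cast_pred (hS q hq).pos).symm

lemma sum_primeWeight_powerset_le {c : ℝ} (hc : 0 ≤ c) {P : Finset ℕ} (hP : ∀ q ∈ P, q.Prime) :
    ∑ S ∈ P.powerset, primeWeight c S ≤ Real.exp (c * ∑ q ∈ P, ((q : ℝ) - 1)⁻¹) := by
  unfold primeWeight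
  rw [← prod_one_add, mul_sum, Real.exp_sum]
  refine prod_le_prod (fun q hq => ?_) fun q _ => ?_
  · have := mul_nonneg hc (inv_pred_nonneg hP q hq)
    positivity
  · rw [add_comm]
    exact Real.add_one_le_exp _

lemma sum_log_div_pred_le_of_mul_mem_Icc {lo hi m : ℝ} (hlo : 0 < lo) (hlohi : lo ≤ hi)
    (hm : 0 < m) {s : Finset ℕ} (hs : ∀ q ∈ s, q.Prime ∧ q * m ∈ Set.Icc lo hi) :
    ∑ q ∈ s, Real.log q * ((q : ℝ) - 1)⁻¹ ≤
      2 * (Real.log 4 * (Real.log (hi / lo) + 2)) := by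
  have hterm : ∀ q ∈ s, Real.log q * ((q : ℝ) - 1)⁻¹ ≤ 2 * (Real.log q / q) := fun q hq => by
    have hq2 : (2 : ℝ) ≤ q := by exact_mod_cast (hs q hq).1.two_le
    have := Real.log_natCast_nonneg q
    rw [← div_eq_mul_inv, ← mul_div_assoc, div_le_div_iff₀ (by linarith) (by linarith)]
    nlinarith
  have hmertens := sum_log_div_le_of_mem_Icc (a := lo / m) (b := hi / m) (s := s) (by positivity)
    (by gcongr) fun q hq => by
      obtain ⟨hq', hloq, hqhi⟩ := hs q hq
      exact ⟨hq', (div_le_iff₀ hm).2 hloq, (le_div_iff₀ hm).2 hqhi⟩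
  rw [div_div_div_cancel_right₀ hm.ne'] at hmertens
  calc ∑ q ∈ s, Real.log q * ((q : ℝ) - 1)⁻¹ ≤ ∑ q ∈ s, 2 * (Real.log q / q) := sum_le_sum hterm
    _ = 2 * ∑ q ∈ s, Real.log q / q := (mul_sum _ _ _).symm
    _ ≤ _ := by linarith

lemma log_mul_primeWeight_le {c lo : ℝ} (hc : 0 ≤ c) (hlo : 0 < lo) {S : Finset ℕ}
    (hS : ∀ q ∈ S, q.Prime) (hloS : lo ≤ ∏ q ∈ S, (q : ℝ)) :
    Real.log lo * primeWeight c S ≤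
      ∑ q ∈ S, c * (Real.log q * ((q : ℝ) - 1)⁻¹) * primeWeight c (S.erase q) := by
  have hlog : Real.log lo ≤ ∑ q ∈ S, Real.log q := by
    rw [← Real.log_prod fun q hq => by exact_mod_cast (hS q hq).ne_zero]
    exact Real.log_le_log hlo hloS
  calc Real.log lo * primeWeight c S ≤ (∑ q ∈ S, Real.log q) * primeWeight c S :=
        mul_le_mul_of_nonneg_right hlog (primeWeight_nonneg hc hS)
    _ = ∑ q ∈ S, c * (Real.log q * ((q : ℝ) - 1)⁻¹) * primeWeight c (S.erase q) := by
        rw [sum_mul]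
        refine sum_congr rfl fun q hq => ?_
        unfold primeWeight
        rw [← mul_prod_erase S _ hq]
        ring

/-- Weighing each set by `log ∏ q = ∑ log q` and removing one prime at a time gains a factor
`log lo` over the sum over all subsets. -/
lemma sum_primeWeight_prod_mem_Icc_le {c lo hi : ℝ} (hc : 0 ≤ c) (hlo : 1 < lo) (hlohi : lo ≤ hi)
    {P : Finset ℕ} (hP : ∀ q ∈ P, q.Prime) {A : Finset (Finset ℕ)}
    (hA : ∀ S ∈ A, S ⊆ P ∧ ∏ q ∈ S, (q : ℝ) ∈ Set.Icc lo hi) :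
    ∑ S ∈ A, primeWeight c S ≤ c * (2 * (Real.log 4 * (Real.log (hi / lo) + 2))) / Real.log lo *
      Real.exp (c * ∑ q ∈ P, ((q : ℝ) - 1)⁻¹) := by
  classical
  have hlo0 : 0 < lo := by linarith
  have hPS : ∀ S ⊆ P, ∀ q ∈ S, q.Prime := fun S hS q hq => hP q (hS hq)
  set M := c * (2 * (Real.log 4 * (Real.log (hi / lo) + 2)))
  have hM0 : 0 ≤ M := by
    have := Real.log_nonneg ((one_le_div hlo0).2 hlohi)
    have := Real.log_nonneg (show (1 : ℝ) ≤ 4 by norm_num)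
    positivity
  rw [div_mul_eq_mul_div, le_div_iff₀ (Real.log_pos hlo), mul_comm, mul_sum]
  calc ∑ S ∈ A, Real.log lo * primeWeight c S
      ≤ ∑ S ∈ A, ∑ q ∈ S, c * (Real.log q * ((q : ℝ) - 1)⁻¹) * primeWeight c (S.erase q) :=
        sum_le_sum fun S hS =>
          log_mul_primeWeight_le hc hlo0 (hPS S (hA S hS).1) (hA S hS).2.1
    _ ≤ ∑ q ∈ P, ∑ T ∈ P.powerset with
            (q : ℝ) * ∏ r ∈ (T : Finset ℕ), (r : ℝ) ∈ Set.Icc lo hi,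
          c * (Real.log q * ((q : ℝ) - 1)⁻¹) * primeWeight c T := by
        refine sum_sum_erase_le (fun S hS => (hA S hS).1) (fun S hS q hq => ?_) fun q hq T hT =>
          mul_nonneg (mul_nonneg hc (mul_nonneg (Real.log_natCast_nonneg q)
            (inv_pred_nonneg hP q hq)))
            (primeWeight_nonneg hc (hPS T (mem_powerset.1 (mem_filter.1 hT).1)))
        rw [mem_filter, mem_powerset, mul_prod_erase S (fun r : ℕ => (r : ℝ)) hq]
        exact ⟨(erase_subset q S).trans (hA S hS).1, (hA S hS).2⟩
    _ = ∑ T ∈ P.powerset, c * (∑ q ∈ P with (q : ℕ) * ∏ r ∈ T, (r : ℝ) ∈ Set.Icc lo hi,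
          Real.log q * ((q : ℝ) - 1)⁻¹) * primeWeight c T := by
        simp only [mul_sum, sum_mul]
        exact sum_comm' fun q T => by simp only [mem_filter]; tauto
    _ ≤ ∑ T ∈ P.powerset, M * primeWeight c T := by
        refine sum_le_sum fun T hT => ?_
        have hTprime := hPS T (mem_powerset.1 hT)
        refine mul_le_mul_of_nonneg_right (mul_le_mul_of_nonneg_left ?_ hc)
          (primeWeight_nonneg hc hTprime)
        exact sum_log_div_pred_le_of_mul_mem_Icc hlo0 hlohi
          (prod_pos fun r hr => by exact_mod_cast (hTprime r hr).pos)
          fun q hq => ⟨hP q (mem_filter.1 hq).1, (mem_filter.1 hq).2⟩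
    _ ≤ M * Real.exp (c * ∑ q ∈ P, ((q : ℝ) - 1)⁻¹) := by
        rw [← mul_sum]
        exact mul_le_mul_of_nonneg_left (sum_primeWeight_powerset_le hc hP) hM0

end PrimeWeight

section PrimeCounting

open Finset Nat

lemma mem_primesLE_floor {x : ℝ} {p : ℕ} : p ∈ primesLE ⌊x⌋₊ ↔ p.Prime ∧ (p : ℝ) ≤ x := by
  rw [mem_primesLE, and_comm, and_congr_right_iff]
  exact fun hp => le_floor_iff' hp.ne_zero

lemma card_primesLE_dvd_pred_le_div {x : ℝ} (hx : 0 ≤ x) {d : ℕ} (hd : 0 < d) :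
    (#{p ∈ primesLE ⌊x⌋₊ | d ∣ p - 1} : ℝ) ≤ x / d := by
  have hcard : #{p ∈ primesLE ⌊x⌋₊ | d ∣ p - 1} ≤ #{n ∈ Ioc 0 ⌊x⌋₊ | d ∣ n} := by
    refine card_le_card_of_injOn (· - 1) (fun p hp => ?_) fun p hp q hq hpq => ?_
    · have hp' := mem_filter.1 hp
      have := (mem_primesLE.1 hp'.1).1
      have := (mem_primesLE.1 hp'.1).2.two_le
      exact mem_filter.2 ⟨mem_Ioc.2 ⟨by lia, by lia⟩, hp'.2⟩
    · have := (mem_primesLE.1 (mem_filter.1 hp).1).2.two_le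
      have := (mem_primesLE.1 (mem_filter.1 hq).1).2.two_le
      simp only at hpq
      lia
  rw [Ioc_filter_dvd_card_eq_div] at hcard
  calc (#{p ∈ primesLE ⌊x⌋₊ | d ∣ p - 1} : ℝ) ≤ (⌊x⌋₊ / d : ℕ) := by exact_mod_cast hcard
    _ ≤ (⌊x⌋₊ : ℝ) / d := Nat.cast_div_le
    _ ≤ x / d := by gcongr; exact Nat.floor_le hx

lemma card_le_sum_div_of_exists_dvd_pred {ι : Type*} {x : ℝ} (hx : 0 ≤ x) {F : Finset ℕ}
    (hF : F ⊆ primesLE ⌊x⌋₊) {I : Finset ι} {m : ι → ℕ} (hm : ∀ i ∈ I, 0 < m i)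
    (hdvd : ∀ p ∈ F, ∃ i ∈ I, m i ∣ p - 1) :
    (#F : ℝ) ≤ ∑ i ∈ I, x / m i := by
  have hsub : F ⊆ I.biUnion fun i => {p ∈ primesLE ⌊x⌋₊ | m i ∣ p - 1} := fun p hp => by
    obtain ⟨i, hi, hip⟩ := hdvd p hp
    exact mem_biUnion.2 ⟨i, hi, mem_filter.2 ⟨hF hp, hip⟩⟩
  calc (#F : ℝ) ≤ ∑ i ∈ I, (#{p ∈ primesLE ⌊x⌋₊ | m i ∣ p - 1} : ℝ) := by
        exact_mod_cast (card_le_card hsub).trans card_biUnion_le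
    _ ≤ ∑ i ∈ I, x / m i := sum_le_sum fun i hi => card_primesLE_dvd_pred_le_div hx (hm i hi)

/-- A Brun–Titchmarsh upper bound for the primes `p ≤ x` with `p ≡ 1 (mod d)`, uniform in the
moduli `d ≤ D`. Here `B` has the order of magnitude of `x / log x`. -/
def BrunTitchmarshBound (x D B : ℝ) : Prop :=
  ∀ d : ℕ, 0 < d → (d : ℝ) ≤ D → (#{p ∈ primesLE ⌊x⌋₊ | d ∣ p - 1} : ℝ) ≤ B / φ d

lemma exists_eventually_brunTitchmarshBound {θ : ℝ} (hθ : θ < 1) :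
    ∃ C, 0 < C ∧ ∀ᶠ x in atTop, BrunTitchmarshBound x (x ^ θ) (C * (x / Real.log x)) := by
  obtain ⟨C, hC, hbound⟩ := exists_card_primes_modEq_le hθ
  refine ⟨C, hC, hbound.mono fun x hx d hd hdx => ?_⟩
  convert hx d 1 hd hdx using 3
  refine filter_congr fun p hp => ?_
  rw [Nat.ModEq.comm, Nat.modEq_iff_dvd' (mem_primesLE.1 hp).2.one_le]

lemma mul_card_le_sum_div_totient {ι : Type*} {x D B L : ℝ} (hBT : BrunTitchmarshBound x D B)
    {F : Finset ℕ} (hF : F ⊆ primesLE ⌊x⌋₊) {I : Finset ι} {m : ι → ℕ} {wt : ι → ℝ}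
    (hm : ∀ i ∈ I, 0 < m i ∧ (m i : ℝ) ≤ D) (hwt : ∀ i ∈ I, 0 ≤ wt i)
    (hL : ∀ p ∈ F, L ≤ ∑ i ∈ I with m i ∣ p - 1, wt i) :
    L * #F ≤ B * ∑ i ∈ I, wt i / φ (m i) := by
  calc L * #F = ∑ _p ∈ F, L := by rw [sum_const, nsmul_eq_mul, mul_comm]
    _ ≤ ∑ p ∈ F, ∑ i ∈ I with m i ∣ p - 1, wt i := sum_le_sum hL
    _ ≤ ∑ p ∈ primesLE ⌊x⌋₊, ∑ i ∈ I with m i ∣ p - 1, wt i :=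
        sum_le_sum_of_subset_of_nonneg hF fun _ _ _ =>
          sum_nonneg fun i hi => hwt i (mem_filter.1 hi).1
    _ = ∑ i ∈ I, wt i * #{p ∈ primesLE ⌊x⌋₊ | m i ∣ p - 1} := by
        simp only [sum_filter]
        rw [sum_comm]
        refine sum_congr rfl fun i _ => ?_
        rw [← sum_filter, sum_const, nsmul_eq_mul, mul_comm]
    _ ≤ ∑ i ∈ I, wt i * (B / φ (m i)) := sum_le_sum fun i hi =>
        mul_le_mul_of_nonneg_left (hBT (m i) (hm i hi).1 (hm i hi).2) (hwt i hi)
    _ = B * ∑ i ∈ I, wt i / φ (m i) := by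
        rw [mul_sum]
        exact sum_congr rfl fun i _ => by ring

lemma card_le_of_exists_sq_dvd_pred {x z : ℝ} (hx : 0 ≤ x) (hz : 1 ≤ z) {F : Finset ℕ}
    (hF : F ⊆ primesLE ⌊x⌋₊) (hsq : ∀ p ∈ F, ∃ q : ℕ, z < q ∧ q ^ 2 ∣ p - 1) :
    (#F : ℝ) ≤ 2 * x / z := by
  have hu : 1 ≤ ⌊z⌋₊ := Nat.le_floor (by exact_mod_cast hz)
  have hu1 : (1 : ℝ) ≤ ⌊z⌋₊ := by exact_mod_cast hu
  have hz1 : z < ⌊z⌋₊ + 1 := Nat.lt_floor_add_one z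
  have hcover : ∀ p ∈ F, ∃ q ∈ Ioc ⌊z⌋₊ (max ⌊z⌋₊ ⌊x⌋₊), q ^ 2 ∣ p - 1 := fun p hp => by
    obtain ⟨q, hzq, hq⟩ := hsq p hp
    obtain ⟨hpx, hp⟩ := mem_primesLE.1 (hF hp)
    have hqp := Nat.le_of_dvd (by have := hp.two_le; lia) hq
    have : q ≤ q ^ 2 := Nat.le_self_pow two_ne_zero q
    exact ⟨q, mem_Ioc.2 ⟨(Nat.floor_lt (by linarith)).2 hzq, le_max_of_le_right (by lia)⟩, hq⟩
  calc (#F : ℝ) ≤ ∑ q ∈ Ioc ⌊z⌋₊ (max ⌊z⌋₊ ⌊x⌋₊), x / (q ^ 2 : ℕ) :=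
        card_le_sum_div_of_exists_dvd_pred hx hF
          (fun q hq => pow_pos ((Nat.zero_le _).trans_lt (mem_Ioc.1 hq).1) 2) hcover
    _ = x * ∑ q ∈ Ioc ⌊z⌋₊ (max ⌊z⌋₊ ⌊x⌋₊), ((q : ℝ) ^ 2)⁻¹ := by
        rw [mul_sum]
        exact sum_congr rfl fun q _ => by rw [Nat.cast_pow, div_eq_mul_inv]
    _ ≤ x * (⌊z⌋₊ : ℝ)⁻¹ := by
        refine mul_le_mul_of_nonneg_left ?_ hx
        refine (sum_Ioc_inv_sq_le_sub (by lia) (le_max_left _ _)).trans (sub_le_self _ ?_)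
        positivity
    _ ≤ 2 * x / z := by
        rw [← div_eq_mul_inv, div_le_div_iff₀ (by linarith) (by linarith)]
        nlinarith

lemma card_le_of_exists_lt_pow_dvd_pred {x y z : ℝ} (hx : 0 ≤ x) (hy : 0 < y) (hz : 0 ≤ z)
    {F : Finset ℕ} (hF : F ⊆ primesLE ⌊x⌋₊)
    (hpow : ∀ p ∈ F, ∃ q : ℕ, q.Prime ∧ (q : ℝ) ≤ z ∧ ∃ j, y < (q : ℝ) ^ j ∧ q ^ j ∣ p - 1) :
    (#F : ℝ) ≤ z * (x / y) := by
  have hcover : ∀ p ∈ F, ∃ q ∈ primesLE ⌊z⌋₊, q ^ clog q (⌊y⌋₊ + 1) ∣ p - 1 := fun p hp => by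
    obtain ⟨q, hq, hqz, j, hyj, hj⟩ := hpow p hp
    have hyj' : ⌊y⌋₊ < q ^ j := (Nat.floor_lt hy.le).2 (by exact_mod_cast hyj)
    exact ⟨q, mem_primesLE_floor.2 ⟨hq, hqz⟩, (pow_dvd_pow q (clog_le_of_le_pow hyj')).trans hj⟩
  calc (#F : ℝ) ≤ ∑ q ∈ primesLE ⌊z⌋₊, x / (q ^ clog q (⌊y⌋₊ + 1) : ℕ) :=
        card_le_sum_div_of_exists_dvd_pred hx hF
          (fun q hq => pow_pos (mem_primesLE.1 hq).2.pos _) hcover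
    _ ≤ ∑ _q ∈ primesLE ⌊z⌋₊, x / y := by
        refine sum_le_sum fun q hq => div_le_div_of_nonneg_left hx hy ?_
        have := le_pow_clog (mem_primesLE.1 hq).2.one_lt (⌊y⌋₊ + 1)
        exact (Nat.lt_floor_add_one y).le.trans (by exact_mod_cast this)
    _ ≤ z * (x / y) := by
        rw [sum_const, nsmul_eq_mul]
        refine mul_le_mul_of_nonneg_right ?_ (by positivity)
        have hcard : #(primesLE ⌊z⌋₊) ≤ #(Ioc 0 ⌊z⌋₊) := card_le_card fun q hq =>
          mem_Ioc.2 ⟨(mem_primesLE.1 hq).2.pos, (mem_primesLE.1 hq).1⟩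
        rw [card_Ioc, Nat.sub_zero] at hcard
        exact (Nat.cast_le.2 hcard).trans (Nat.floor_le hz)

lemma choose_mul_card_le_of_le_card_filter_dvd_pred {x D B w : ℝ}
    (hBT : BrunTitchmarshBound x D B) {F : Finset ℕ} (hF : F ⊆ primesLE ⌊x⌋₊) {P : Finset ℕ}
    (hP : ∀ q ∈ P, q.Prime ∧ (q : ℝ) ≤ w) {k t : ℕ} (hw : w ^ k ≤ D)
    (ht : ∀ p ∈ F, t ≤ #{q ∈ P | q ∣ p - 1}) :
    (t.choose k : ℝ) * #F ≤ B * ∑ S ∈ P.powersetCard k, ∏ q ∈ S, ((q : ℝ) - 1)⁻¹ := by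
  have hprime : ∀ S ∈ P.powersetCard k, ∀ q ∈ S, q.Prime := fun S hS q hq =>
    (hP q ((mem_powersetCard.1 hS).1 hq)).1
  have hweight : ∀ S ∈ P.powersetCard k,
      ∏ q ∈ S, ((q : ℝ) - 1)⁻¹ = 1 / φ (∏ q ∈ S, q) := fun S hS => by
    have h := primeWeight_eq_pow_div_totient 1 (hprime S hS)
    simpa only [one_pow, primeWeight, one_mul] using h
  rw [sum_congr rfl hweight]
  refine mul_card_le_sum_div_totient hBT hF (m := fun S => ∏ q ∈ S, q) (fun S hS => ⟨?_, ?_⟩)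
    (fun _ _ => zero_le_one) fun p hp => ?_
  · exact prod_pos fun q hq => (hprime S hS q hq).pos
  · obtain ⟨hSP, hSk⟩ := mem_powersetCard.1 hS
    rw [Nat.cast_prod]
    refine (prod_le_prod (fun _ _ => Nat.cast_nonneg _) fun q hq => (hP q (hSP hq)).2).trans ?_
    rwa [prod_const, hSk]
  · rw [sum_const, nsmul_eq_mul, mul_one]
    refine Nat.cast_le.2 ((choose_le_choose k (ht p hp)).trans ?_)
    rw [← card_powersetCard]
    refine card_le_card fun S hS => ?_
    obtain ⟨hSP, hSk⟩ := mem_powersetCard.1 hS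
    have hS' : S ∈ P.powersetCard k :=
      mem_powersetCard.2 ⟨hSP.trans (filter_subset _ _), hSk⟩
    exact mem_filter.2 ⟨hS', prod_primes_dvd _ (fun q hq => (hprime S hS' q hq).prime)
      fun q hq => (mem_filter.1 (hSP hq)).2⟩

lemma pow_mul_card_le_of_le_card_filter_dvd_pred {x D B w : ℝ} (hBT : BrunTitchmarshBound x D B)
    (hB : 0 ≤ B) {F : Finset ℕ} (hF : F ⊆ primesLE ⌊x⌋₊) {P : Finset ℕ}
    (hP : ∀ q ∈ P, q.Prime ∧ (q : ℝ) ≤ w) {k t : ℕ} (hw : w ^ k ≤ D)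
    (ht : ∀ p ∈ F, t ≤ #{q ∈ P | q ∣ p - 1}) :
    ((t + 1 - k : ℕ) : ℝ) ^ k * #F ≤ B * (∑ q ∈ P, ((q : ℝ) - 1)⁻¹) ^ k := by
  have hfactorial : ((t + 1 - k : ℕ) : ℝ) ^ k ≤ k ! * t.choose k := by
    have := pow_sub_le_descFactorial t k
    rw [descFactorial_eq_factorial_mul_choose] at this
    exact_mod_cast this
  have hchoose := choose_mul_card_le_of_le_card_filter_dvd_pred hBT hF hP hw ht
  calc ((t + 1 - k : ℕ) : ℝ) ^ k * #F ≤ k ! * (t.choose k * #F) := by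
        rw [← mul_assoc]; gcongr
    _ ≤ k ! * (B * ∑ S ∈ P.powersetCard k, ∏ q ∈ S, ((q : ℝ) - 1)⁻¹) := by gcongr
    _ = B * (k ! * ∑ S ∈ P.powersetCard k, ∏ q ∈ S, ((q : ℝ) - 1)⁻¹) := by ring
    _ ≤ B * (∑ q ∈ P, ((q : ℝ) - 1)⁻¹) ^ k := mul_le_mul_of_nonneg_left
        (factorial_mul_sum_powersetCard_prod_le (inv_pred_nonneg fun q hq => (hP q hq).1) k) hB

end PrimeCounting

section SmoothPart

open Finset Nat

/-- The `z`-smooth part of `n`: its largest divisor all of whose prime factors are at most `z`. -/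
noncomputable def smoothPart (z : ℝ) (n : ℕ) : ℕ :=
  ∏ q ∈ n.primeFactors with ((q : ℕ) : ℝ) ≤ z, q ^ n.factorization q

/-- The prime powers `q ^ j ≤ D` with `q ≤ z` and `j ≥ 1`, encoded as pairs `⟨q, j⟩`. -/
noncomputable def primePowersLE (z D : ℝ) : Finset (Σ _ : ℕ, ℕ) :=
  (primesLE ⌊z⌋₊).sigma fun q => {j ∈ Icc 1 ⌊D⌋₊ | (q : ℝ) ^ j ≤ D}

lemma log_smoothPart (z : ℝ) (n : ℕ) :
    Real.log (smoothPart z n) =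
      ∑ q ∈ n.primeFactors with ((q : ℕ) : ℝ) ≤ z, n.factorization q * Real.log q := by
  rw [smoothPart, Nat.cast_prod, Real.log_prod fun q hq => by
    exact_mod_cast pow_ne_zero _ (prime_of_mem_primeFactors (mem_filter.1 hq).1).ne_zero]
  exact sum_congr rfl fun q _ => by rw [Nat.cast_pow, Real.log_pow]

lemma log_smoothPart_le_sum_primePowersLE {z D : ℝ} {n : ℕ} (hn : n ≠ 0)
    (hD : ∀ q : ℕ, q.Prime → (q : ℝ) ≤ z → ∀ j, q ^ j ∣ n → (q : ℝ) ^ j ≤ D) :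
    Real.log (smoothPart z n) ≤
      ∑ i ∈ primePowersLE z D with i.1 ^ i.2 ∣ n, Real.log i.1 := by
  have hcount : ∀ q : ℕ, n.factorization q * Real.log q =
      ∑ _j ∈ Icc 1 (n.factorization q), Real.log q := fun q => by
    rw [sum_const, Nat.card_Icc, Nat.add_sub_cancel, nsmul_eq_mul]
  rw [log_smoothPart, sum_congr rfl fun q _ => hcount q, sum_sigma']
  refine sum_le_sum_of_subset_of_nonneg (fun i hi => ?_) fun i _ _ => Real.log_natCast_nonneg _
  obtain ⟨hq, hj⟩ := mem_sigma.1 hi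
  obtain ⟨hq, hqz⟩ := mem_filter.1 hq
  obtain ⟨hj1, hjn⟩ := mem_Icc.1 hj
  have hprime := prime_of_mem_primeFactors hq
  have hdvd : i.1 ^ i.2 ∣ n := (hprime.pow_dvd_iff_le_factorization hn).2 hjn
  have hle := hD i.1 hprime hqz i.2 hdvd
  have hjD : i.2 ≤ ⌊D⌋₊ :=
    (Nat.lt_pow_self hprime.one_lt).le.trans (Nat.le_floor (by exact_mod_cast hle))
  exact mem_filter.2 ⟨mem_sigma.2 ⟨mem_primesLE_floor.2 ⟨hprime, hqz⟩,
    mem_filter.2 ⟨mem_Icc.2 ⟨hj1, hjD⟩, hle⟩⟩, hdvd⟩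

lemma sum_inv_totient_prime_pow_le {q : ℕ} (hq : q.Prime) (N : ℕ) :
    ∑ j ∈ Icc 1 N, (φ (q ^ j) : ℝ)⁻¹ ≤ 4 / q := by
  have hq2 : (2 : ℝ) ≤ q := by exact_mod_cast hq.two_le
  have hterm : ∀ j ∈ range N, (φ (q ^ (j + 1)) : ℝ)⁻¹ ≤ 2 / q * (1 / 2) ^ j := fun j _ => by
    rw [totient_prime_pow_succ hq, Nat.cast_mul, Nat.cast_pow, Nat.cast_pred hq.pos]
    calc ((q : ℝ) ^ j * (q - 1))⁻¹ ≤ (2 ^ j * ((q : ℝ) / 2))⁻¹ := by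
          gcongr
          linarith
      _ = 2 / q * (1 / 2) ^ j := by
          rw [one_div, inv_pow]
          field_simp
  calc ∑ j ∈ Icc 1 N, (φ (q ^ j) : ℝ)⁻¹ = ∑ j ∈ range N, (φ (q ^ (j + 1)) : ℝ)⁻¹ := by
        rw [range_eq_Ico, sum_Ico_add' (fun j => (φ (q ^ j) : ℝ)⁻¹)]
        rfl
    _ ≤ ∑ j ∈ range N, 2 / (q : ℝ) * (1 / 2) ^ j := sum_le_sum hterm
    _ ≤ 2 / q * 2 := by
        rw [← mul_sum]
        exact mul_le_mul_of_nonneg_left (sum_geometric_two_le N) (by positivity)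
    _ = 4 / q := by ring

lemma sum_primePowersLE_log_div_totient_le {z : ℝ} (hz : 1 ≤ z) (D : ℝ) :
    ∑ i ∈ primePowersLE z D, Real.log i.1 / φ (i.1 ^ i.2) ≤
      4 * (Real.log 4 * (Real.log z + 2)) := by
  have hmertens := sum_log_div_le_of_mem_Icc one_pos hz (s := primesLE ⌊z⌋₊) fun q hq => by
    obtain ⟨hq, hqz⟩ := mem_primesLE_floor.1 hq
    exact ⟨hq, by exact_mod_cast hq.one_le, hqz⟩
  rw [div_one] at hmertens
  calc ∑ i ∈ primePowersLE z D, Real.log i.1 / φ (i.1 ^ i.2)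
      = ∑ q ∈ primesLE ⌊z⌋₊, ∑ j ∈ Icc 1 ⌊D⌋₊ with (q : ℝ) ^ j ≤ D,
          Real.log q * (φ (q ^ j) : ℝ)⁻¹ := by
        rw [primePowersLE, sum_sigma]
        simp only [div_eq_mul_inv]
    _ ≤ ∑ q ∈ primesLE ⌊z⌋₊, Real.log q * (4 / q) := by
        refine sum_le_sum fun q hq => ?_
        rw [← mul_sum]
        refine mul_le_mul_of_nonneg_left ?_ (Real.log_natCast_nonneg q)
        exact (sum_le_sum_of_subset_of_nonneg (filter_subset _ _) fun _ _ _ => by positivity).trans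
          (sum_inv_totient_prime_pow_le (mem_primesLE.1 hq).2 _)
    _ = 4 * ∑ q ∈ primesLE ⌊z⌋₊, Real.log q / q := by
        rw [mul_sum]
        exact sum_congr rfl fun q _ => by ring
    _ ≤ 4 * (Real.log 4 * (Real.log z + 2)) := by linarith

lemma mul_card_le_of_le_log_smoothPart_pred {x D B z T : ℝ} (hBT : BrunTitchmarshBound x D B)
    (hB : 0 ≤ B) (hz : 1 ≤ z) {F : Finset ℕ} (hF : F ⊆ primesLE ⌊x⌋₊)
    (hT : ∀ p ∈ F, T ≤ Real.log (smoothPart z (p - 1)))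
    (hD : ∀ p ∈ F, ∀ q : ℕ, q.Prime → (q : ℝ) ≤ z → ∀ j, q ^ j ∣ p - 1 → (q : ℝ) ^ j ≤ D) :
    T * #F ≤ B * (4 * (Real.log 4 * (Real.log z + 2))) := by
  refine (mul_card_le_sum_div_totient hBT hF (I := primePowersLE z D)
    (m := fun i => i.1 ^ i.2) (wt := fun i => Real.log i.1) (fun i hi => ?_)
    (fun i _ => Real.log_natCast_nonneg _) fun p hp => ?_).trans
    (mul_le_mul_of_nonneg_left (sum_primePowersLE_log_div_totient_le hz D) hB)
  · obtain ⟨hq, hj⟩ := mem_sigma.1 hi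
    exact ⟨pow_pos (mem_primesLE.1 hq).2.pos _, by exact_mod_cast (mem_filter.1 hj).2⟩
  · have hpred : p - 1 ≠ 0 := by
      have := (mem_primesLE.1 (hF hp)).2.two_le
      lia
    exact (hT p hp).trans (log_smoothPart_le_sum_primePowersLE hpred (hD p hp))

lemma card_le_of_le_log_smoothPart_pred {x D B z T : ℝ} (hBT : BrunTitchmarshBound x D B)
    (hB : 0 ≤ B) (hx : 0 ≤ x) (hD : 0 < D) (hz : 1 ≤ z) (hT : 0 < T) {F : Finset ℕ}
    (hF : F ⊆ primesLE ⌊x⌋₊) (hsmooth : ∀ p ∈ F, T ≤ Real.log (smoothPart z (p - 1))) :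
    (#F : ℝ) ≤ z * (x / D) + B * (4 * (Real.log 4 * (Real.log z + 2))) / T := by
  classical
  let IsLarge (p : ℕ) : Prop :=
    ∃ q : ℕ, q.Prime ∧ (q : ℝ) ≤ z ∧ ∃ j, D < (q : ℝ) ^ j ∧ q ^ j ∣ p - 1
  have hlarge := card_le_of_exists_lt_pow_dvd_pred (F := {p ∈ F | IsLarge p}) hx hD
    (zero_le_one.trans hz) ((filter_subset _ _).trans hF) fun p hp => (mem_filter.1 hp).2
  have hsmall := mul_card_le_of_le_log_smoothPart_pred (F := {p ∈ F | ¬ IsLarge p}) hBT hB hz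
    ((filter_subset _ _).trans hF) (fun p hp => hsmooth p (mem_filter.1 hp).1)
    fun p hp q hq hqz j hj => not_lt.1 fun hlt => (mem_filter.1 hp).2 ⟨q, hq, hqz, j, hlt, hj⟩
  rw [← le_div_iff₀' hT] at hsmall
  rw [← card_filter_add_card_filter_not IsLarge, Nat.cast_add]
  exact add_le_add hlarge hsmall

end SmoothPart

section RoughFactors

open Finset Nat

/-- The prime factors of `n` exceeding `z`. -/
noncomputable def roughPrimeFactors (z : ℝ) (n : ℕ) : Finset ℕ := {q ∈ n.primeFactors | z < q}

/-- The number `n` has disjoint sets `S i` of prime factors exceeding `z` whose products all lie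
in `[lo, hi]`. -/
def HasDisjointRoughFactors (ι : Type*) (z lo hi : ℝ) (n : ℕ) : Prop :=
  ∃ S : ι → Finset ℕ, (∀ i, S i ⊆ roughPrimeFactors z n) ∧ Pairwise (Function.onFun Disjoint S) ∧
    ∀ i, ∏ q ∈ S i, (q : ℝ) ∈ Set.Icc lo hi

/-- The sets of primes in `(z, x]` whose product lies in `[lo, hi]`. -/
noncomputable def roughBlocks (z x lo hi : ℝ) : Finset (Finset ℕ) :=
  {S ∈ ({q ∈ primesLE ⌊x⌋₊ | z < q} : Finset ℕ).powerset | ∏ q ∈ S, (q : ℝ) ∈ Set.Icc lo hi}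

lemma prime_and_dvd_of_mem_roughPrimeFactors {z : ℝ} {n q : ℕ} (hq : q ∈ roughPrimeFactors z n) :
    q.Prime ∧ q ∣ n ∧ z < q :=
  ⟨prime_of_mem_primeFactors (mem_filter.1 hq).1, dvd_of_mem_primeFactors (mem_filter.1 hq).1,
    (mem_filter.1 hq).2⟩

lemma roughPrimeFactors_pred_subset {x : ℝ} (z : ℝ) {p : ℕ} (hp : p ∈ primesLE ⌊x⌋₊) :
    roughPrimeFactors z (p - 1) ⊆ {q ∈ primesLE ⌊x⌋₊ | z < q} := fun q hq => by
  obtain ⟨hpx, hp⟩ := mem_primesLE.1 hp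
  obtain ⟨hq, hqp, hzq⟩ := prime_and_dvd_of_mem_roughPrimeFactors hq
  have := Nat.le_of_dvd (by have := hp.two_le; lia) hqp
  exact mem_filter.2 ⟨mem_primesLE.2 ⟨by lia, hq⟩, hzq⟩

lemma card_roughPrimeFactors_le {w : ℝ} {n m : ℕ} (hw : 1 < w) (hn : n ≠ 0)
    (hnw : (n : ℝ) ≤ w ^ m) : #(roughPrimeFactors w n) ≤ m := by
  have hdvd : ∏ q ∈ roughPrimeFactors w n, q ∣ n := prod_primes_dvd n
    (fun q hq => (prime_and_dvd_of_mem_roughPrimeFactors hq).1.prime)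
    fun q hq => (prime_and_dvd_of_mem_roughPrimeFactors hq).2.1
  refine (pow_le_pow_iff_right₀ hw).1 ?_
  calc w ^ #(roughPrimeFactors w n) = ∏ _q ∈ roughPrimeFactors w n, w := (prod_const w).symm
    _ ≤ ∏ q ∈ roughPrimeFactors w n, (q : ℝ) := prod_le_prod (fun _ _ => by linarith)
        fun q hq => (prime_and_dvd_of_mem_roughPrimeFactors hq).2.2.le
    _ ≤ n := by
        rw [← Nat.cast_prod]
        exact Nat.cast_le.2 (Nat.le_of_dvd (Nat.pos_of_ne_zero hn) hdvd)
    _ ≤ w ^ m := hnw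

lemma prime_of_mem_roughBlocks {z x lo hi : ℝ} {S : Finset ℕ} (hS : S ∈ roughBlocks z x lo hi) :
    ∀ q ∈ S, q.Prime := fun _ hq =>
  (mem_primesLE.1 (mem_filter.1 (mem_powerset.1 (mem_filter.1 hS).1 hq)).1).2

variable {ι : Type*} [Fintype ι]

lemma exists_disjoint_roughBlocks {z x lo hi : ℝ} {p R : ℕ} (hp : p ∈ primesLE ⌊x⌋₊)
    (hR : #(roughPrimeFactors z (p - 1)) ≤ R) (hp' : HasDisjointRoughFactors ι z lo hi (p - 1)) :
    ∃ S : ι → Finset ℕ, (∀ i, S i ∈ roughBlocks z x lo hi) ∧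
      Pairwise (Function.onFun Disjoint S) ∧ #(univ.biUnion S) ≤ R ∧
      ∏ q ∈ univ.biUnion S, q ∣ p - 1 := by
  obtain ⟨S, hS, hdisj, hprod⟩ := hp'
  have hU : univ.biUnion S ⊆ roughPrimeFactors z (p - 1) := biUnion_subset.2 fun i _ => hS i
  refine ⟨S, fun i => mem_filter.2 ⟨mem_powerset.2 ((hS i).trans ?_), hprod i⟩, hdisj,
    (card_le_card hU).trans hR, ?_⟩
  · exact roughPrimeFactors_pred_subset z hp
  · exact prod_primes_dvd _
      (fun q hq => (prime_and_dvd_of_mem_roughPrimeFactors (hU hq)).1.prime)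
      fun q hq => (prime_and_dvd_of_mem_roughPrimeFactors (hU hq)).2.1

/-- Primes whose predecessor has few large prime factors, some of which form disjoint blocks, are
counted with the weight `c ^ ω`, which makes the sum over the blocks converge faster. -/
theorem pow_mul_card_le_of_hasDisjointRoughFactors {x D B c z lo hi : ℝ}
    (hBT : BrunTitchmarshBound x D B) (hB : 0 ≤ B) (hc0 : 0 ≤ c) (hc1 : c ≤ 1)
    (hD : hi ^ Fintype.card ι ≤ D) {F : Finset ℕ} (hF : F ⊆ primesLE ⌊x⌋₊) {R : ℕ}
    (hR : ∀ p ∈ F, #(roughPrimeFactors z (p - 1)) ≤ R)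
    (hblocks : ∀ p ∈ F, HasDisjointRoughFactors ι z lo hi (p - 1)) :
    c ^ R * #F ≤ B * (∑ S ∈ roughBlocks z x lo hi, primeWeight c S) ^ Fintype.card ι := by
  classical
  set I : Finset (ι → Finset ℕ) := {S ∈ Fintype.piFinset fun _ => roughBlocks z x lo hi |
    Pairwise (Function.onFun Disjoint S)}
  have hI : ∀ S ∈ I, (∀ i, S i ∈ roughBlocks z x lo hi) ∧
      (Set.PairwiseDisjoint (univ : Finset ι) S) := fun S hS =>
    ⟨Fintype.mem_piFinset.1 (mem_filter.1 hS).1, fun i _ j _ hij => (mem_filter.1 hS).2 hij⟩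
  have hprime : ∀ S ∈ I, ∀ q ∈ univ.biUnion S, q.Prime := fun S hS q hq => by
    obtain ⟨i, -, hi⟩ := mem_biUnion.1 hq
    exact prime_of_mem_roughBlocks ((hI S hS).1 i) q hi
  have hcount : c ^ R * #F ≤
      B * ∑ S ∈ I, c ^ #(univ.biUnion S) / φ (∏ q ∈ univ.biUnion S, q) := by
    refine mul_card_le_sum_div_totient hBT hF (I := I) (fun S hS =>
      ⟨prod_pos fun q hq => (hprime S hS q hq).pos, ?_⟩) (fun _ _ => by positivity) fun p hp => ?_
    · rw [prod_biUnion (hI S hS).2]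
      push_cast
      refine (prod_le_prod (fun _ _ => by positivity) fun i _ =>
        (mem_filter.1 ((hI S hS).1 i)).2.2).trans ?_
      rwa [prod_const]
    · obtain ⟨S, hS, hdisj, hcard, hdvd⟩ := exists_disjoint_roughBlocks (hF hp) (hR p hp)
        (hblocks p hp)
      refine (pow_le_pow_of_le_one hc0 hc1 hcard).trans
        (single_le_sum (f := fun S : ι → Finset ℕ => c ^ #(univ.biUnion S))
          (fun _ _ => by positivity) ?_)
      exact mem_filter.2 ⟨mem_filter.2 ⟨Fintype.mem_piFinset.2 hS, hdisj⟩, hdvd⟩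
  refine hcount.trans (mul_le_mul_of_nonneg_left ?_ hB)
  calc ∑ S ∈ I, c ^ #(univ.biUnion S) / φ (∏ q ∈ univ.biUnion S, q)
      = ∑ S ∈ I, ∏ i, primeWeight c (S i) := sum_congr rfl fun S hS => by
        rw [← primeWeight_eq_pow_div_totient c (hprime S hS), primeWeight,
          prod_biUnion (hI S hS).2]
        rfl
    _ ≤ ∑ S ∈ Fintype.piFinset fun _ : ι => roughBlocks z x lo hi, ∏ i, primeWeight c (S i) :=
        sum_le_sum_of_subset_of_nonneg (filter_subset _ _) fun S hS _ => prod_nonneg fun i _ =>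
          primeWeight_nonneg hc0 (prime_of_mem_roughBlocks (Fintype.mem_piFinset.1 hS i))
    _ = (∑ S ∈ roughBlocks z x lo hi, primeWeight c S) ^ Fintype.card ι := by
        rw [← prod_univ_sum, prod_const, Finset.card_univ]

end RoughFactors

section OrderIndex

variable {G : Type*} [CommGroup G]

lemma orderOf_pow_mul_pow_dvd_lcm (α β : G) (m n : ℕ) :
    orderOf (α ^ m * β ^ n) ∣ (orderOf α).lcm (orderOf β) :=
  (Commute.all _ _).orderOf_mul_dvd_lcm.trans
    (lcm_dvd_lcm (orderOf_pow_dvd m) (orderOf_pow_dvd n))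

lemma pow_div_eq_one_of_dvd_div_orderOf {γ : G} {h q : ℕ} (hγ : orderOf γ ∣ h)
    (hq : q ∣ h / orderOf γ) : γ ^ (h / q) = 1 :=
  orderOf_dvd_iff_pow_eq_one.1 <| Nat.dvd_div_of_mul_dvd <|
    mul_comm (orderOf γ) q ▸ Nat.mul_dvd_of_dvd_div hγ hq

lemma zpow_det_eq_one_s1 {A B : G} {m n r s : ℤ} (h₁ : A ^ m * B ^ n = 1) (h₂ : A ^ r * B ^ s = 1) :
    A ^ (m * s - n * r) = 1 :=
  calc A ^ (m * s - n * r) = (A ^ m * B ^ n) ^ s * ((A ^ r * B ^ s) ^ n)⁻¹ := by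
        simp only [mul_zpow, ← zpow_mul, zpow_sub, mul_inv]
        rw [mul_comm n r, mul_comm n s, mul_mul_mul_comm, mul_inv_cancel, mul_one]
    _ = 1 := by rw [h₁, h₂, one_zpow, one_zpow, inv_one, one_mul]

lemma eq_one_of_pow_eq_one_of_zpow_eq_one {A : G} {q : ℕ} {d : ℤ} (hcop : IsCoprime (q : ℤ) d)
    (hq : A ^ q = 1) (hd : A ^ d = 1) : A = 1 := by
  have hdvd := Int.dvd_coe_gcd (Int.natCast_dvd_natCast.2 (orderOf_dvd_iff_pow_eq_one.2 hq))
    (orderOf_dvd_iff_zpow_eq_one.2 hd)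
  rw [Int.isCoprime_iff_gcd_eq_one.1 hcop, Nat.cast_one, Int.natCast_dvd_ofNat, Nat.dvd_one] at hdvd
  exact orderOf_eq_one_iff.1 hdvd

/-- The determinant of two exponent vectors. -/
def exponentDet (v w : ℕ × ℕ) : ℤ := v.1 * w.2 - v.2 * w.1

/-- For `h` the least common multiple of the orders of `α` and `β` and `ℓ` the order of
`α ^ v.1 * β ^ v.2`, the quotient `h / ℓ`. -/
noncomputable def orderIndex (α β : G) (v : ℕ × ℕ) : ℕ :=
  (orderOf α).lcm (orderOf β) / orderOf (α ^ v.1 * β ^ v.2)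

lemma orderOf_mul_orderIndex (α β : G) (v : ℕ × ℕ) :
    orderOf (α ^ v.1 * β ^ v.2) * orderIndex α β v = (orderOf α).lcm (orderOf β) :=
  Nat.mul_div_cancel' (orderOf_pow_mul_pow_dvd_lcm α β v.1 v.2)

lemma orderIndex_dvd_lcm (α β : G) (v : ℕ × ℕ) :
    orderIndex α β v ∣ (orderOf α).lcm (orderOf β) :=
  Dvd.intro_left _ (orderOf_mul_orderIndex α β v)

/-- Otherwise Cramer's rule would show that the orders of `α` and `β` divide `h / q`. -/
lemma dvd_exponentDet_of_dvd_orderIndex {α β : G} (hαβ : (orderOf α).lcm (orderOf β) ≠ 0) {q : ℕ}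
    (hq : q.Prime) {v w : ℕ × ℕ} (hv : q ∣ orderIndex α β v) (hw : q ∣ orderIndex α β w) :
    (q : ℤ) ∣ exponentDet v w := by
  set h := (orderOf α).lcm (orderOf β)
  by_contra hdet
  have hcop := (Nat.prime_iff_prime_int.1 hq).coprime_iff_not_dvd.2 hdet
  have hqh : q ∣ h := hv.trans (orderIndex_dvd_lcm α β v)
  have hrel : ∀ u : ℕ × ℕ, q ∣ orderIndex α β u →
      (α ^ (h / q)) ^ (u.1 : ℤ) * (β ^ (h / q)) ^ (u.2 : ℤ) = 1 := fun u hu => by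
    rw [zpow_natCast, zpow_natCast, pow_right_comm, pow_right_comm β, ← mul_pow]
    exact pow_div_eq_one_of_dvd_div_orderOf (orderOf_pow_mul_pow_dvd_lcm α β u.1 u.2) hu
  have hpow : ∀ γ : G, orderOf γ ∣ h → (γ ^ (h / q)) ^ q = 1 := fun γ hγ => by
    rwa [← pow_mul, Nat.div_mul_cancel hqh, ← orderOf_dvd_iff_pow_eq_one]
  have hα : α ^ (h / q) = 1 := eq_one_of_pow_eq_one_of_zpow_eq_one hcop
    (hpow α (Nat.dvd_lcm_left _ _)) (zpow_det_eq_one_s1 (hrel v hv) (hrel w hw))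
  have hβ : β ^ (h / q) = 1 := by
    refine eq_one_of_pow_eq_one_of_zpow_eq_one hcop.neg_right (hpow β (Nat.dvd_lcm_right _ _)) ?_
    rw [exponentDet, neg_sub]
    exact zpow_det_eq_one_s1 ((mul_comm _ _).trans (hrel v hv)) ((mul_comm _ _).trans (hrel w hw))
  have hdvd : h ∣ h / q :=
    Nat.lcm_dvd (orderOf_dvd_of_pow_eq_one hα) (orderOf_dvd_of_pow_eq_one hβ)
  exact (Nat.div_lt_self (Nat.pos_of_ne_zero hαβ) hq.one_lt).not_ge <|
    Nat.le_of_dvd (Nat.div_pos (Nat.le_of_dvd (Nat.pos_of_ne_zero hαβ) hqh) hq.pos) hdvd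

end OrderIndex

section DisjointBlocks

open Finset Nat

lemma roughPrimeFactors_subset_of_dvd (z : ℝ) {n u : ℕ} (hn : n ≠ 0) (hu : u ∣ n) :
    roughPrimeFactors z u ⊆ roughPrimeFactors z n :=
  filter_subset_filter _ (primeFactors_mono hu hn)

lemma smoothPart_le_of_dvd (z : ℝ) {n u : ℕ} (hn : n ≠ 0) (hu : u ∣ n) :
    smoothPart z u ≤ smoothPart z n := by
  have hfact := (factorization_le_iff_dvd (ne_zero_of_dvd_ne_zero hn hu) hn).2 hu
  refine (prod_le_prod' fun q hq => ?_).trans (prod_le_prod_of_subset_of_one_le'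
    (filter_subset_filter _ (primeFactors_mono hu hn)) fun q hq _ => ?_)
  · exact Nat.pow_le_pow_right (prime_of_mem_primeFactors (mem_filter.1 hq).1).pos (hfact q)
  · exact one_le_pow _ _ (prime_of_mem_primeFactors (mem_filter.1 hq).1).pos

lemma le_smoothPart_mul_prod_roughPrimeFactors {z : ℝ} {n : ℕ} (hn : n ≠ 0)
    (hsq : ∀ q : ℕ, q.Prime → z < q → ¬ q ^ 2 ∣ n) :
    n ≤ smoothPart z n * ∏ q ∈ roughPrimeFactors z n, q := by
  have hrough : ∏ q ∈ n.primeFactors with ¬ ((q : ℕ) : ℝ) ≤ z, q ^ n.factorization q ≤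
      ∏ q ∈ roughPrimeFactors z n, q := by
    simp only [not_le]
    refine prod_le_prod' fun q hq => ?_
    obtain ⟨hprime, -, hzq⟩ := prime_and_dvd_of_mem_roughPrimeFactors hq
    have hle : n.factorization q ≤ 1 := by
      by_contra! hlt
      exact hsq q hprime hzq ((hprime.pow_dvd_iff_le_factorization hn).2 hlt)
    exact (Nat.pow_le_pow_right hprime.pos hle).trans_eq (pow_one q)
  calc n = ∏ q ∈ n.primeFactors, q ^ n.factorization q := (prod_factorization_pow_eq_self hn).symm
    _ = smoothPart z n * ∏ q ∈ n.primeFactors with ¬ ((q : ℕ) : ℝ) ≤ z, q ^ n.factorization q :=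
        (prod_filter_mul_prod_filter_not _ _ _).symm
    _ ≤ smoothPart z n * ∏ q ∈ roughPrimeFactors z n, q := by gcongr

variable {ι : Type*} [Fintype ι]

lemma le_div_pow_of_prod_le {d : ι → ℝ} {r H : ℝ} (hr : 0 < r) (hd : ∀ i, r ≤ d i)
    (hprod : ∏ i, d i ≤ H) (i : ι) : d i ≤ H / r ^ (Fintype.card ι - 1) := by
  classical
  rw [le_div_iff₀ (by positivity)]
  calc d i * r ^ (Fintype.card ι - 1) = d i * ∏ _j ∈ univ.erase i, r := by
        rw [prod_const, card_erase_of_mem (mem_univ i), Finset.card_univ]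
    _ ≤ d i * ∏ j ∈ univ.erase i, d j := mul_le_mul_of_nonneg_left
        (prod_le_prod (fun _ _ => hr.le) fun j _ => hd j) (hr.le.trans (hd i))
    _ = ∏ j, d j := mul_prod_erase _ _ (mem_univ i)
    _ ≤ H := hprod

lemma prod_prod_roughPrimeFactors_le {z : ℝ} {h : ℕ} (hh : h ≠ 0) {u : ι → ℕ}
    (hu : ∀ i, u i ∣ h)
    (hdisj : Pairwise (Function.onFun Disjoint fun i => roughPrimeFactors z (u i))) :
    ∏ i, ∏ q ∈ roughPrimeFactors z (u i), q ≤ h := by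
  classical
  rw [← prod_biUnion fun i _ j _ hij => hdisj hij]
  have hmem : ∀ q ∈ univ.biUnion fun i => roughPrimeFactors z (u i), q.Prime ∧ q ∣ h :=
    fun q hq => by
      obtain ⟨i, -, hi⟩ := mem_biUnion.1 hq
      obtain ⟨hprime, hdvd, -⟩ := prime_and_dvd_of_mem_roughPrimeFactors hi
      exact ⟨hprime, hdvd.trans (hu i)⟩
  exact Nat.le_of_dvd (Nat.pos_of_ne_zero hh)
    (prod_primes_dvd h (fun q hq => (hmem q hq).1.prime) fun q hq => (hmem q hq).2)

lemma hasDisjointRoughFactors_of_index {n h : ℕ} {z L U s : ℝ} (hn : n ≠ 0) (hhn : h ∣ n)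
    (hL : 0 < L) (hLh : L ≤ h) (hs : 0 < s) (hsmooth : smoothPart z n ≤ s)
    (hsq : ∀ q : ℕ, q.Prime → z < q → ¬ q ^ 2 ∣ n) {m : ℕ} (hm : Fintype.card ι = m + 2)
    {l u : ι → ℕ} (hlu : ∀ i, l i * u i = h) (hU : ∀ i, (l i : ℝ) ≤ U) (hU0 : 0 < U)
    (hdisj : Pairwise (Function.onFun Disjoint fun i => roughPrimeFactors z (u i))) :
    HasDisjointRoughFactors ι z (L / (U * s)) ((U * s) ^ (m + 1) / L ^ m) n := by
  have hh : h ≠ 0 := ne_zero_of_dvd_ne_zero hn hhn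
  have hh' : (0 : ℝ) < h := by positivity
  have hu : ∀ i, u i ∣ h := fun i => Dvd.intro_left _ (hlu i)
  have hlow : ∀ i, (h : ℝ) / (U * s) ≤ ∏ q ∈ roughPrimeFactors z (u i), (q : ℝ) := fun i => by
    have hun := (hu i).trans hhn
    have hsplit := le_smoothPart_mul_prod_roughPrimeFactors (ne_zero_of_dvd_ne_zero hn hun)
      fun q hq hzq hdvd => hsq q hq hzq (hdvd.trans hun)
    have hus : (u i : ℝ) ≤ s * ∏ q ∈ roughPrimeFactors z (u i), (q : ℝ) := by
      calc (u i : ℝ) ≤ smoothPart z (u i) * ∏ q ∈ roughPrimeFactors z (u i), (q : ℝ) := by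
            rw [← Nat.cast_prod, ← Nat.cast_mul]
            exact Nat.cast_le.2 hsplit
        _ ≤ s * ∏ q ∈ roughPrimeFactors z (u i), (q : ℝ) := by
            gcongr
            exact (Nat.cast_le.2 (smoothPart_le_of_dvd z hn hun)).trans hsmooth
    rw [div_le_iff₀' (by positivity), ← hlu i, Nat.cast_mul, mul_assoc]
    exact mul_le_mul (hU i) hus (by positivity) hU0.le
  have hprod : ∏ i, ∏ q ∈ roughPrimeFactors z (u i), (q : ℝ) ≤ h := by
    simpa only [Nat.cast_prod] using
      Nat.cast_le (α := ℝ).2 (prod_prod_roughPrimeFactors_le hh hu hdisj)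
  refine ⟨fun i => roughPrimeFactors z (u i),
    fun i => roughPrimeFactors_subset_of_dvd z hn ((hu i).trans hhn), hdisj, fun i =>
    ⟨le_trans (by gcongr) (hlow i), ?_⟩⟩
  calc ∏ q ∈ roughPrimeFactors z (u i), (q : ℝ)
      ≤ h / (h / (U * s)) ^ (m + 1) := by
        simpa only [hm, show m + 2 - 1 = m + 1 from rfl] using
          le_div_pow_of_prod_le (by positivity) hlow hprod i
    _ = (U * s) ^ (m + 1) / (h : ℝ) ^ m := by
        rw [div_pow, div_div_eq_mul_div, pow_succ' (h : ℝ), mul_div_mul_left _ _ hh'.ne']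
    _ ≤ (U * s) ^ (m + 1) / L ^ m := by gcongr

variable {G : Type*} [CommGroup G]

theorem hasDisjointRoughFactors_of_orderOf_le {α β : G} {n m : ℕ} {z L U s : ℝ}
    (hn : n ≠ 0) (hαβ : (orderOf α).lcm (orderOf β) ∣ n) (hL : 0 < L)
    (hLαβ : L ≤ (orderOf α).lcm (orderOf β)) (hs : 0 < s) (hsmooth : smoothPart z n ≤ s)
    (hsq : ∀ q : ℕ, q.Prime → z < q → ¬ q ^ 2 ∣ n) (hm : Fintype.card ι = m + 2) {v : ι → ℕ × ℕ}
    (hU : ∀ i, (orderOf (α ^ (v i).1 * β ^ (v i).2) : ℝ) ≤ U) (hU0 : 0 < U)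
    (hv : Pairwise fun i j => ∀ q : ℕ, z < q → ¬ (q : ℤ) ∣ exponentDet (v i) (v j)) :
    HasDisjointRoughFactors ι z (L / (U * s)) ((U * s) ^ (m + 1) / L ^ m) n := by
  refine hasDisjointRoughFactors_of_index hn hαβ hL hLαβ hs hsmooth hsq hm
    (u := fun i => orderIndex α β (v i)) (fun i => orderOf_mul_orderIndex α β (v i)) hU hU0
    fun i j hij => disjoint_left.2 fun q hi hj => ?_
  obtain ⟨hq, hqi, hzq⟩ := prime_and_dvd_of_mem_roughPrimeFactors hi
  exact hv hij q hzq (dvd_exponentDet_of_dvd_orderIndex (ne_zero_of_dvd_ne_zero hn hαβ) hq hqi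
    (prime_and_dvd_of_mem_roughPrimeFactors hj).2.1)

end DisjointBlocks

section SmallOrders

open Finset

lemma exists_zpow_mul_zpow_eq_one {G : Type*} [CommGroup G] [Finite G] [IsCyclic G] (α β : G)
    {M : ℕ} (hM : (orderOf α).lcm (orderOf β) < (M + 1) ^ 2) :
    ∃ m n : ℤ, ¬(m = 0 ∧ n = 0) ∧ m.natAbs ≤ M ∧ n.natAbs ≤ M ∧ α ^ m * β ^ n = 1 := by
  classical
  cases nonempty_fintype G
  set h := (orderOf α).lcm (orderOf β)
  have hroots : #{γ : G | γ ^ h = 1} ≤ h :=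
    IsCyclic.card_pow_eq_one_le (Nat.lcm_pos (orderOf_pos α) (orderOf_pos β))
  have hbox : #(range (M + 1) ×ˢ range (M + 1)) = (M + 1) ^ 2 := by
    rw [card_product, card_range, sq]
  obtain ⟨⟨i, j⟩, hij, ⟨k, l⟩, hkl, hne, heq⟩ := exists_ne_map_eq_of_card_lt_of_maps_to
    (s := range (M + 1) ×ˢ range (M + 1)) (t := {γ : G | γ ^ h = 1})
    (f := fun u => α ^ u.1 * β ^ u.2) (by lia) fun u _ => mem_coe.2 <| mem_filter.2 ⟨mem_univ _,
      orderOf_dvd_iff_pow_eq_one.1 (orderOf_pow_mul_pow_dvd_lcm α β u.1 u.2)⟩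
  simp only [mem_product, mem_range] at hij hkl
  refine ⟨i - k, j - l, fun hzero => hne (Prod.ext ?_ ?_), by lia, by lia, ?_⟩
  · lia
  · lia
  · rw [zpow_sub, zpow_sub, zpow_natCast, zpow_natCast, zpow_natCast, zpow_natCast,
      mul_mul_mul_comm, ← mul_inv, mul_inv_eq_one]
    exact heq

/-- The difference of the two sides of `a ^ m * b ^ n = 1` after clearing negative exponents. -/
def relationInt (a b m n : ℤ) : ℤ :=
  a ^ m.toNat * b ^ n.toNat - a ^ (-m).toNat * b ^ (-n).toNat

lemma intCast_relationInt_eq_zero_iff {R : Type*} [CommRing R] {a b : ℤ} {α β : Rˣ}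
    (hα : (α : R) = a) (hβ : (β : R) = b) (m n : ℤ) :
    (relationInt a b m n : R) = 0 ↔ α ^ m * β ^ n = 1 := by
  have hsplit : ∀ (γ : Rˣ) (k : ℤ), γ ^ k = γ ^ k.toNat * (γ ^ (-k).toNat)⁻¹ := fun γ k => by
    rw [← zpow_natCast, ← zpow_natCast, ← zpow_sub, Int.toNat_sub_toNat_neg]
  rw [hsplit α, hsplit β, mul_mul_mul_comm, ← mul_inv, mul_inv_eq_one, Units.ext_iff, relationInt]
  push_cast
  rw [hα, hβ, sub_eq_zero]

lemma relationInt_ne_zero {a b : ℤ} (ha : a ≠ 0) (hb : b ≠ 0)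
    (hind : ∀ m n : ℤ, (a : ℚ) ^ m * (b : ℚ) ^ n = 1 → m = 0 ∧ n = 0) {m n : ℤ}
    (hmn : ¬(m = 0 ∧ n = 0)) : relationInt a b m n ≠ 0 := fun hzero => by
  have hrel := (intCast_relationInt_eq_zero_iff
    (α := Units.mk0 (a : ℚ) (Int.cast_ne_zero.2 ha))
    (β := Units.mk0 (b : ℚ) (Int.cast_ne_zero.2 hb)) rfl rfl m n).1 (by rw [hzero, Int.cast_zero])
  exact hmn (hind m n (by simpa [Units.ext_iff] using hrel))

lemma natAbs_relationInt_le {a b : ℤ} (ha : a ≠ 0) (hb : b ≠ 0) {M : ℕ} {m n : ℤ}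
    (hm : m.natAbs ≤ M) (hn : n.natAbs ≤ M) :
    (relationInt a b m n).natAbs ≤ 2 * (a * b).natAbs ^ M := by
  have ha' := Int.natAbs_pos.2 ha
  have hb' := Int.natAbs_pos.2 hb
  have hterm : ∀ i j : ℕ, i ≤ M → j ≤ M → (a ^ i * b ^ j).natAbs ≤ (a * b).natAbs ^ M :=
    fun i j hi hj => by
      rw [Int.natAbs_mul, Int.natAbs_pow, Int.natAbs_pow, Int.natAbs_mul, mul_pow]
      gcongr
  calc (relationInt a b m n).natAbs
      ≤ (a ^ m.toNat * b ^ n.toNat).natAbs + (a ^ (-m).toNat * b ^ (-n).toNat).natAbs :=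
        Int.natAbs_sub_le _ _
    _ ≤ (a * b).natAbs ^ M + (a * b).natAbs ^ M :=
        add_le_add (hterm _ _ (by lia) (by lia)) (hterm _ _ (by lia) (by lia))
    _ = 2 * (a * b).natAbs ^ M := (two_mul _).symm

lemma card_primeFactors_le_of_le_two_pow {n k : ℕ} (hn : n ≠ 0) (hnk : n ≤ 2 ^ k) :
    #n.primeFactors ≤ k :=
  (Nat.pow_le_pow_iff_right one_lt_two).1 <|
    calc 2 ^ #n.primeFactors ≤ ∏ q ∈ n.primeFactors, q :=
          pow_card_le_prod _ _ _ fun _ hq => (Nat.prime_of_mem_primeFactors hq).two_le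
      _ ≤ n := Nat.le_of_dvd (Nat.pos_of_ne_zero hn) (Nat.prod_primeFactors_dvd n)
      _ ≤ 2 ^ k := hnk

lemma card_primeFactors_relationInt_le {a b : ℤ} (ha : a ≠ 0) (hb : b ≠ 0) {M : ℕ} {m n : ℤ}
    (hne : relationInt a b m n ≠ 0) (hM : 1 ≤ M) (hm : m.natAbs ≤ M) (hn : n.natAbs ≤ M) :
    #(relationInt a b m n).natAbs.primeFactors ≤ 2 * (a * b).natAbs * M := by
  refine card_primeFactors_le_of_le_two_pow (Int.natAbs_ne_zero.2 hne) ?_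
  calc (relationInt a b m n).natAbs ≤ 2 * (a * b).natAbs ^ M := natAbs_relationInt_le ha hb hm hn
    _ ≤ (2 * (a * b).natAbs) ^ M := by
        rw [mul_pow]
        exact Nat.mul_le_mul_right _ (Nat.le_self_pow (by lia) 2)
    _ ≤ (2 ^ (2 * (a * b).natAbs)) ^ M := by
        gcongr
        exact Nat.lt_two_pow_self.le
    _ = 2 ^ (2 * (a * b).natAbs * M) := (pow_mul _ _ _).symm

/-- The least common multiple of the orders of `a` and `b` modulo `p`. -/
noncomputable def lcmOrder (a b : ℤ) (p : ℕ) : ℕ :=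
  (orderOf (a : ZMod p)).lcm (orderOf (b : ZMod p))

lemma exists_unit_eq_intCast {p : ℕ} [Fact p.Prime] {a : ℤ} (ha : ¬(p : ℤ) ∣ a) :
    ∃ α : (ZMod p)ˣ, (α : ZMod p) = a :=
  ⟨Units.mk0 a (mt (ZMod.intCast_zmod_eq_zero_iff_dvd a p).1 ha), rfl⟩

lemma exists_dvd_relationInt_of_lcmOrder_lt {a b : ℤ} {p M : ℕ} (hp : p.Prime)
    (ha : ¬(p : ℤ) ∣ a) (hb : ¬(p : ℤ) ∣ b) (hM : lcmOrder a b p < (M + 1) ^ 2) :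
    ∃ m n : ℤ, ¬(m = 0 ∧ n = 0) ∧ m.natAbs ≤ M ∧ n.natAbs ≤ M ∧
      p ∣ (relationInt a b m n).natAbs := by
  have : Fact p.Prime := ⟨hp⟩
  obtain ⟨α, hα⟩ := exists_unit_eq_intCast ha
  obtain ⟨β, hβ⟩ := exists_unit_eq_intCast hb
  rw [lcmOrder, ← hα, ← hβ, orderOf_units, orderOf_units] at hM
  obtain ⟨m, n, hmn, hm, hn, hrel⟩ := exists_zpow_mul_zpow_eq_one α β hM
  exact ⟨m, n, hmn, hm, hn, Int.natCast_dvd.1 <| (ZMod.intCast_zmod_eq_zero_iff_dvd _ p).1 <|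
    (intCast_relationInt_eq_zero_iff hα hβ m n).2 hrel⟩

theorem exists_card_primes_lcmOrder_lt_le {a b : ℤ} (ha : a ≠ 0) (hb : b ≠ 0)
    (hind : ∀ m n : ℤ, (a : ℚ) ^ m * (b : ℚ) ^ n = 1 → m = 0 ∧ n = 0) :
    ∃ C : ℕ, ∀ M : ℕ, 1 ≤ M → ∀ F : Finset ℕ, (∀ p ∈ F, p.Prime ∧ ¬(p : ℤ) ∣ a ∧ ¬(p : ℤ) ∣ b ∧
      lcmOrder a b p < (M + 1) ^ 2) → #F ≤ C * M ^ 3 := by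
  refine ⟨9 * (2 * (a * b).natAbs), fun M hM F hF => ?_⟩
  let box : Finset (ℤ × ℤ) := Icc (-M : ℤ) M ×ˢ Icc (-M : ℤ) M
  have hbox : #box = (2 * M + 1) ^ 2 := by
    rw [card_product, Int.card_Icc, sq]
    congr 1 <;> lia
  have hcover : F ⊆ {u ∈ box | ¬(u.1 = 0 ∧ u.2 = 0)}.biUnion
      fun u => (relationInt a b u.1 u.2).natAbs.primeFactors := fun p hp => by
    obtain ⟨hprime, hpa, hpb, hlt⟩ := hF p hp
    obtain ⟨m, n, hmn, hm, hn, hdvd⟩ := exists_dvd_relationInt_of_lcmOrder_lt hprime hpa hpb hlt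
    exact mem_biUnion.2 ⟨(m, n), mem_filter.2 ⟨mem_product.2 ⟨mem_Icc.2 (by lia),
      mem_Icc.2 (by lia)⟩, hmn⟩, Nat.mem_primeFactors.2 ⟨hprime, hdvd,
        Int.natAbs_ne_zero.2 (relationInt_ne_zero ha hb hind hmn)⟩⟩
  have hfactors : ∀ u ∈ {u ∈ box | ¬(u.1 = 0 ∧ u.2 = 0)},
      #(relationInt a b u.1 u.2).natAbs.primeFactors ≤ 2 * (a * b).natAbs * M := fun u hu => by
    obtain ⟨hu, hmn⟩ := mem_filter.1 hu
    obtain ⟨hm, hn⟩ := mem_product.1 hu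
    rw [mem_Icc] at hm hn
    exact card_primeFactors_relationInt_le ha hb (relationInt_ne_zero ha hb hind hmn) hM
      (by lia) (by lia)
  calc #F ≤ #{u ∈ box | ¬(u.1 = 0 ∧ u.2 = 0)} * (2 * (a * b).natAbs * M) :=
        (card_le_card hcover).trans (card_biUnion_le_card_mul _ _ _ hfactors)
    _ ≤ (3 * M) ^ 2 * (2 * (a * b).natAbs * M) := by
        gcongr
        refine (card_filter_le _ _).trans (hbox.trans_le ?_)
        gcongr
        lia
    _ = 9 * (2 * (a * b).natAbs) * M ^ 3 := by ring

end SmallOrders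

section FiveProducts

/-- The exponents of `a` and `b` in the products `a`, `b`, `ab`, `a²b`, `ab²`. -/
def productExponents : Fin 5 → ℕ × ℕ := ![(1, 0), (0, 1), (1, 1), (2, 1), (1, 2)]

/-- For `i : Fin 5`, the order of `a`, `b`, `ab`, `a²b`, `ab²` modulo `p`. -/
noncomputable def productOrder (a b : ℤ) (p : ℕ) (i : Fin 5) : ℕ :=
  orderOf ((a : ZMod p) ^ (productExponents i).1 * (b : ZMod p) ^ (productExponents i).2)

lemma not_dvd_exponentDet_productExponents {i j : Fin 5} (hij : i ≠ j) {q : ℕ} (hq : 3 < q) :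
    ¬(q : ℤ) ∣ exponentDet (productExponents i) (productExponents j) := by
  obtain ⟨hne, hle⟩ : exponentDet (productExponents i) (productExponents j) ≠ 0 ∧
      |exponentDet (productExponents i) (productExponents j)| ≤ 3 := by
    revert i j
    decide
  intro hdvd
  have := Int.le_of_dvd (abs_pos.2 hne) ((dvd_abs _ _).2 hdvd)
  lia

lemma hasDisjointRoughFactors_pred_of_productOrder_le {a b : ℤ} {p : ℕ} (hp : p.Prime)
    (ha : ¬(p : ℤ) ∣ a) (hb : ¬(p : ℤ) ∣ b) {z L U s : ℝ} (hz : 3 ≤ z) (hL : 0 < L)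
    (hLab : L ≤ lcmOrder a b p) (hs : 0 < s) (hsmooth : smoothPart z (p - 1) ≤ s)
    (hsq : ∀ q : ℕ, q.Prime → z < q → ¬q ^ 2 ∣ p - 1) (hU0 : 0 < U)
    (hU : ∀ i, (productOrder a b p i : ℝ) ≤ U) :
    HasDisjointRoughFactors (Fin 5) z (L / (U * s)) ((U * s) ^ 4 / L ^ 3) (p - 1) := by
  have : Fact p.Prime := ⟨hp⟩
  obtain ⟨α, hα⟩ := exists_unit_eq_intCast ha
  obtain ⟨β, hβ⟩ := exists_unit_eq_intCast hb
  rw [lcmOrder, ← hα, ← hβ, orderOf_units, orderOf_units] at hLab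
  have horder : ∀ γ : (ZMod p)ˣ, orderOf γ ∣ p - 1 := fun γ =>
    orderOf_dvd_of_pow_eq_one (ZMod.units_pow_card_sub_one_eq_one p γ)
  refine hasDisjointRoughFactors_of_orderOf_le (m := 3) (Nat.sub_ne_zero_of_lt hp.one_lt)
    (Nat.lcm_dvd (horder α) (horder β)) hL hLab hs hsmooth hsq (Fintype.card_fin 5)
    (fun i => ?_) hU0 fun i j hij q hzq =>
      not_dvd_exponentDet_productExponents hij (by exact_mod_cast hz.trans_lt hzq)
  rw [← orderOf_units, Units.val_mul, Units.val_pow_eq_pow_val, Units.val_pow_eq_pow_val, hα, hβ]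
  exact hU i

end FiveProducts

section UpperDensity

open Finset Nat

/-- The primes `p ≤ x` satisfying `A x p` number at most `η x / log x` for all large `x`. The
bound is imposed on finite sets of such primes, so that `A` need not be decidable. -/
def UpperDensityLE (A : ℝ → ℕ → Prop) (η : ℝ) : Prop :=
  ∀ᶠ x in atTop, ∀ F ⊆ primesLE ⌊x⌋₊, (∀ p ∈ F, A x p) → (#F : ℝ) ≤ η * (x / Real.log x)

namespace UpperDensityLE

variable {A A' : ℝ → ℕ → Prop} {η η' : ℝ}

lemma mono (hA : UpperDensityLE A η)
    (h : ∀ᶠ x in atTop, ∀ p : ℕ, p.Prime → (p : ℝ) ≤ x → A' x p → A x p) :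
    UpperDensityLE A' η := by
  filter_upwards [hA, h] with x hx hAA' F hF hF'
  refine hx F hF fun p hp => ?_
  obtain ⟨hp', hpx⟩ := mem_primesLE_floor.1 (hF hp)
  exact hAA' p hp' hpx (hF' p hp)

lemma or (hA : UpperDensityLE A η) (hA' : UpperDensityLE A' η') :
    UpperDensityLE (fun x p => A x p ∨ A' x p) (η + η') := by
  classical
  filter_upwards [hA, hA'] with x hx hx' F hF hF'
  have hleft := hx {p ∈ F | A x p} ((filter_subset _ _).trans hF) fun p hp => (mem_filter.1 hp).2
  have hright := hx' {p ∈ F | ¬ A x p} ((filter_subset _ _).trans hF) fun p hp =>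
    (hF' p (mem_filter.1 hp).1).resolve_left (mem_filter.1 hp).2
  rw [← card_filter_add_card_filter_not (A x), Nat.cast_add, add_mul]
  exact add_le_add hleft hright

lemma of_card_le_rpow (hη : 0 < η) {θ : ℝ} (hθ : θ < 1) (c : ℝ)
    (hA : ∀ᶠ x in atTop, ∀ F ⊆ primesLE ⌊x⌋₊, (∀ p ∈ F, A x p) → (#F : ℝ) ≤ c * x ^ θ) :
    UpperDensityLE A η := by
  filter_upwards [hA, eventually_mul_rpow_le_mul_div_log hθ c hη] with x hx hlog F hF hF'
  exact (hx F hF hF').trans hlog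

end UpperDensityLE

lemma isLittleO_card_of_forall_upperDensityLE {A : ℕ → Prop}
    (hA : ∀ η > 0, UpperDensityLE (fun _ => A) η) :
    (fun x : ℝ => (Nat.card {p : ℕ | p.Prime ∧ (p : ℝ) ≤ x ∧ A p} : ℝ)) =o[atTop]
      fun x => x / Real.log x := by
  classical
  rw [isLittleO_iff]
  intro η hη
  filter_upwards [hA η hη, eventually_ge_atTop 1] with x hx hx1
  have := Real.log_nonneg hx1
  have hset : {p : ℕ | p.Prime ∧ (p : ℝ) ≤ x ∧ A p} = ({p ∈ primesLE ⌊x⌋₊ | A p} : Finset ℕ) := by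
    ext p
    rw [mem_coe, mem_filter, mem_primesLE_floor, Set.mem_ofPred_eq, and_assoc]
  rw [Real.norm_of_nonneg (Nat.cast_nonneg _), Real.norm_of_nonneg (by positivity), hset,
    Nat.card_coe_set_eq, Set.ncard_coe_finset]
  exact hx _ (filter_subset _ _) fun p hp => (mem_filter.1 hp).2

variable {η : ℝ}

lemma upperDensityLE_le_natCast (hη : 0 < η) (N : ℕ) : UpperDensityLE (fun _ p => p ≤ N) η := by
  refine .of_card_le_rpow hη zero_lt_one (N + 1) (Eventually.of_forall fun x F _ hF => ?_)
  have hcard : #F ≤ N + 1 := by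
    rw [← card_range (N + 1)]
    exact card_le_card fun p hp => mem_range_succ_iff.2 (hF p hp)
  rw [Real.rpow_zero, mul_one]
  exact_mod_cast hcard

lemma upperDensityLE_lcmOrder_lt (hη : 0 < η) {a b : ℤ} (ha : a ≠ 0) (hb : b ≠ 0)
    (hind : ∀ m n : ℤ, (a : ℚ) ^ m * (b : ℚ) ^ n = 1 → m = 0 ∧ n = 0) {δ : ℝ} (hδ0 : 0 < δ)
    (hδ : δ ≤ 2 / 3) :
    UpperDensityLE (fun x p => ¬ (p : ℤ) ∣ a ∧ ¬ (p : ℤ) ∣ b ∧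
      (lcmOrder a b p : ℝ) < x ^ (2 / 3 - δ)) η := by
  obtain ⟨C, hC⟩ := exists_card_primes_lcmOrder_lt_le ha hb hind
  refine .of_card_le_rpow hη (θ := 1 - 3 / 2 * δ) (by linarith) C ?_
  filter_upwards [eventually_gt_atTop 1] with x hx F hF hlt
  have hx0 : 0 < x := by linarith
  set y := x ^ (1 / 3 - δ / 2) with hy
  have hy2 : x ^ (2 / 3 - δ) = y ^ 2 := by
    rw [hy, ← Real.rpow_mul_natCast hx0.le]
    congr 1
    push_cast
    ring
  have hy3 : x ^ (1 - 3 / 2 * δ) = y ^ 3 := by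
    rw [hy, ← Real.rpow_mul_natCast hx0.le]
    congr 1
    push_cast
    ring
  have hM : 1 ≤ ⌊y⌋₊ := Nat.le_floor (by
    rw [Nat.cast_one]
    exact Real.one_le_rpow hx.le (by linarith))
  have hcard := hC ⌊y⌋₊ hM F fun p hp => by
    obtain ⟨hpa, hpb, hlcm⟩ := hlt p hp
    refine ⟨(mem_primesLE.1 (hF hp)).2, hpa, hpb, ?_⟩
    have hyM : y ^ 2 < (⌊y⌋₊ + 1 : ℝ) ^ 2 := by
      gcongr
      exact Nat.lt_floor_add_one y
    exact_mod_cast (hy2 ▸ hlcm).trans hyM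
  calc (#F : ℝ) ≤ C * (⌊y⌋₊ : ℝ) ^ 3 := by exact_mod_cast hcard
    _ ≤ C * y ^ 3 := by
        gcongr
        exact Nat.floor_le (Real.rpow_nonneg hx0.le _)
    _ = C * x ^ (1 - 3 / 2 * δ) := by rw [hy3]

lemma upperDensityLE_exists_sq_dvd_pred (hη : 0 < η) {δ : ℝ} (hδ : 0 < δ) :
    UpperDensityLE (fun x p => ∃ q : ℕ, x ^ δ < q ∧ q ^ 2 ∣ p - 1) η := by
  refine .of_card_le_rpow hη (θ := 1 - δ) (by linarith) 2 ?_
  filter_upwards [eventually_gt_atTop 1] with x hx F hF hsq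
  have hx0 : 0 < x := by linarith
  refine (card_le_of_exists_sq_dvd_pred hx0.le (Real.one_le_rpow hx.le hδ.le) hF hsq).trans_eq ?_
  rw [Real.rpow_sub hx0, Real.rpow_one, mul_div_assoc]

lemma log_four_lt : Real.log 4 < 1.3864 := by
  rw [show (4 : ℝ) = 2 ^ 2 by norm_num, Real.log_pow]
  push_cast
  linarith [Real.log_two_lt_d9]

lemma log_four_pos : 0 < Real.log 4 := Real.log_pos (by norm_num)

lemma eventually_le_mul_log {δ : ℝ} (hδ : 0 < δ) (c : ℝ) : ∀ᶠ x in atTop, c ≤ δ * Real.log x :=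
  (Real.tendsto_log_atTop.const_mul_atTop hδ).eventually_ge_atTop c

lemma exists_upperDensityLE_lt_smoothPart_pred (hη : 0 < η) :
    ∃ K : ℝ, 0 < K ∧ ∀ δ ∈ Set.Ioo (0 : ℝ) (9 / 10),
      UpperDensityLE (fun x p => x ^ (K * δ) < smoothPart (x ^ δ) (p - 1)) η := by
  obtain ⟨C, hC, hBT⟩ := exists_eventually_brunTitchmarshBound (θ := 9 / 10) (by norm_num)
  refine ⟨32 * C / η, by positivity, fun δ ⟨hδ0, hδ⟩ => ?_⟩
  set K := 32 * C / η with hK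
  have : 0 < K := by positivity
  filter_upwards [hBT, eventually_gt_atTop 1, eventually_le_mul_log hδ0 2,
    eventually_mul_rpow_le_mul_div_log (θ := 1 / 10 + δ) (by linarith) 1 (half_pos hη)]
    with x hBT hx hlog hrpow F hF hsmooth
  have hx0 : 0 < x := by linarith
  have hlogx : 0 < Real.log x := Real.log_pos hx
  have hcard := card_le_of_le_log_smoothPart_pred hBT (by positivity) hx0.le (by positivity)
    (Real.one_le_rpow hx.le hδ0.le) (T := K * δ * Real.log x) (by positivity) hF fun p hp => by
      rw [← Real.log_rpow hx0]
      exact Real.log_le_log (by positivity) (hsmooth p hp).le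
  have hpow : x ^ δ * (x / x ^ (9 / 10 : ℝ)) ≤ η / 2 * (x / Real.log x) := by
    refine le_trans (le_of_eq ?_) hrpow
    rw [one_mul, ← Real.rpow_one_sub' hx0.le (by norm_num), ← Real.rpow_add hx0]
    congr 1
    ring
  have hmain : C * (x / Real.log x) * (4 * (Real.log 4 * (Real.log (x ^ δ) + 2))) /
      (K * δ * Real.log x) ≤ η / 2 * (x / Real.log x) := by
    rw [Real.log_rpow hx0]
    calc _ ≤ C * (x / Real.log x) * (4 * (2 * (δ * Real.log x + δ * Real.log x))) /
          (K * δ * Real.log x) := by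
          have := log_four_lt
          gcongr
          linarith
      _ = η / 2 * (x / Real.log x) := by
          rw [hK]
          field_simp
          norm_num
  linarith

lemma card_roughPrimeFactors_le_add (z : ℝ) {w : ℝ} {n m : ℕ} (hw : 1 < w) (hn : n ≠ 0)
    (hnw : (n : ℝ) ≤ w ^ m) :
    #(roughPrimeFactors z n) ≤
      #{q ∈ ({q ∈ primesLE ⌊w⌋₊ | z < q} : Finset ℕ) | q ∣ n} + m := by
  have hsub : roughPrimeFactors z n ⊆
      {q ∈ ({q ∈ primesLE ⌊w⌋₊ | z < q} : Finset ℕ) | q ∣ n} ∪ roughPrimeFactors w n := by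
    intro q hq
    obtain ⟨hq', hqn, hzq⟩ := prime_and_dvd_of_mem_roughPrimeFactors hq
    rw [mem_union]
    refine (le_or_gt (q : ℝ) w).imp (fun hqw => ?_) fun hwq => ?_
    · exact mem_filter.2 ⟨mem_filter.2 ⟨mem_primesLE_floor.2 ⟨hq', hqw⟩, hzq⟩, hqn⟩
    · exact mem_filter.2 ⟨(mem_filter.1 hq).1, hwq⟩
  have := card_roughPrimeFactors_le hw hn hnw
  have := (card_le_card hsub).trans (card_union_le _ _)
  lia

lemma card_roughPrimeFactors_pred_le_add (z : ℝ) {x : ℝ} {k p : ℕ} (hx : 1 < x) (hk : 1 ≤ k)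
    (hp : p.Prime) (hpx : (p : ℝ) ≤ x) :
    #(roughPrimeFactors z (p - 1)) ≤
      #{q ∈ ({q ∈ primesLE ⌊x ^ (2 * k : ℝ)⁻¹⌋₊ | z < q} : Finset ℕ) | q ∣ p - 1} + 2 * k := by
  have hx0 : 0 < x := by linarith
  refine card_roughPrimeFactors_le_add z (Real.one_lt_rpow hx (by positivity))
    (Nat.sub_ne_zero_of_lt hp.one_lt) ?_
  calc ((p - 1 : ℕ) : ℝ) ≤ x := le_trans (by exact_mod_cast p.sub_le 1) hpx
    _ = (x ^ (2 * k : ℝ)⁻¹) ^ (2 * k) := by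
        rw [← Real.rpow_mul_natCast hx0.le, Nat.cast_mul, Nat.cast_two,
          inv_mul_cancel₀ (by positivity), Real.rpow_one]

lemma sum_inv_pred_le_of_mem_Ioc_rpow {x δ α : ℝ} (hx : 1 < x) (hz : 4 ≤ x ^ δ) (hδα : δ ≤ α)
    {s : Finset ℕ} (hs : ∀ q ∈ s, q.Prime ∧ x ^ δ < q ∧ (q : ℝ) ≤ x ^ α) :
    ∑ q ∈ s, ((q : ℝ) - 1)⁻¹ ≤ Real.log 4 * (Real.log (α / δ) + 2) := by
  have hx0 : 0 < x := by linarith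
  have h := sum_inv_pred_le_of_mem_Ioc hz (Real.rpow_le_rpow_of_exponent_le hx.le hδα) hs
  rwa [Real.log_rpow hx0, Real.log_rpow hx0, mul_div_mul_right _ _ (Real.log_pos hx).ne'] at h

lemma card_le_mul_pow_of_sum_inv_pred_le {x D B w r : ℝ} (hBT : BrunTitchmarshBound x D B)
    (hB : 0 ≤ B) {F : Finset ℕ} (hF : F ⊆ primesLE ⌊x⌋₊) {P : Finset ℕ}
    (hP : ∀ q ∈ P, q.Prime ∧ (q : ℝ) ≤ w) {k t : ℕ} (hw : w ^ k ≤ D) (hkt : k ≤ t)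
    (ht : ∀ p ∈ F, t ≤ #{q ∈ P | q ∣ p - 1})
    (hr : ∑ q ∈ P, ((q : ℝ) - 1)⁻¹ ≤ r * (t + 1 - k : ℕ)) : (#F : ℝ) ≤ B * r ^ k := by
  have hpos : (0 : ℝ) < (t + 1 - k : ℕ) := by exact_mod_cast (by lia)
  have hsum : 0 ≤ ∑ q ∈ P, ((q : ℝ) - 1)⁻¹ :=
    sum_nonneg (inv_pred_nonneg fun q hq => (hP q hq).1)
  refine le_of_mul_le_mul_left ?_ (pow_pos hpos k)
  calc _ ≤ _ := pow_mul_card_le_of_le_card_filter_dvd_pred hBT hB hF hP hw ht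
    _ ≤ B * (r * (t + 1 - k : ℕ)) ^ k := by gcongr
    _ = ((t + 1 - k : ℕ) : ℝ) ^ k * (B * r ^ k) := by ring

/-- The `k`-th moment of the number of prime factors in `(x ^ δ, x ^ (1 / (2 * k))]`, whose mean is
at most `log 4 · log (1 / δ) + O(1)`, against the threshold `2 log (1 / δ)`. -/
lemma card_le_of_lt_card_roughPrimeFactors_pred {x δ B : ℝ} {k : ℕ}
    (hBT : BrunTitchmarshBound x (x ^ (1 / 2 : ℝ)) B) (hB : 0 ≤ B) (hx : 1 < x) (hk : 1 ≤ k)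
    (hδ0 : 0 < δ) (hδk : δ ≤ (2 * k : ℝ)⁻¹) (hlogδ : 25 + 7 * k ≤ Real.log δ⁻¹)
    (hz : 4 ≤ x ^ δ) {F : Finset ℕ} (hF : F ⊆ primesLE ⌊x⌋₊)
    (hrough : ∀ p ∈ F, ⌈2 * Real.log δ⁻¹⌉₊ + 2 * k < #(roughPrimeFactors (x ^ δ) (p - 1))) :
    (#F : ℝ) ≤ B * (3 / 4) ^ k := by
  have hx0 : 0 < x := by linarith
  have hk1 : (1 : ℝ) ≤ k := by exact_mod_cast hk
  set w := x ^ (2 * k : ℝ)⁻¹ with hw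
  have hwk : w ^ k = x ^ (1 / 2 : ℝ) := by
    rw [hw, ← Real.rpow_mul_natCast hx0.le]
    congr 1
    field_simp
  set P : Finset ℕ := {q ∈ primesLE ⌊w⌋₊ | x ^ δ < q}
  have hP : ∀ q ∈ P, q.Prime ∧ x ^ δ < q ∧ (q : ℝ) ≤ w := fun q hq => by
    obtain ⟨hq', hqw⟩ := mem_primesLE_floor.1 (mem_filter.1 hq).1
    exact ⟨hq', (mem_filter.1 hq).2, hqw⟩
  set t := ⌈2 * Real.log δ⁻¹⌉₊
  have hcount : ∀ p ∈ F, t ≤ #{q ∈ P | q ∣ p - 1} := fun p hp => by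
    obtain ⟨hp', hpx⟩ := mem_primesLE_floor.1 (hF hp)
    have := card_roughPrimeFactors_pred_le_add (x ^ δ) hx hk hp' hpx
    have := hrough p hp
    lia
  have hmean : ∑ q ∈ P, ((q : ℝ) - 1)⁻¹ ≤ Real.log 4 * (Real.log δ⁻¹ + 2) := by
    refine (sum_inv_pred_le_of_mem_Ioc_rpow hx hz hδk hP).trans ?_
    have : (2 * k : ℝ)⁻¹ / δ ≤ δ⁻¹ := by
      rw [div_eq_mul_inv]
      exact mul_le_of_le_one_left (by positivity) (inv_le_one_of_one_le₀ (by linarith))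
    have := log_four_pos
    gcongr
  have hlog4 : Real.log 4 * (Real.log δ⁻¹ + 2) ≤ 3 / 4 * (2 * Real.log δ⁻¹ - k) := by
    nlinarith [log_four_lt]
  have ht : 2 * Real.log δ⁻¹ ≤ t := Nat.le_ceil _
  have hkt : k ≤ t := (Nat.cast_le (α := ℝ)).1 (by linarith)
  refine card_le_mul_pow_of_sum_inv_pred_le hBT hB hF
    (fun q hq => ⟨(hP q hq).1, (hP q hq).2.2⟩) hwk.le hkt hcount ?_
  rw [Nat.cast_sub (by lia), Nat.cast_add_one]
  linarith

lemma eventually_nhdsGT_le_log_inv (c : ℝ) : ∀ᶠ δ in nhdsWithin (0 : ℝ) (Set.Ioi 0),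
    c ≤ Real.log δ⁻¹ :=
  (Real.tendsto_log_atTop.comp tendsto_inv_nhdsGT_zero).eventually_ge_atTop c

lemma eventually_nhdsGT_mul_le (c : ℝ) {e : ℝ} (he : 0 < e) :
    ∀ᶠ δ in nhdsWithin (0 : ℝ) (Set.Ioi 0), c * δ ≤ e := by
  have h : Tendsto (fun δ : ℝ => c * δ) (nhds 0) (nhds 0) := by
    simpa using (continuous_const_mul c).tendsto 0
  exact ((h.mono_left nhdsWithin_le_nhds).eventually_lt_const he).mono fun _ => le_of_lt

lemma eventually_four_le_rpow {δ : ℝ} (hδ : 0 < δ) : ∀ᶠ x : ℝ in atTop, 4 ≤ x ^ δ :=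
  (tendsto_rpow_atTop hδ).eventually_ge_atTop 4

lemma exists_upperDensityLE_lt_card_roughPrimeFactors_pred (hη : 0 < η) :
    ∃ m : ℕ, ∀ᶠ δ in nhdsWithin (0 : ℝ) (Set.Ioi 0), UpperDensityLE (fun x p =>
      ⌈2 * Real.log δ⁻¹⌉₊ + m < #(roughPrimeFactors (x ^ δ) (p - 1))) η := by
  obtain ⟨C, hC, hBT⟩ := exists_eventually_brunTitchmarshBound (θ := 1 / 2) (by norm_num)
  have hgeom : Tendsto (fun k : ℕ => C * (3 / 4 : ℝ) ^ k) atTop (nhds 0) := by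
    simpa using (tendsto_pow_atTop_nhds_zero_of_lt_one (r := (3 / 4 : ℝ)) (by norm_num)
      (by norm_num)).const_mul C
  obtain ⟨k, hkη, hk⟩ := ((hgeom.eventually_lt_const hη).and (eventually_ge_atTop 1)).exists
  refine ⟨2 * k, ?_⟩
  filter_upwards [eventually_nhdsGT_le_log_inv (25 + 7 * k),
    eventually_nhdsGT_mul_le (2 * k) one_pos, self_mem_nhdsWithin] with δ hlogδ hδk hδ0
  rw [Set.mem_Ioi] at hδ0
  filter_upwards [hBT, eventually_gt_atTop 1, eventually_four_le_rpow hδ0]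
    with x hBT hx hz F hF hrough
  have hlogx : 0 < Real.log x := Real.log_pos hx
  have hk0 : (0 : ℝ) < 2 * k := by positivity
  calc (#F : ℝ) ≤ C * (x / Real.log x) * (3 / 4) ^ k :=
        card_le_of_lt_card_roughPrimeFactors_pred hBT (by positivity) hx hk hδ0
          ((le_inv_comm₀ hδ0 hk0).2 (by rwa [← one_div, le_div_iff₀ hδ0])) hlogδ hz hF hrough
    _ = C * (3 / 4) ^ k * (x / Real.log x) := by ring
    _ ≤ η * (x / Real.log x) := by gcongr

end UpperDensity

section BlockCount

open Finset Nat

lemma sum_primeWeight_roughBlocks_le {x δ α β c : ℝ} (hx : 1 < x) (hz : 4 ≤ x ^ δ) (hδ0 : 0 < δ)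
    (hδ1 : δ ≤ 1) (hlog : 2 ≤ δ * Real.log x) (hα : 0 < α) (hαβ : α ≤ β) (hc : 0 ≤ c) :
    ∑ S ∈ roughBlocks (x ^ δ) x (x ^ α) (x ^ β), primeWeight c S ≤
      2 * c * Real.log 4 * (β - α + δ) / α *
        (Real.exp (2 * c * Real.log 4) * δ ^ (-(c * Real.log 4))) := by
  have hx0 : 0 < x := by linarith
  have hlogx : 0 < Real.log x := Real.log_pos hx
  have := log_four_pos
  set P : Finset ℕ := {q ∈ primesLE ⌊x⌋₊ | x ^ δ < q}
  have hP : ∀ q ∈ P, q.Prime ∧ x ^ δ < q ∧ (q : ℝ) ≤ x ^ (1 : ℝ) := fun q hq => by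
    obtain ⟨hq', hqx⟩ := mem_primesLE_floor.1 (mem_filter.1 hq).1
    exact ⟨hq', (mem_filter.1 hq).2, by rwa [Real.rpow_one]⟩
  have hexp : Real.exp (c * ∑ q ∈ P, ((q : ℝ) - 1)⁻¹) ≤
      Real.exp (2 * c * Real.log 4) * δ ^ (-(c * Real.log 4)) := by
    rw [Real.rpow_def_of_pos hδ0, ← Real.exp_add]
    refine Real.exp_le_exp.2 ?_
    have hmertens := sum_inv_pred_le_of_mem_Ioc_rpow hx hz hδ1 hP
    rw [one_div, Real.log_inv] at hmertens
    linarith [mul_le_mul_of_nonneg_left hmertens hc]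
  have hblock : c * (2 * (Real.log 4 * (Real.log (x ^ β / x ^ α) + 2))) / Real.log (x ^ α) ≤
      2 * c * Real.log 4 * (β - α + δ) / α := by
    rw [← Real.rpow_sub hx0, Real.log_rpow hx0, Real.log_rpow hx0]
    calc _ ≤ c * (2 * (Real.log 4 * ((β - α) * Real.log x + δ * Real.log x))) /
          (α * Real.log x) := by gcongr
      _ = 2 * c * Real.log 4 * (β - α + δ) / α := by
          field_simp
  refine (sum_primeWeight_prod_mem_Icc_le hc (Real.one_lt_rpow hx hα)
    (Real.rpow_le_rpow_of_exponent_le hx.le hαβ) (fun q hq => (hP q hq).1)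
    fun S hS => ?_).trans (by gcongr)
  exact ⟨mem_powerset.1 (mem_filter.1 hS).1, (mem_filter.1 hS).2⟩

lemma four_pow_ceil_log_le {δ : ℝ} (hδ0 : 0 < δ) (hδ1 : δ ≤ 1) :
    (4 : ℝ) ^ ⌈2 * Real.log δ⁻¹⌉₊ ≤ 4 * δ ^ (-(2 * Real.log 4)) := by
  have hlogδ : 0 ≤ Real.log δ⁻¹ := Real.log_nonneg (one_le_inv_iff₀.2 ⟨hδ0, hδ1⟩)
  rw [← Real.rpow_natCast]
  calc (4 : ℝ) ^ (⌈2 * Real.log δ⁻¹⌉₊ : ℝ) ≤ 4 ^ (2 * Real.log δ⁻¹ + 1) :=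
        Real.rpow_le_rpow_of_exponent_le (by norm_num) (Nat.ceil_lt_add_one (by positivity)).le
    _ = 4 * δ ^ (-(2 * Real.log 4)) := by
        rw [Real.rpow_add (by norm_num), Real.rpow_one, mul_comm, Real.log_inv,
          Real.rpow_def_of_pos (by norm_num), Real.rpow_def_of_pos hδ0]
        congr 2
        ring

lemma tendsto_mul_rpow_nhdsGT_zero (c : ℝ) {θ : ℝ} (hθ : 0 < θ) :
    Tendsto (fun δ : ℝ => c * δ ^ θ) (nhdsWithin 0 (Set.Ioi 0)) (nhds 0) := by
  have h := (Real.continuousAt_rpow_const 0 θ (Or.inr hθ.le)).tendsto.const_mul c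
  rw [Real.zero_rpow hθ.ne', mul_zero] at h
  exact h.mono_left nhdsWithin_le_nhds

lemma sum_primeWeight_quarter_roughBlocks_le {x δ K : ℝ} (hx : 1 < x) (hz : 4 ≤ x ^ δ)
    (hδ0 : 0 < δ) (hlog : 2 ≤ δ * Real.log x) (hK : 0 ≤ K) (hKδ : (K + 2) * δ ≤ 1 / 30) :
    ∑ S ∈ roughBlocks (x ^ δ) x (x ^ (2 / 15 - (K + 2) * δ)) (x ^ (2 / 15 + (4 * K + 7) * δ)),
      primeWeight (1 / 4) S ≤ 50 * (K + 2) * Real.exp 1 * δ ^ (1 - Real.log 4 / 4) := by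
  have hKδ0 : 0 ≤ K * δ := by positivity
  refine (sum_primeWeight_roughBlocks_le hx hz hδ0 (by linarith) hlog (by linarith)
    (by linarith) (by norm_num)).trans ?_
  have hratio : 2 * (1 / 4) * Real.log 4 * (2 / 15 + (4 * K + 7) * δ - (2 / 15 - (K + 2) * δ) + δ) /
      (2 / 15 - (K + 2) * δ) ≤ 50 * (K + 2) * δ := by
    rw [div_le_iff₀ (by linarith)]
    nlinarith [log_four_lt, log_four_pos]
  have hexp : Real.exp (2 * (1 / 4) * Real.log 4) ≤ Real.exp 1 :=
    Real.exp_le_exp.2 (by linarith [log_four_lt])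
  calc _ ≤ 50 * (K + 2) * δ * (Real.exp 1 * δ ^ (-(1 / 4 * Real.log 4))) := by gcongr
    _ = 50 * (K + 2) * Real.exp 1 * (δ * δ ^ (-(1 / 4 * Real.log 4))) := by ring
    _ = 50 * (K + 2) * Real.exp 1 * δ ^ (1 - Real.log 4 / 4) := by
        rw [← Real.rpow_one_add' hδ0.le (by linarith [log_four_lt])]
        congr 2
        ring

lemma four_pow_mul_pow_five_le {δ c : ℝ} (hδ0 : 0 < δ) (hδ1 : δ ≤ 1) (hc : 0 ≤ c) (m : ℕ) :
    (4 : ℝ) ^ (⌈2 * Real.log δ⁻¹⌉₊ + m) * (c * δ ^ (1 - Real.log 4 / 4)) ^ 5 ≤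
      4 ^ (m + 1) * c ^ 5 * δ ^ (5 - 13 / 4 * Real.log 4) := by
  calc _ ≤ 4 * δ ^ (-(2 * Real.log 4)) * 4 ^ m * (c * δ ^ (1 - Real.log 4 / 4)) ^ 5 := by
        rw [pow_add]
        gcongr
        exact four_pow_ceil_log_le hδ0 hδ1
    _ = 4 ^ (m + 1) * c ^ 5 * (δ ^ (-(2 * Real.log 4)) * (δ ^ (1 - Real.log 4 / 4)) ^ 5) := by
        ring
    _ = 4 ^ (m + 1) * c ^ 5 * δ ^ (5 - 13 / 4 * Real.log 4) := by
        rw [← Real.rpow_mul_natCast hδ0.le, ← Real.rpow_add hδ0]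
        congr 2
        push_cast
        ring

/-- The weight `4 ^ (-ω)` makes the five block sums contribute `δ ^ (5 - (5 / 4) log 4)` at the
cost of a factor `4 ^ (2 log (1 / δ)) = δ ^ (-2 log 4)`. -/
lemma card_le_of_hasDisjointRoughFactors {x δ B K : ℝ} {m : ℕ}
    (hBT : BrunTitchmarshBound x (x ^ (9 / 10 : ℝ)) B) (hB : 0 ≤ B) (hx : 1 < x)
    (hz : 4 ≤ x ^ δ) (hlog : 2 ≤ δ * Real.log x) (hδ0 : 0 < δ) (hK : 0 ≤ K)
    (hlo : (K + 2) * δ ≤ 1 / 30) (hhi : (4 * K + 7) * δ ≤ 7 / 150) {F : Finset ℕ}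
    (hF : F ⊆ primesLE ⌊x⌋₊)
    (hrough : ∀ p ∈ F, #(roughPrimeFactors (x ^ δ) (p - 1)) ≤ ⌈2 * Real.log δ⁻¹⌉₊ + m)
    (hblocks : ∀ p ∈ F, HasDisjointRoughFactors (Fin 5) (x ^ δ) (x ^ (2 / 15 - (K + 2) * δ))
      (x ^ (2 / 15 + (4 * K + 7) * δ)) (p - 1)) :
    (#F : ℝ) ≤ B * (4 ^ (m + 1) * (50 * (K + 2) * Real.exp 1) ^ 5 *
      δ ^ (5 - 13 / 4 * Real.log 4)) := by
  have hx0 : 0 < x := by linarith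
  have hKδ0 : 0 ≤ K * δ := by positivity
  have hD : (x ^ (2 / 15 + (4 * K + 7) * δ)) ^ Fintype.card (Fin 5) ≤ x ^ (9 / 10 : ℝ) := by
    rw [Fintype.card_fin, ← Real.rpow_mul_natCast hx0.le]
    refine Real.rpow_le_rpow_of_exponent_le hx.le ?_
    push_cast
    linarith
  have hcount := pow_mul_card_le_of_hasDisjointRoughFactors (c := 1 / 4) hBT hB (by norm_num)
    (by norm_num) hD hF hrough hblocks
  rw [Fintype.card_fin, one_div, inv_pow, inv_mul_le_iff₀ (by positivity)] at hcount
  calc (#F : ℝ) ≤ _ := hcount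
    _ ≤ 4 ^ (⌈2 * Real.log δ⁻¹⌉₊ + m) *
        (B * (50 * (K + 2) * Real.exp 1 * δ ^ (1 - Real.log 4 / 4)) ^ 5) := by
        have hnonneg : 0 ≤ ∑ S ∈ roughBlocks (x ^ δ) x (x ^ (2 / 15 - (K + 2) * δ))
            (x ^ (2 / 15 + (4 * K + 7) * δ)), primeWeight 4⁻¹ S := sum_nonneg fun S hS =>
          primeWeight_nonneg (by norm_num) (prime_of_mem_roughBlocks hS)
        have hsum := sum_primeWeight_quarter_roughBlocks_le hx hz hδ0 hlog hK hlo
        rw [one_div] at hsum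
        gcongr
    _ = B * (4 ^ (⌈2 * Real.log δ⁻¹⌉₊ + m) *
        (50 * (K + 2) * Real.exp 1 * δ ^ (1 - Real.log 4 / 4)) ^ 5) := by ring
    _ ≤ _ := mul_le_mul_of_nonneg_left
        (four_pow_mul_pow_five_le hδ0 (by linarith) (by positivity) m) hB

variable {η : ℝ}

/-- The final exponent of `δ` is positive because `log 4 < 20 / 13`. -/
lemma eventually_upperDensityLE_hasDisjointRoughFactors (hη : 0 < η) {K : ℝ} (hK : 0 < K)
    (m : ℕ) :
    ∀ᶠ δ in nhdsWithin (0 : ℝ) (Set.Ioi 0), UpperDensityLE (fun x p =>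
      #(roughPrimeFactors (x ^ δ) (p - 1)) ≤ ⌈2 * Real.log δ⁻¹⌉₊ + m ∧
      HasDisjointRoughFactors (Fin 5) (x ^ δ) (x ^ (2 / 15 - (K + 2) * δ))
        (x ^ (2 / 15 + (4 * K + 7) * δ)) (p - 1)) η := by
  obtain ⟨C, hC, hBT⟩ := exists_eventually_brunTitchmarshBound (θ := 9 / 10) (by norm_num)
  have hexponent : 0 < 5 - 13 / 4 * Real.log 4 := by linarith [log_four_lt]
  have hsmall := (tendsto_mul_rpow_nhdsGT_zero
    (C * (4 ^ (m + 1) * (50 * (K + 2) * Real.exp 1) ^ 5)) hexponent).eventually_lt_const hη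
  filter_upwards [hsmall, eventually_nhdsGT_mul_le (K + 2) (e := 1 / 30) (by norm_num),
    eventually_nhdsGT_mul_le (4 * K + 7) (e := 7 / 150) (by norm_num), self_mem_nhdsWithin]
    with δ hsmall hlo hhi hδ0
  rw [Set.mem_Ioi] at hδ0
  filter_upwards [hBT, eventually_gt_atTop 1, eventually_four_le_rpow hδ0,
    eventually_le_mul_log hδ0 2] with x hBT hx hz hlog F hF hp
  have hlogx : 0 < Real.log x := Real.log_pos hx
  calc (#F : ℝ) ≤ C * (x / Real.log x) * (4 ^ (m + 1) * (50 * (K + 2) * Real.exp 1) ^ 5 *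
        δ ^ (5 - 13 / 4 * Real.log 4)) := card_le_of_hasDisjointRoughFactors hBT (by positivity)
          hx hz hlog hδ0 hK.le hlo hhi hF (fun p h => (hp p h).1) fun p h => (hp p h).2
    _ = C * (4 ^ (m + 1) * (50 * (K + 2) * Real.exp 1) ^ 5) * δ ^ (5 - 13 / 4 * Real.log 4) *
        (x / Real.log x) := by ring
    _ ≤ η * (x / Real.log x) := by gcongr

end BlockCount

section Conclusion

open Finset Nat

lemma productOrder_le_of_max_le {a b : ℤ} {p : ℕ} {y : ℝ}
    (h : (max (max (max (max (orderOf (a : ZMod p)) (orderOf (b : ZMod p)))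
      (orderOf ((a * b : ℤ) : ZMod p))) (orderOf ((a ^ 2 * b : ℤ) : ZMod p)))
      (orderOf ((a * b ^ 2 : ℤ) : ZMod p)) : ℝ) ≤ y) (i : Fin 5) : productOrder a b p i ≤ y := by
  simp only [max_le_iff] at h
  obtain ⟨⟨⟨⟨h₀, h₁⟩, h₂⟩, h₃⟩, h₄⟩ := h
  push_cast at h₂ h₃ h₄
  fin_cases i
  · simpa [productOrder, productExponents] using h₀
  · simpa [productOrder, productExponents] using h₁
  · simpa [productOrder, productExponents] using h₂
  · simpa [productOrder, productExponents] using h₃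
  · simpa [productOrder, productExponents] using h₄

lemma hasDisjointRoughFactors_pred_of_productOrder_le_rpow {a b : ℤ} {p : ℕ} (hp : p.Prime)
    (ha : ¬ (p : ℤ) ∣ a) (hb : ¬ (p : ℤ) ∣ b) {x δ K : ℝ} (hx : 0 < x) (hz : 3 ≤ x ^ δ)
    (hlcm : x ^ (2 / 3 - δ) ≤ lcmOrder a b p) (hsmooth : smoothPart (x ^ δ) (p - 1) ≤ x ^ (K * δ))
    (hsq : ∀ q : ℕ, x ^ δ < q → ¬ q ^ 2 ∣ p - 1)
    (horder : ∀ i, (productOrder a b p i : ℝ) ≤ x ^ (8 / 15 + δ)) :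
    HasDisjointRoughFactors (Fin 5) (x ^ δ) (x ^ (2 / 15 - (K + 2) * δ))
      (x ^ (2 / 15 + (4 * K + 7) * δ)) (p - 1) := by
  have hlo : x ^ (2 / 3 - δ) / (x ^ (8 / 15 + δ) * x ^ (K * δ)) = x ^ (2 / 15 - (K + 2) * δ) := by
    rw [← Real.rpow_add hx, ← Real.rpow_sub hx]
    congr 1
    ring
  have hhi : (x ^ (8 / 15 + δ) * x ^ (K * δ)) ^ 4 / (x ^ (2 / 3 - δ)) ^ 3 =
      x ^ (2 / 15 + (4 * K + 7) * δ) := by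
    rw [← Real.rpow_add hx, ← Real.rpow_mul_natCast hx.le, ← Real.rpow_mul_natCast hx.le,
      ← Real.rpow_sub hx]
    congr 1
    push_cast
    ring
  rw [← hlo, ← hhi]
  exact hasDisjointRoughFactors_pred_of_productOrder_le hp ha hb hz (by positivity) hlcm
    (by positivity) hsmooth (fun q _ => hsq q) (by positivity) horder

lemma not_dvd_of_natAbs_lt {a : ℤ} (ha : a ≠ 0) {p : ℕ} (hp : a.natAbs < p) : ¬ (p : ℤ) ∣ a :=
  fun h => ha (Int.eq_zero_of_dvd_of_natAbs_lt_natAbs h (by simpa using hp))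

lemma exists_natCast_lt_imp_lt_and_not_dvd {ε : ℝ → ℝ} (hε : Tendsto ε atTop (nhds 0)) {a b : ℤ}
    (ha : a ≠ 0) (hb : b ≠ 0) {δ : ℝ} (hδ : 0 < δ) :
    ∃ N : ℕ, ∀ p : ℕ, N < p → ε p < δ ∧ ¬ (p : ℤ) ∣ a ∧ ¬ (p : ℤ) ∣ b := by
  have hεδ := tendsto_natCast_atTop_atTop.eventually (hε.eventually_lt_const hδ)
  obtain ⟨N, hN⟩ := eventually_atTop.1 ((hεδ.and (eventually_gt_atTop a.natAbs)).and
    (eventually_gt_atTop b.natAbs))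
  refine ⟨N, fun p hp => ?_⟩
  obtain ⟨⟨hεp, hap⟩, hbp⟩ := hN p hp.le
  exact ⟨hεp, not_dvd_of_natAbs_lt ha hap, not_dvd_of_natAbs_lt hb hbp⟩

theorem upperDensityLE_productOrder_le_rpow {ε : ℝ → ℝ} (hε : Tendsto ε atTop (nhds 0)) {a b : ℤ}
    (ha : a ≠ 0) (hb : b ≠ 0)
    (hind : ∀ m n : ℤ, (a : ℚ) ^ m * (b : ℚ) ^ n = 1 → m = 0 ∧ n = 0) {η : ℝ} (hη : 0 < η) :
    UpperDensityLE
      (fun _ p => ∀ i, (productOrder a b p i : ℝ) ≤ (p : ℝ) ^ ((8 : ℝ) / 15 + ε p)) η := by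
  have hη6 : 0 < η / 6 := by positivity
  obtain ⟨K, hK, hsmooth⟩ := exists_upperDensityLE_lt_smoothPart_pred hη6
  obtain ⟨m, hm⟩ := exists_upperDensityLE_lt_card_roughPrimeFactors_pred hη6
  obtain ⟨δ, ⟨⟨hrough, hblocks⟩, hδ⟩, hδ0 : 0 < δ⟩ :=
    (((hm.and (eventually_upperDensityLE_hasDisjointRoughFactors hη6 hK m)).and
      (eventually_nhdsGT_mul_le 1 (e := 1 / 2) (by norm_num))).and self_mem_nhdsWithin).exists
  obtain ⟨N, hN⟩ := exists_natCast_lt_imp_lt_and_not_dvd hε ha hb hδ0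
  have hexceptional := (upperDensityLE_le_natCast hη6 N).or <|
    (upperDensityLE_lcmOrder_lt hη6 ha hb hind hδ0 (by linarith)).or <|
    (upperDensityLE_exists_sq_dvd_pred hη6 hδ0).or <|
    (hsmooth δ ⟨hδ0, by linarith⟩).or <| hrough.or hblocks
  rw [show η / 6 + (η / 6 + (η / 6 + (η / 6 + (η / 6 + η / 6)))) = η by ring] at hexceptional
  refine hexceptional.mono ?_
  filter_upwards [eventually_gt_atTop 1, eventually_four_le_rpow hδ0] with x hx hz p hp hpx horder
  rw [or_iff_not_imp_left, not_le]
  intro hNp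
  obtain ⟨hεp, hpa, hpb⟩ := hN p hNp
  have hU : (p : ℝ) ^ ((8 : ℝ) / 15 + ε p) ≤ x ^ (8 / 15 + δ) :=
    calc (p : ℝ) ^ ((8 : ℝ) / 15 + ε p) ≤ (p : ℝ) ^ (8 / 15 + δ) :=
          Real.rpow_le_rpow_of_exponent_le (by exact_mod_cast hp.one_le) (by linarith)
      _ ≤ x ^ (8 / 15 + δ) := by gcongr
  by_contra! ⟨hlcm, hsq, hsmooth, hcard, hblocks⟩
  exact hblocks hcard <| hasDisjointRoughFactors_pred_of_productOrder_le_rpow hp hpa hpb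
    (by linarith) (by linarith) (hlcm hpa hpb) hsmooth hsq fun i => (horder i).trans hU

end Conclusion

/-- **Theorem 1′.** Let `ε(x)` be a positive-valued function of `x ≥ 2` tending to `0`
as `x → ∞`, and let `a, b` be nonzero, multiplicatively independent integers. Then for
almost all primes `p`, at least one of `a, b, ab, a²b, ab²` has multiplicative order
mod `p` exceeding `p^(8/15 + ε(p))`. -/
theorem stmt_1 (ε : ℝ → ℝ) (hεpos : ∀ x : ℝ, 2 ≤ x → 0 < ε x)
    (hεlim : Tendsto ε atTop (nhds 0))
    (a b : ℤ) (ha : a ≠ 0) (hb : b ≠ 0)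
    (hind : ∀ m n : ℤ, (a : ℚ) ^ m * (b : ℚ) ^ n = 1 → m = 0 ∧ n = 0) :
    (fun x : ℝ => (Nat.card {p : ℕ |
        Nat.Prime p ∧ (p : ℝ) ≤ x ∧
        (max (max (max (max (orderOf ((a : ZMod p)))
            (orderOf ((b : ZMod p))))
            (orderOf (((a * b : ℤ) : ZMod p))))
            (orderOf (((a ^ 2 * b : ℤ) : ZMod p))))
            (orderOf (((a * b ^ 2 : ℤ) : ZMod p))) : ℝ)
          ≤ (p : ℝ) ^ ((8 : ℝ) / 15 + ε p)} : ℝ))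
      =o[atTop] (fun x : ℝ => x / Real.log x) := by
  refine isLittleO_card_of_forall_upperDensityLE fun η hη =>
    (upperDensityLE_productOrder_le_rpow hεlim ha hb hind hη).mono ?_
  exact .of_forall fun x p _ _ => productOrder_le_of_max_le
end
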